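/- arXiv:2505.14205 — 7 statements merged into one kernel-verified Lean document; each statement's English description precedes it below -/
import Mathlib

section
/- Let S and T be commuting homeomorphisms of a compact metric space X such that both (X,S) and (X,T) are minimal. Then N_d(X,S) = N_d(X,T) for each d ∈ ℕ. -/
/-- `N_d(X,T)`: the closure in `X^d` of
`{(T^n x, T^{2n} x, …, T^{dn} x) : x ∈ X, n ∈ ℤ}`,
where `T` is a homeomorphism of the metric space `X`. -/
def Nd {X : Type*} [MetricSpace X] (T : X ≃ₜ X) (d : ℕ) : Set (Fin d → X) :=
  closure {f | ∃ x : X, ∃ n : ℤ,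
    ∀ i : Fin d, f i = (T.toEquiv ^ (((i : ℕ) + 1 : ℤ) * n)) x}

namespace NdAux
open Set Topology

universe u

section Ellis

/-- A compact right-topological semigroup has a minimal left ideal with an idempotent. -/
theorem exists_min_ideal {M : Type*} [Semigroup M] [TopologicalSpace M] [CompactSpace M] [T2Space M]
    (hc : ∀ r : M, Continuous (· * r)) (E : Set M) (hE : IsClosed E) (hne : E.Nonempty)
    (hmul : ∀ x ∈ E, ∀ y ∈ E, x * y ∈ E) :
    ∃ I ⊆ E, I.Nonempty ∧ IsClosed I ∧ (∀ e ∈ E, ∀ i ∈ I, e * i ∈ I) ∧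
      (∀ i ∈ I, ∀ j ∈ I, ∃ e ∈ E, e * i = j) ∧ ∃ v ∈ I, v * v = v := by
  let F : Set (Set M) := {I | I ⊆ E ∧ I.Nonempty ∧ IsClosed I ∧ ∀ e ∈ E, ∀ i ∈ I, e * i ∈ I}
  have hEF : E ∈ F := ⟨subset_rfl, hne, hE, hmul⟩
  obtain ⟨I, hI⟩ : ∃ I, Minimal (· ∈ F) I := by
    refine zorn_superset F ?_
    intro c hcF hchain
    rcases c.eq_empty_or_nonempty with rfl | hcne
    · exact ⟨E, hEF, by simp⟩
    refine ⟨⋂₀ c, ⟨?_, ?_, ?_, ?_⟩, fun s hs => sInter_subset_of_mem hs⟩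
    · obtain ⟨s, hs⟩ := hcne
      exact (sInter_subset_of_mem hs).trans (hcF hs).1
    · have : Nonempty c := hcne.to_subtype
      rw [sInter_eq_iInter]
      refine IsCompact.nonempty_iInter_of_directed_nonempty_isCompact_isClosed _ ?_ ?_ ?_ ?_
      · exact DirectedOn.directed_val (IsChain.directedOn hchain.symm)
      · exact fun s => (hcF s.2).2.1
      · exact fun s => (hcF s.2).2.2.1.isCompact
      · exact fun s => (hcF s.2).2.2.1
    · exact isClosed_sInter fun s hs => (hcF hs).2.2.1
    · intro e he i hi s hs
      exact (hcF hs).2.2.2 e he i (hi s hs)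
  obtain ⟨hIE, hIne, hIc, hIl⟩ := hI.prop
  refine ⟨I, hIE, hIne, hIc, hIl, ?_, ?_⟩
  · intro i hi j hj
    have hmem : (fun e => e * i) '' E ∈ F := by
      refine ⟨?_, hne.image _, (hE.isCompact.image (hc i)).isClosed, ?_⟩
      · rintro _ ⟨e, he, rfl⟩
        exact hmul e he i (hIE hi)
      · rintro e he _ ⟨e', he', rfl⟩
        exact ⟨e * e', hmul e he e' he', mul_assoc _ _ _⟩
    have hsub : (fun e => e * i) '' E ⊆ I := by
      rintro _ ⟨e, he, rfl⟩
      exact hIl e he i hi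
    obtain ⟨e, he, h⟩ := hI.le_of_le hmem hsub hj
    exact ⟨e, he, h⟩
  · obtain ⟨v, hv, h⟩ := exists_idempotent_in_compact_subsemigroup hc I hIne hIc.isCompact
      (fun x hx y hy => hIl x (hIE hx) y hy)
    exact ⟨v, hv, h⟩

theorem exists_common_idempotent {M ι : Type*} [Semigroup M] [TopologicalSpace M] [CompactSpace M]
    [T2Space M] (hc : ∀ r : M, Continuous (· * r)) (E : Set M) (hE : IsClosed E) (hne : E.Nonempty)
    (hmul : ∀ x ∈ E, ∀ y ∈ E, x * y ∈ E)
    (G : Set (ι → M)) (hG : IsClosed G) (hGmul : ∀ x ∈ G, ∀ y ∈ G, x * y ∈ G)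
    (hcoord : ∀ p ∈ G, ∀ i, p i ∈ E) (hconst : ∀ q ∈ E, (fun _ => q) ∈ G) :
    ∃ v ∈ E, v * v = v ∧ ∀ p ∈ G, ∃ q ∈ G, ∀ i, q i * (p i * v) = v := by
  obtain ⟨I, hIE, hIne, hIc, hIl, hmin, v, hv, hvv⟩ := exists_min_ideal hc E hE hne hmul
  refine ⟨v, hIE hv, hvv, fun p hp => ?_⟩
  have hc' : ∀ r : ι → M, Continuous (· * r) := by
    intro r
    refine continuous_pi fun i => ?_
    exact (hc (r i)).comp (continuous_apply i)
  set V : ι → M := fun _ => v with hV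
  have hVG : V ∈ G := hconst v (hIE hv)
  have hVV : V * V = V := funext fun _ => hvv
  let J : Set (ι → M) := (fun q => q * (p * V)) '' G
  obtain ⟨w, hw, hww⟩ := exists_idempotent_in_compact_subsemigroup hc' J
    (Set.Nonempty.image _ ⟨V, hVG⟩) (hG.isCompact.image (hc' _)) (by
      rintro _ ⟨q, hq, rfl⟩ _ ⟨q', hq', rfl⟩
      refine ⟨q * (p * V) * q', ?_, by simp only [mul_assoc]⟩
      exact hGmul _ (hGmul _ hq _ (hGmul _ hp _ hVG)) _ hq')
  obtain ⟨q, hq, hqw⟩ := hw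
  simp only at hqw
  have hwV : w * V = w := by rw [← hqw]; simp only [mul_assoc, hVV]
  have hwG : w ∈ G := by rw [← hqw]; exact hGmul _ hq _ (hGmul _ hp _ hVG)
  have he : ∀ i, (V * w) i = v := by
    intro i
    have h1 : w i * v = w i := congrFun hwV i
    have h2 : w i * w i = w i := congrFun hww i
    change v * w i = v
    set e := v * w i with hedef
    have hev : e * v = e := by rw [hedef, mul_assoc, h1]
    have hve : v * e = e := by rw [hedef, ← mul_assoc, hvv]
    have hee : e * e = e := by
      calc e * e = (e * v) * w i := by rw [hedef]; simp only [mul_assoc]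
        _ = e := by rw [hev, hedef, mul_assoc, h2]
    have heE : e ∈ E := hmul _ (hIE hv) _ (hcoord _ hwG i)
    have heI : e ∈ I := hev ▸ hIl e heE v hv
    obtain ⟨r, hr, hre⟩ := hmin e heI v hv
    calc e = v * e := hve.symm
      _ = r * (e * e) := by rw [← hre, mul_assoc]
      _ = v := by rw [hee, hre]
  refine ⟨V * q, hGmul _ hVG _ hq, fun i => ?_⟩
  rw [← he i, ← hqw]
  simp only [Pi.mul_apply, hV, mul_assoc]
  have := congrFun hqw i
  have hx := he i
  simp only [Pi.mul_apply, hV] at this hx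
  simp only [this, hx]

end Ellis
end NdAux

namespace NdAux
open Set Topology
universe u

section Basic
variable {X : Type*} [TopologicalSpace X]

theorem tadd (T : X ≃ₜ X) (a b : ℤ) (x : X) : (T ^ a) ((T ^ b) x) = (T ^ (a + b)) x := by
  rw [zpow_add]; rfl

theorem tzero (T : X ≃ₜ X) (x : X) : (T ^ (0 : ℤ)) x = x := by
  rw [zpow_zero]; rfl

theorem tone (T : X ≃ₜ X) (x : X) : (T ^ (1 : ℤ)) x = T x := by
  rw [zpow_one]

theorem toEquiv_zpow (T : X ≃ₜ X) (n : ℤ) (x : X) : (T.toEquiv ^ n) x = (T ^ n) x := by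
  let φ : (X ≃ₜ X) →* Equiv.Perm X :=
    { toFun := fun h => h.toEquiv, map_one' := rfl, map_mul' := fun _ _ => rfl }
  have : φ (T ^ n) = φ T ^ n := map_zpow φ T n
  exact (congrArg (fun e : Equiv.Perm X => e x) this).symm

/-- All orbits are dense. -/
def IsMin (T : X ≃ₜ X) : Prop := ∀ x, Dense (range fun n : ℤ => (T ^ n) x)

/-- Closure of the set of points `(T^{l i} x)_i` with `l ∈ Λ`. -/
def XL {ι : Type*} (T : X ≃ₜ X) (Λ : AddSubgroup (ι → ℤ)) : Set (ι → X) :=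
  closure {f | ∃ x, ∃ l ∈ Λ, f = fun i => (T ^ (l i)) x}

theorem XL_closed {ι : Type*} (T : X ≃ₜ X) (Λ : AddSubgroup (ι → ℤ)) : IsClosed (XL T Λ) :=
  isClosed_closure

theorem XL_exact {ι : Type*} (T : X ≃ₜ X) (Λ : AddSubgroup (ι → ℤ)) (x : X) {l : ι → ℤ}
    (hl : l ∈ Λ) : (fun i => (T ^ (l i)) x) ∈ XL T Λ :=
  subset_closure ⟨x, l, hl, rfl⟩

theorem XL_diag {ι : Type*} (T : X ≃ₜ X) (Λ : AddSubgroup (ι → ℤ)) (x : X) :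
    (fun _ => x) ∈ XL T Λ := by
  have := XL_exact T Λ x Λ.zero_mem
  simpa only [Pi.zero_apply, tzero] using this

/-- closure induction -/
theorem XL_sub {ι : Type*} {T : X ≃ₜ X} {Λ : AddSubgroup (ι → ℤ)} {C : Set (ι → X)}
    (hC : IsClosed C) (h : ∀ x, ∀ l ∈ Λ, (fun i => (T ^ (l i)) x) ∈ C) : XL T Λ ⊆ C := by
  refine closure_minimal ?_ hC
  rintro _ ⟨x, l, hl, rfl⟩
  exact h x l hl

/-- local closure induction -/
theorem XL_sub_open {ι : Type*} {T : X ≃ₜ X} {Λ : AddSubgroup (ι → ℤ)} {C O : Set (ι → X)}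
    (hC : IsClosed C) (hO : IsOpen O)
    (h : ∀ x, ∀ l ∈ Λ, (fun i => (T ^ (l i)) x) ∈ O → (fun i => (T ^ (l i)) x) ∈ C)
    {f} (hf : f ∈ XL T Λ) (hfO : f ∈ O) : f ∈ C := by
  have : XL T Λ ⊆ C ∪ Oᶜ := by
    refine XL_sub (hC.union hO.isClosed_compl) fun x l hl => ?_
    by_cases hx : (fun i => (T ^ (l i)) x) ∈ O
    · exact Or.inl (h x l hl hx)
    · exact Or.inr hx
  exact (this hf).resolve_right (fun h => h hfO)

theorem XL_map {ι κ : Type*} {T : X ≃ₜ X} {Λ : AddSubgroup (ι → ℤ)} {Λ' : AddSubgroup (κ → ℤ)}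
    (φ : κ → ι) (h : ∀ l ∈ Λ, (fun k => l (φ k)) ∈ Λ') {f} (hf : f ∈ XL T Λ) :
    (fun k => f (φ k)) ∈ XL T Λ' := by
  have : XL T Λ ⊆ (fun f k => f (φ k)) ⁻¹' XL T Λ' := by
    refine XL_sub ((XL_closed T Λ').preimage (by fun_prop)) fun x l hl => ?_
    exact XL_exact T Λ' x (h l hl)
  exact this hf

theorem cont_move {ι : Type*} (T : X ≃ₜ X) (l : ι → ℤ) :
    Continuous (fun (f : ι → X) i => (T ^ (l i)) (f i)) :=
  continuous_pi fun i => (T ^ (l i)).continuous.comp (continuous_apply i)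

theorem XL_move {ι : Type*} {T : X ≃ₜ X} {Λ : AddSubgroup (ι → ℤ)} {l : ι → ℤ} (hl : l ∈ Λ)
    {f} (hf : f ∈ XL T Λ) : (fun i => (T ^ (l i)) (f i)) ∈ XL T Λ := by
  have : XL T Λ ⊆ (fun f i => (T ^ (l i)) (f i)) ⁻¹' XL T Λ := by
    refine XL_sub ((XL_closed T Λ).preimage (cont_move T l)) fun x l' hl' => ?_
    have := XL_exact T Λ x (Λ.add_mem hl hl')
    simpa only [mem_preimage, tadd, Pi.add_apply] using this
  exact this hf

theorem const_mem {ι : Type*} {Λ : AddSubgroup (ι → ℤ)} (h1 : (fun _ => (1 : ℤ)) ∈ Λ) (n : ℤ) :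
    (fun _ => n) ∈ Λ := by
  have := Λ.zsmul_mem h1 n
  have h : (n • (fun _ => (1 : ℤ)) : ι → ℤ) = fun _ => n := by
    funext i; simp
  rwa [h] at this

theorem closed_and {A : Type*} [TopologicalSpace A] {p q : A → Prop} (hp : IsClosed {a | p a})
    (hq : IsClosed {a | q a}) : IsClosed {a | p a ∧ q a} := hp.inter hq

theorem closed_forall {A : Type*} {I : Sort*} [TopologicalSpace A] {p : I → A → Prop}
    (hp : ∀ i, IsClosed {a | p i a}) : IsClosed {a | ∀ i, p i a} := by
  have : {a | ∀ i, p i a} = ⋂ i, {a | p i a} := by ext; simp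
  rw [this]
  exact isClosed_iInter hp

theorem closed_exists {A B : Type*} [TopologicalSpace A] [TopologicalSpace B] [CompactSpace B]
    {C : Set (A × B)} (hC : IsClosed C) : IsClosed {a | ∃ b, (a, b) ∈ C} := by
  have := isClosedMap_fst_of_compactSpace (X := A) (Y := B) C hC
  convert! this using 1
  ext a; simp

end Basic

section EllisT
set_option linter.unusedSectionVars false
variable {X : Type u} [TopologicalSpace X] [CompactSpace X] [T2Space X]

instance endTop : TopologicalSpace (Function.End X) :=
  inferInstanceAs (TopologicalSpace (X → X))
instance endCompact : CompactSpace (Function.End X) :=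
  inferInstanceAs (CompactSpace (X → X))
instance endT2 : T2Space (Function.End X) :=
  inferInstanceAs (T2Space (X → X))

theorem end_cont (r : Function.End X) : Continuous (fun p : Function.End X => p * r) :=
  continuous_pi fun x => continuous_apply (r x)

theorem end_cont_left (r : Function.End X) (hr : Continuous r) :
    Continuous (fun p : Function.End X => r * p) :=
  continuous_pi fun x => hr.comp (continuous_apply x)

/-- A homeomorphism as an element of the semigroup of self-maps. -/
def toEnd (h : X ≃ₜ X) : Function.End X := (h : X → X)

/-- Enveloping semigroup of powers. -/
def EL {ι : Type*} (T : X ≃ₜ X) (Λ : AddSubgroup (ι → ℤ)) : Set (ι → Function.End X) :=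
  closure {p | ∃ l ∈ Λ, p = fun i => toEnd (T ^ (l i))}

theorem EL_mul {ι : Type*} (T : X ≃ₜ X) (Λ : AddSubgroup (ι → ℤ)) :
    ∀ p ∈ EL T Λ, ∀ q ∈ EL T Λ, p * q ∈ EL T Λ := by
  have h1 : ∀ l ∈ Λ, ∀ q ∈ EL T Λ,
      (fun i => toEnd (T ^ (l i)) : ι → Function.End X) * q ∈ EL T Λ := by
    intro l hl q hq
    set e : ι → Function.End X := fun i => toEnd (T ^ (l i)) with he
    have : EL T Λ ⊆ (fun q => e * q) ⁻¹' EL T Λ := by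
      refine closure_minimal ?_ (isClosed_closure.preimage ?_)
      · rintro _ ⟨l', hl', rfl⟩
        refine subset_closure ⟨l + l', Λ.add_mem hl hl', ?_⟩
        funext i x
        exact tadd T (l i) (l' i) x
      · exact continuous_pi fun i => (end_cont_left (e i) (T ^ (l i)).continuous).comp
          (continuous_apply i)
    exact this hq
  intro p hp q hq
  have : EL T Λ ⊆ (fun p => p * q) ⁻¹' EL T Λ := by
    refine closure_minimal ?_ (isClosed_closure.preimage ?_)
    · rintro _ ⟨l', hl', rfl⟩
      exact h1 l' hl' q hq
    · exact continuous_pi fun i => (end_cont (q i)).comp (continuous_apply i)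
  exact this hp

theorem EL_eval {ι : Type*} (T : X ≃ₜ X) (Λ : AddSubgroup (ι → ℤ)) (w : ι → X) :
    (fun (p : ι → Function.End X) i => p i (w i)) '' EL T Λ =
      closure {f | ∃ l ∈ Λ, f = fun i => (T ^ (l i)) (w i)} := by
  unfold EL
  rw [image_closure_of_isCompact isClosed_closure.isCompact]
  · congr 1
    ext f
    constructor
    · rintro ⟨_, ⟨l, hl, rfl⟩, rfl⟩
      exact ⟨l, hl, rfl⟩
    · rintro ⟨l, hl, rfl⟩
      exact ⟨_, ⟨l, hl, rfl⟩, rfl⟩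
  · refine Continuous.continuousOn (continuous_pi fun i => ?_)
    exact (continuous_apply (w i)).comp (continuous_apply (A := fun _ => (X → X)) i)

/-- Glasner-type lemma: `XL` is minimal under the action of `Λ`. -/
theorem Gl {ι : Type*} {T : X ≃ₜ X} (hT : IsMin T) {Λ : AddSubgroup (ι → ℤ)}
    (h1 : (fun _ => (1 : ℤ)) ∈ Λ) {w : ι → X} (hw : w ∈ XL T Λ) :
    XL T Λ ⊆ closure {f | ∃ l ∈ Λ, f = fun i => (T ^ (l i)) (w i)} := by
  have hne : Nonempty X := by
    have : (XL T Λ).Nonempty := ⟨w, hw⟩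
    rw [XL, closure_nonempty_iff] at this
    obtain ⟨_, x, _⟩ := this
    exact ⟨x⟩
  obtain ⟨x0⟩ := hne
  let E : Set (Function.End X) := closure {p | ∃ n : ℤ, p = toEnd (T ^ n)}
  have hEmul : ∀ p ∈ E, ∀ q ∈ E, p * q ∈ E := by
    have h1 : ∀ n : ℤ, ∀ q ∈ E, toEnd (T ^ n) * q ∈ E := by
      intro n q hq
      have : E ⊆ (fun q => toEnd (T ^ n) * q) ⁻¹' E := by
        refine closure_minimal ?_ (isClosed_closure.preimage (end_cont_left (toEnd (T ^ n)) (T ^ n).continuous))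
        rintro _ ⟨m, rfl⟩
        refine subset_closure ⟨n + m, ?_⟩
        funext x
        exact tadd T n m x
      exact this hq
    intro p hp q hq
    have : E ⊆ (fun p => p * q) ⁻¹' E := by
      refine closure_minimal ?_ (isClosed_closure.preimage (end_cont q))
      rintro _ ⟨n, rfl⟩
      exact h1 n q hq
    exact this hp
  obtain ⟨v, hv, hvv, hall⟩ := exists_common_idempotent end_cont E isClosed_closure
    ⟨_, subset_closure ⟨0, rfl⟩⟩ hEmul (EL T Λ) isClosed_closure (EL_mul T Λ)
    (by
      intro p hp i
      have : EL T Λ ⊆ (fun p => p i) ⁻¹' E := by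
        refine closure_minimal ?_ (isClosed_closure.preimage (continuous_apply i))
        rintro _ ⟨l, hl, rfl⟩
        exact subset_closure ⟨l i, rfl⟩
      exact this hp)
    (by
      intro q hq
      have : E ⊆ (fun q _ => q) ⁻¹' (EL T Λ) := by
        refine closure_minimal ?_ (isClosed_closure.preimage (continuous_pi fun _ => continuous_id))
        rintro _ ⟨n, rfl⟩
        exact subset_closure ⟨fun _ => n, const_mem h1 n, rfl⟩
      exact this hq)
  set x : X := v x0 with hx
  -- invariance of orbit closures
  have hinv : ∀ w : ι → X, ∀ l ∈ Λ, ∀ f ∈ closure {f | ∃ l ∈ Λ, f = fun i => (T ^ (l i)) (w i)},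
      (fun i => (T ^ (l i)) (f i)) ∈ closure {f | ∃ l ∈ Λ, f = fun i => (T ^ (l i)) (w i)} := by
    intro w l hl f hf
    have : closure {f | ∃ l ∈ Λ, f = fun i => (T ^ (l i)) (w i)} ⊆
        (fun f i => (T ^ (l i)) (f i)) ⁻¹'
          closure {f | ∃ l ∈ Λ, f = fun i => (T ^ (l i)) (w i)} := by
      refine closure_minimal ?_ (isClosed_closure.preimage (cont_move T l))
      rintro _ ⟨l', hl', rfl⟩
      refine subset_closure ⟨l + l', Λ.add_mem hl hl', ?_⟩
      funext i
      exact tadd T (l i) (l' i) _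
    exact this hf
  have hsub : XL T Λ ⊆ closure {f | ∃ l ∈ Λ, f = fun i => (T ^ (l i)) x} := by
    refine XL_sub isClosed_closure fun y l hl => ?_
    refine hinv (fun _ => x) l hl (fun _ => y) ?_
    have : closure (range fun n : ℤ => (T ^ n) x) ⊆ (fun y (_ : ι) => y) ⁻¹'
        closure {f | ∃ l ∈ Λ, f = fun i => (T ^ (l i)) x} := by
      refine closure_minimal ?_ (isClosed_closure.preimage (continuous_pi fun _ => continuous_id))
      rintro _ ⟨n, rfl⟩
      exact subset_closure ⟨fun _ => n, const_mem h1 n, rfl⟩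
    exact this (hT x y)
  have hxw : (fun _ => x) ∈ closure {f | ∃ l ∈ Λ, f = fun i => (T ^ (l i)) (w i)} := by
    have hw' := hsub hw
    rw [← EL_eval T Λ (fun _ => x)] at hw'
    obtain ⟨p, hp, rfl⟩ := hw'
    obtain ⟨q, hq, hqp⟩ := hall p hp
    rw [← EL_eval]
    refine ⟨q, hq, ?_⟩
    funext i
    exact congrFun (hqp i) x0
  refine hsub.trans (closure_minimal ?_ isClosed_closure)
  rintro _ ⟨l, hl, rfl⟩
  exact hinv w l hl _ hxw

theorem Gl_closed {ι : Type*} {T : X ≃ₜ X} (hT : IsMin T) {Λ : AddSubgroup (ι → ℤ)}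
    (h1 : (fun _ => (1 : ℤ)) ∈ Λ) {w : ι → X} (hw : w ∈ XL T Λ) {C : Set (ι → X)}
    (hC : IsClosed C) (hinv : ∀ l ∈ Λ, ∀ f ∈ C, (fun i => (T ^ (l i)) (f i)) ∈ C) (hwC : w ∈ C) :
    XL T Λ ⊆ C := by
  refine (Gl hT h1 hw).trans (closure_minimal ?_ hC)
  rintro _ ⟨l, hl, rfl⟩
  exact hinv l hl w hwC

theorem Gl_open {ι : Type*} {T : X ≃ₜ X} (hT : IsMin T) {Λ : AddSubgroup (ι → ℤ)}
    (h1 : (fun _ => (1 : ℤ)) ∈ Λ) {w : ι → X} (hw : w ∈ XL T Λ) {O : Set (ι → X)}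
    (hO : IsOpen O) {f} (hf : f ∈ XL T Λ) (hfO : f ∈ O) :
    ∃ l ∈ Λ, (fun i => (T ^ (l i)) (w i)) ∈ O := by
  obtain ⟨_, h, l, hl, rfl⟩ := mem_closure_iff.1 (Gl hT h1 hw hf) O hO hfO
  exact ⟨l, hl, h⟩

/-- existence of a minimal subset -/
theorem exists_minimal_set [Nonempty X] (R : X ≃ₜ X) :
    ∃ Z : Set X, IsClosed Z ∧ Z.Nonempty ∧
      ∀ z ∈ Z, closure (range fun n : ℤ => (R ^ n) z) = Z := by
  let Λ : AddSubgroup (Unit → ℤ) := ⊤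
  obtain ⟨I, hIE, hIne, hIc, hIl, hmin, -⟩ := exists_min_ideal
    (fun r : Unit → Function.End X => continuous_pi fun i => (end_cont (r i)).comp
      (continuous_apply i)) (EL R Λ) isClosed_closure
    ⟨_, subset_closure ⟨0, trivial, rfl⟩⟩ (EL_mul R Λ)
  obtain ⟨x0⟩ := ‹Nonempty X›
  have hev : ∀ z, (fun p : Unit → Function.End X => p () z) '' EL R Λ =
      closure (range fun n : ℤ => (R ^ n) z) := by
    intro z
    unfold EL
    rw [image_closure_of_isCompact isClosed_closure.isCompact]
    · congr 1
      ext f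
      constructor
      · rintro ⟨_, ⟨l, hl, rfl⟩, rfl⟩
        exact ⟨l (), rfl⟩
      · rintro ⟨n, rfl⟩
        exact ⟨_, ⟨fun _ => n, trivial, rfl⟩, rfl⟩
    · exact ((continuous_apply z).comp
        (continuous_apply (A := fun _ => (X → X)) ())).continuousOn
  have hcont : Continuous (fun p : Unit → Function.End X => p () x0) :=
    (continuous_apply x0).comp (continuous_apply (A := fun _ => (X → X)) ())
  refine ⟨(fun p : Unit → Function.End X => p () x0) '' I, (hIc.isCompact.image hcont).isClosed,
    hIne.image _, ?_⟩
  rintro _ ⟨i, hi, rfl⟩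
  rw [← hev]
  ext y
  constructor
  · rintro ⟨e, he, rfl⟩
    exact ⟨e * i, hIl e he i hi, rfl⟩
  · rintro ⟨j, hj, rfl⟩
    obtain ⟨e, he, rfl⟩ := hmin i hi j hj
    exact ⟨e, he, rfl⟩

end EllisT
end NdAux

namespace NdAux
open Set Topology
universe u

section Hide
set_option linter.unusedSectionVars false
variable {X : Type u} [TopologicalSpace X] [CompactSpace X] [T2Space X]

theorem shrink_one {A : Set X} (hA : IsOpen A) {x : X} (hx : x ∈ A) :
    ∃ A', IsOpen A' ∧ x ∈ A' ∧ closure A' ⊆ A := by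
  obtain ⟨t, ht, htc, hts⟩ := exists_mem_nhds_isClosed_subset (hA.mem_nhds hx)
  exact ⟨interior t, isOpen_interior, mem_interior_iff_mem_nhds.2 ht,
    (closure_minimal interior_subset htc).trans hts⟩

theorem shrink {ι : Type*} {A : ι → Set X} (hA : ∀ i, IsOpen (A i)) {s : Set ι} {f : ι → X}
    (hf : ∀ i ∈ s, f i ∈ A i) :
    ∃ A' : ι → Set X, (∀ i, IsOpen (A' i)) ∧ (∀ i, closure (A' i) ⊆ A i) ∧
      ∀ i ∈ s, f i ∈ A' i := by
  have : ∀ i, ∃ A', IsOpen A' ∧ closure A' ⊆ A i ∧ (i ∈ s → f i ∈ A') := by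
    intro i
    by_cases hi : i ∈ s
    · obtain ⟨A', h1, h2, h3⟩ := shrink_one (hA i) (hf i hi)
      exact ⟨A', h1, h3, fun _ => h2⟩
    · exact ⟨∅, isOpen_empty, by simp, fun h => absurd h hi⟩
  choose A' h1 h2 h3 using this
  exact ⟨A', h1, h2, h3⟩

theorem open_box {ι : Type*} (s : Finset ι) {A : ι → Set X} (hA : ∀ i, IsOpen (A i)) :
    IsOpen {f : ι → X | ∀ i ∈ s, f i ∈ A i} :=
  isOpen_set_pi s.finite_toSet fun i _ => hA i

theorem hide {ι : Type*} {T : X ≃ₜ X} (hT : IsMin T) {Λ : AddSubgroup (ι → ℤ)}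
    (h1 : (fun _ => (1 : ℤ)) ∈ Λ) {A : ι → Set X} (hA : ∀ i, IsOpen (A i)) {s s' : Finset ι}
    (hss : s' ⊆ s) (hf : ∃ f ∈ XL T Λ, ∀ i ∈ s, f i ∈ A i) :
    ∃ B : ι → Set X, (∀ i, IsOpen (B i)) ∧ (∀ i, B i ⊆ A i) ∧
      (∃ f ∈ XL T Λ, ∀ i ∈ s', f i ∈ B i) ∧
      ∀ f ∈ XL T Λ, (∀ i ∈ s', f i ∈ B i) →
        ∃ h ∈ XL T Λ, (∀ i ∈ s', h i = f i) ∧ ∀ i ∈ s, h i ∈ A i := by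
  obtain ⟨f0, hf0, hf0A⟩ := hf
  obtain ⟨A', hA'o, hA'A, hf0A'⟩ := shrink hA (s := (s : Set ι)) (f := f0) hf0A
  have hWc : IsCompact (XL T Λ) := (XL_closed T Λ).isCompact
  -- finite subcover
  have hOo : ∀ l : Λ, IsOpen {f : ι → X | ∀ i ∈ s, (T ^ (l.1 i)) (f i) ∈ A' i} := fun l =>
    (open_box s hA'o).preimage (cont_move T l.1)
  obtain ⟨F, hF⟩ := hWc.elim_finite_subcover _ hOo (by
    intro w hw
    obtain ⟨l, hl, h⟩ := Gl_open hT h1 hw (open_box s hA'o) hf0 hf0A'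
    exact mem_iUnion.2 ⟨⟨l, hl⟩, h⟩)
  -- restriction
  let ρ : (ι → X) → (s' → X) := fun f i => f i
  have hρ : Continuous ρ := by fun_prop
  let V : Set (s' → X) := ρ '' XL T Λ
  have hVc : IsCompact V := hWc.image hρ
  have : CompactSpace V := isCompact_iff_compactSpace.1 hVc
  have : Nonempty V := ⟨⟨ρ f0, mem_image_of_mem ρ hf0⟩⟩
  let C : Λ → Set (s' → X) := fun l =>
    ρ '' (XL T Λ ∩ {h | ∀ i ∈ s, (T ^ (l.1 i)) (h i) ∈ closure (A' i)})
  have hCc : ∀ l, IsClosed (C l) := by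
    intro l
    refine (IsCompact.image ?_ hρ).isClosed
    refine hWc.inter_right ?_
    have : {h : ι → X | ∀ i ∈ s, (T ^ (l.1 i)) (h i) ∈ closure (A' i)} =
        ⋂ i ∈ s, {h : ι → X | (T ^ (l.1 i)) (h i) ∈ closure (A' i)} := by
      ext h; simp
    rw [this]
    exact isClosed_biInter fun i _ => isClosed_closure.preimage
      ((T ^ (l.1 i)).continuous.comp (continuous_apply i))
  obtain ⟨⟨l, hlF⟩, hint⟩ := nonempty_interior_of_iUnion_of_closed
    (f := fun l : F => ((↑) : V → (s' → X)) ⁻¹' C l.1)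
    (fun l => (hCc l.1).preimage continuous_subtype_val) (by
      refine eq_univ_of_forall ?_
      rintro ⟨_, w, hw, rfl⟩
      obtain ⟨l, hl⟩ := mem_iUnion.1 (hF hw)
      obtain ⟨hlF, hl⟩ := mem_iUnion.1 hl
      exact mem_iUnion.2 ⟨⟨l, hlF⟩, w, ⟨hw, fun i hi => subset_closure (hl i hi)⟩, rfl⟩)
  obtain ⟨v0, hv0⟩ := hint
  obtain ⟨O', hO'sub, hO'o, hv0O'⟩ := mem_interior.1 hv0
  obtain ⟨O, hO, rfl⟩ := isOpen_induced_iff.1 hO'o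
  obtain ⟨u, hu, huO⟩ := isOpen_pi_iff'.1 hO v0.1 hv0O'
  -- the sets
  let B : ι → Set X := fun i => {y | y ∈ A i ∧ ∀ hi : i ∈ s', (T ^ (-(l.1 i))) y ∈ u ⟨i, hi⟩}
  have hBo : ∀ i, IsOpen (B i) := by
    intro i
    by_cases hi : i ∈ s'
    · have : B i = A i ∩ (T ^ (-(l.1 i))) ⁻¹' u ⟨i, hi⟩ := by
        ext y; simp [B, hi]
      rw [this]
      exact (hA i).inter ((hu ⟨i, hi⟩).1.preimage (T ^ (-(l.1 i))).continuous)
    · have : B i = A i := by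
        ext y; simp [B, hi]
      rw [this]
      exact hA i
  refine ⟨B, hBo, fun i y hy => hy.1, ?_, ?_⟩
  · obtain ⟨h0, ⟨hh0, hh0A⟩, hh0v⟩ := hO'sub hv0O'
    refine ⟨_, XL_move l.2 hh0, fun i hi => ⟨hA'A i (hh0A i (hss hi)), fun hi => ?_⟩⟩
    rw [tadd, neg_add_cancel, tzero]
    have := (hu ⟨i, hi⟩).2
    rw [← hh0v] at this
    exact this
  · intro f hf hfB
    have hm := XL_move (Λ.neg_mem l.2) hf
    have hmem : (⟨ρ _, mem_image_of_mem ρ hm⟩ : V) ∈ ((↑) : V → (s' → X)) ⁻¹' O := by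
      refine huO fun i _ => ?_
      exact (hfB i i.2).2 i.2
    obtain ⟨h, ⟨hh, hhA⟩, hhv⟩ := hO'sub hmem
    refine ⟨_, XL_move l.2 hh, fun i hi => ?_, fun i hi => hA'A i (hhA i hi)⟩
    have : h i = (T ^ (-(l.1 i))) (f i) := congrFun hhv ⟨i, hi⟩
    rw [this, tadd, add_neg_cancel, tzero]

end Hide
end NdAux

namespace NdAux
open Set Topology
universe u

section Config

/-- Arithmetic progressions indexed by `ℕ`. -/
def LAP : AddSubgroup (ℕ → ℤ) where
  carrier := {l | ∃ a b : ℤ, l = fun i : ℕ => a + b * i}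
  zero_mem' := ⟨0, 0, by funext i; simp⟩
  add_mem' := by
    rintro _ _ ⟨a, b, rfl⟩ ⟨a', b', rfl⟩
    exact ⟨a + a', b + b', by funext i; simp only [Pi.add_apply]; ring⟩
  neg_mem' := by
    rintro _ ⟨a, b, rfl⟩
    exact ⟨-a, -b, by funext i; simp only [Pi.neg_apply]; ring⟩

/-- Arithmetic progressions indexed by `ℤ`. -/
def LZ : AddSubgroup (ℤ → ℤ) where
  carrier := {l | ∃ a b : ℤ, l = fun i : ℤ => a + b * i}
  zero_mem' := ⟨0, 0, by funext i; simp⟩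
  add_mem' := by
    rintro _ _ ⟨a, b, rfl⟩ ⟨a', b', rfl⟩
    exact ⟨a + a', b + b', by funext i; simp only [Pi.add_apply]; ring⟩
  neg_mem' := by
    rintro _ ⟨a, b, rfl⟩
    exact ⟨-a, -b, by funext i; simp only [Pi.neg_apply]; ring⟩

/-- Exponents of the universal configuration. -/
def lam (a b : ℤ) (m : ℕ → ℤ) (p : ℕ × Finset ℕ) : ℤ :=
  a + b * p.1 + ∑ j ∈ p.2, m j * ((p.1 : ℤ) - j)

/-- The group of exponents of the universal configuration. -/
def LU : AddSubgroup (ℕ × Finset ℕ → ℤ) where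
  carrier := {l | ∃ a b m, l = lam a b m}
  zero_mem' := ⟨0, 0, 0, by funext i; simp [lam]⟩
  add_mem' := by
    rintro _ _ ⟨a, b, m, rfl⟩ ⟨a', b', m', rfl⟩
    refine ⟨a + a', b + b', m + m', ?_⟩
    funext i
    simp only [Pi.add_apply, lam, add_mul, Finset.sum_add_distrib]
    ring
  neg_mem' := by
    rintro _ ⟨a, b, m, rfl⟩
    refine ⟨-a, -b, -m, ?_⟩
    funext i
    simp only [Pi.neg_apply, lam, neg_mul, Finset.sum_neg_distrib]
    ring

theorem LAP_one : (fun _ => (1 : ℤ)) ∈ LAP := ⟨1, 0, by funext i; simp⟩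
theorem LZ_one : (fun _ => (1 : ℤ)) ∈ LZ := ⟨1, 0, by funext i; simp⟩
theorem LU_one : (fun _ => (1 : ℤ)) ∈ LU := ⟨1, 0, 0, by funext i; simp [lam]⟩

theorem LU_of_LAP : ∀ l ∈ LAP, (fun p : ℕ × Finset ℕ => l p.1) ∈ LU := by
  rintro _ ⟨a, b, rfl⟩
  exact ⟨a, b, 0, by funext p; simp [lam]⟩

theorem LAP_of_LU : ∀ l ∈ LU, (fun t : ℕ => l (t, ∅)) ∈ LAP := by
  rintro _ ⟨a, b, m, rfl⟩
  exact ⟨a, b, by funext p; simp [lam]⟩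

theorem sum_update_zero (m : ℕ → ℤ) (r : ℕ) (t : ℤ) (ε : Finset ℕ) :
    ∑ j ∈ ε, Function.update m r 0 j * (t - j) = ∑ j ∈ ε.erase r, m j * (t - j) := by
  by_cases hr : r ∈ ε
  · rw [← Finset.add_sum_erase ε _ hr]
    simp only [Function.update_self, zero_mul, zero_add]
    refine Finset.sum_congr rfl fun j hj => ?_
    rw [Function.update_of_ne (Finset.ne_of_mem_erase hj)]
  · rw [Finset.erase_eq_of_notMem hr]
    refine Finset.sum_congr rfl fun j hj => ?_
    rw [Function.update_of_ne]
    rintro rfl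
    exact hr hj

theorem LU_erase (r : ℕ) : ∀ l ∈ LU, (fun p : ℕ × Finset ℕ => l (p.1, p.2.erase r)) ∈ LU := by
  rintro _ ⟨a, b, m, rfl⟩
  refine ⟨a, b, Function.update m r 0, ?_⟩
  funext p
  simp only [lam, sum_update_zero]

theorem lam_insert (a b : ℤ) (m : ℕ → ℤ) (r t : ℕ) (ε : Finset ℕ) :
    lam a b m (t, insert r ε) = lam a b m (t, ε.erase r) + m r * ((t : ℤ) - r) := by
  have : insert r ε = insert r (ε.erase r) := by
    ext j
    simp only [Finset.mem_insert, Finset.mem_erase]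
    tauto
  rw [this]
  simp only [lam]
  rw [Finset.sum_insert (Finset.notMem_erase r ε)]
  ring

theorem LU_insert (r : ℕ) : ∀ l ∈ LU, (fun p : ℕ × Finset ℕ => l (p.1, insert r p.2)) ∈ LU := by
  rintro _ ⟨a, b, m, rfl⟩
  refine ⟨a - m r * r, b + m r, Function.update m r 0, ?_⟩
  funext p
  rw [lam_insert]
  simp only [lam, sum_update_zero]
  ring

variable {X : Type u} [TopologicalSpace X] [CompactSpace X] [T2Space X]

/-- Index sets used at stage `r`. -/
def sr (D r : ℕ) : Finset (ℕ × Finset ℕ) :=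
  ((Finset.range (D + 2)).filter (fun t => t = 0 ∨ r < t)) ×ˢ (Finset.Icc 1 r).powerset

theorem mem_sr {D r t : ℕ} {ε : Finset ℕ} :
    (t, ε) ∈ sr D r ↔ (t < D + 2 ∧ (t = 0 ∨ r < t)) ∧ ε ⊆ Finset.Icc 1 r := by
  simp [sr]

/-- The factorial modulus. -/
def LL (D : ℕ) : ℕ := (D + 1).factorial

/-- The set of data for which the configuration can be completed. -/
def Good (T : X ≃ₜ X) (D : ℕ) (U : Set X) (u y : X) (ν : ℤ) : Prop :=
  y ∈ closure (range fun b : ℤ => (T ^ ((LL D : ℤ) * b)) u) ∧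
  (∀ ε ∈ (Finset.Icc 1 D).powerset,
    (T ^ ((-∑ j ∈ ε, ((LL D / j : ℕ) : ℤ) * ((D : ℤ) + 1 - j)) * ν)) y ∈ U) ∧
  ∀ i ∈ Finset.Icc 1 D, (T ^ (((i : ℤ) * (LL D : ℤ)) * ν)) u ∈ U

/-- The inductive completion statement. -/
def Phi (T : X ≃ₜ X) (D r : ℕ) : Prop :=
  ∀ A : ℕ × Finset ℕ → Set X, (∀ p, IsOpen (A p)) →
    (∃ f ∈ XL T LU, ∀ p ∈ sr D r, f p ∈ A p) →
    ∃ U : Set X, IsOpen U ∧ U.Nonempty ∧ U ⊆ A (0, ∅) ∧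
      ∀ u y ν, Good T D U u y ν →
        ∃ f ∈ XL T LU, f (0, ∅) = u ∧ ∀ p ∈ sr D r, p ≠ (0, ∅) → f p ∈ A p

theorem Phi_base (T : X ≃ₜ X) (D : ℕ) : Phi T D D := by
  intro A hA hf
  obtain ⟨f0, hf0, hf0A⟩ := hf
  obtain ⟨_, hxA, x, _, ⟨a, b, m, rfl⟩, rfl⟩ := mem_closure_iff.1 hf0 _ (open_box (sr D D) hA) hf0A
  let U : Set X := {y | ∀ p ∈ sr D D, (T ^ (lam a b m p - a)) y ∈ A p}
  have hUo : IsOpen U := by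
    have : Continuous (fun (y : X) (p : ℕ × Finset ℕ) => (T ^ (lam a b m p - a)) y) :=
      continuous_pi fun p => (T ^ (lam a b m p - a)).continuous
    exact (open_box (sr D D) hA).preimage this
  refine ⟨U, hUo, ⟨(T ^ a) x, ?_⟩, ?_, ?_⟩
  · intro p hp
    rw [tadd, sub_add_cancel]
    exact hxA p hp
  · intro y hy
    have := hy (0, ∅) (mem_sr.2 (by simp))
    simpa [lam, tzero] using this
  intro u y ν ⟨hy, hyU, huU⟩
  let m' : ℕ → ℤ := fun j => m j - ((LL D / j : ℕ) : ℤ) * ν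
  have hdiv : ∀ j ∈ Finset.Icc 1 D, (j : ℤ) * ((LL D / j : ℕ) : ℤ) = LL D := by
    intro j hj
    rw [Finset.mem_Icc] at hj
    have : j ∣ LL D := Nat.dvd_factorial (by omega) (by omega)
    exact_mod_cast Nat.mul_div_cancel' this
  let Q : Set X := {w | ∃ f : ℕ × Finset ℕ → X, (w, f) ∈ {q : X × (ℕ × Finset ℕ → X) |
    q.2 ∈ XL T LU ∧ (∀ ε, q.2 (0, ε) = (T ^ (∑ j ∈ ε, m' j * ((0 : ℤ) - j))) u) ∧
    ∀ ε, q.2 (D + 1, ε) = (T ^ (∑ j ∈ ε, m' j * (((D + 1 : ℕ) : ℤ) - j) + (D + 1 : ℕ) * b)) q.1}}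
  have hQ : IsClosed Q := by
    refine closed_exists ?_
    refine closed_and ((XL_closed T LU).preimage continuous_snd) (closed_and ?_ ?_)
    · refine closed_forall fun ε => isClosed_eq ?_ continuous_const
      exact (continuous_apply _).comp continuous_snd
    · refine closed_forall fun ε => isClosed_eq ?_ ?_
      · exact (continuous_apply _).comp continuous_snd
      · exact (Homeomorph.continuous _).comp continuous_fst
  have hyQ : y ∈ Q := by
    refine closure_minimal ?_ hQ hy
    rintro _ ⟨c, rfl⟩
    obtain ⟨k, hk⟩ : (D + 1) ∣ LL D := Nat.dvd_factorial (by omega) le_rfl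
    refine ⟨_, XL_exact T LU u ⟨0, b + k * c, m', rfl⟩, ?_, ?_⟩
    · intro ε
      simp [lam]
    · intro ε
      simp only [tadd, lam, hk]
      congr 2
      push_cast
      ring
  obtain ⟨f, hf, hfa, hfb⟩ := hyQ
  simp only at hf hfa hfb
  refine ⟨f, hf, by simp [hfa], ?_⟩
  rintro ⟨t, ε⟩ hp hne
  obtain ⟨⟨htD, ht⟩, hε⟩ := mem_sr.1 hp
  rcases ht with rfl | ht
  · have hεne : ε.Nonempty := by
      rw [Finset.nonempty_iff_ne_empty]
      rintro rfl
      exact hne rfl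
    have hcard : ε.card ∈ Finset.Icc 1 D := by
      rw [Finset.mem_Icc]
      refine ⟨hεne.card_pos, ?_⟩
      simpa using Finset.card_le_card hε
    have := huU _ hcard _ hp
    rw [tadd] at this
    rw [hfa]
    convert this using 3
    simp only [lam, m']
    have e : ∑ j ∈ ε, (m j - ((LL D / j : ℕ) : ℤ) * ν) * ((0 : ℤ) - j) =
        ∑ j ∈ ε, (m j * ((0 : ℤ) - j) + LL D * ν) := by
      refine Finset.sum_congr rfl fun j hj => ?_
      rw [← hdiv j (hε hj)]
      ring
    rw [e, Finset.sum_add_distrib, Finset.sum_const]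
    simp
    ring
  · obtain rfl : t = D + 1 := by omega
    have := hyU ε (Finset.mem_powerset.2 hε) _ hp
    rw [tadd] at this
    rw [hfb]
    convert this using 3
    simp only [lam, m', sub_mul, Finset.sum_sub_distrib, neg_mul, Finset.sum_mul]
    push_cast
    have e : ∑ j ∈ ε, ((LL D / j : ℕ) : ℤ) * ν * ((D : ℤ) + 1 - j) =
        ∑ j ∈ ε, ((LL D / j : ℕ) : ℤ) * ((D : ℤ) + 1 - j) * ν :=
      Finset.sum_congr rfl fun j _ => by ring
    push_cast at e
    rw [e]
    ring

theorem Phi_step {T : X ≃ₜ X} (hT : IsMin T) {D r : ℕ} (hr : r + 1 ≤ D) (h : Phi T D (r + 1)) :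
    Phi T D r := by
  intro A hA hf
  obtain ⟨f0, hf0, hf0A⟩ := hf
  obtain ⟨A0, hA0o, hA0A, hf0A0⟩ := shrink hA (s := (sr D r : Set _)) (f := f0) hf0A
  let s' : Finset (ℕ × Finset ℕ) := (sr D r).filter (fun p => p.1 = 0 ∨ r + 1 < p.1)
  have hs'sub : s' ⊆ sr D r := Finset.filter_subset _ _
  have hs' : ∀ t ε, (t, ε) ∈ s' ↔ (t < D + 2 ∧ (t = 0 ∨ r + 1 < t)) ∧ ε ⊆ Finset.Icc 1 r := by
    intro t ε
    simp only [s', Finset.mem_filter, mem_sr]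
    constructor
    · rintro ⟨⟨⟨h1, h2⟩, h3⟩, h4⟩
      exact ⟨⟨h1, h4⟩, h3⟩
    · rintro ⟨⟨h1, h2⟩, h3⟩
      exact ⟨⟨⟨h1, by omega⟩, h3⟩, h2⟩
  obtain ⟨B, hBo, hBA, ⟨f1, hf1, hf1B⟩, hB⟩ := hide hT LU_one hA0o hs'sub ⟨f0, hf0, hf0A0⟩
  have herase : ∀ t ε, (t, ε) ∈ sr D (r + 1) → (t, ε.erase (r + 1)) ∈ s' := by
    intro t ε hp
    obtain ⟨h1, h2⟩ := mem_sr.1 hp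
    refine (hs' _ _).2 ⟨h1, fun j hj => ?_⟩
    have := Finset.mem_Icc.1 (h2 (Finset.mem_of_mem_erase hj))
    have := Finset.ne_of_mem_erase hj
    exact Finset.mem_Icc.2 (by omega)
  have hnot : ∀ t ε, (t, ε) ∈ s' → r + 1 ∉ ε := by
    intro t ε hp hmem
    have := Finset.mem_Icc.1 (((hs' _ _).1 hp).2 hmem)
    omega
  have hins : ∀ t ε, (t, ε) ∈ s' → (t, insert (r + 1) ε) ∈ sr D (r + 1) := by
    intro t ε hp
    obtain ⟨h1, h2⟩ := (hs' _ _).1 hp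
    refine mem_sr.2 ⟨h1, ?_⟩
    intro j hj
    rcases Finset.mem_insert.1 hj with rfl | hj
    · simp
    · have := Finset.mem_Icc.1 (h2 hj)
      exact Finset.mem_Icc.2 (by omega)
  have hsame : ∀ t ε, (t, ε) ∈ s' → (t, ε) ∈ sr D (r + 1) := by
    intro t ε hp
    obtain ⟨h1, h2⟩ := (hs' _ _).1 hp
    refine mem_sr.2 ⟨h1, ?_⟩
    intro j hj
    have := Finset.mem_Icc.1 (h2 hj)
    exact Finset.mem_Icc.2 (by omega)
  obtain ⟨U, hUo, hUne, hUB, hU⟩ := h (fun p => B (p.1, p.2.erase (r + 1))) (fun p => hBo _)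
    ⟨_, XL_map _ (LU_erase (r + 1)) hf1, fun p hp => hf1B _ (herase _ _ hp)⟩
  refine ⟨U, hUo, hUne, ?_, ?_⟩
  · intro y hy
    have := hUB hy
    simp only [Finset.erase_empty] at this
    exact hA0A _ (subset_closure (hBA _ this))
  intro u y ν hgood
  obtain ⟨f, hf, hfu, hfA⟩ := hU u y ν hgood
  -- the closed set
  let C : Set (ℕ × Finset ℕ → X) := {f | ∃ h : ℕ × Finset ℕ → X, (f, h) ∈
    {q : (ℕ × Finset ℕ → X) × (ℕ × Finset ℕ → X) | q.2 ∈ XL T LU ∧ (∀ p ∈ s', q.2 p = q.1 p) ∧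
      ∀ ε ⊆ Finset.Icc 1 r, q.2 (r + 1, ε) ∈ closure (A0 (r + 1, ε))}}
  have hC : IsClosed C := by
    refine closed_exists ?_
    refine closed_and ((XL_closed T LU).preimage continuous_snd) (closed_and ?_ ?_)
    · refine closed_forall fun p => closed_forall fun _ => isClosed_eq ?_ ?_
      · exact (continuous_apply _).comp continuous_snd
      · exact (continuous_apply _).comp continuous_fst
    · refine closed_forall fun ε => closed_forall fun _ => ?_
      exact isClosed_closure.preimage ((continuous_apply _).comp continuous_snd)
  have hO : IsOpen {f : ℕ × Finset ℕ → X | ∀ p ∈ s', f (p.1, insert (r + 1) p.2) ∈ B p} := by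
    have : Continuous (fun (f : ℕ × Finset ℕ → X) (p : ℕ × Finset ℕ) =>
      f (p.1, insert (r + 1) p.2)) := by fun_prop
    exact (open_box s' hBo).preimage this
  have hfC : f ∈ C := by
    refine XL_sub_open hC hO ?_ hf ?_
    · rintro x _ ⟨a, b, m, rfl⟩ hx
      obtain ⟨h, hh, hheq, hhA⟩ := hB _ (XL_map _ (LU_insert (r + 1))
        (XL_exact T LU x ⟨a, b, m, rfl⟩)) hx
      have hl : (fun p : ℕ × Finset ℕ => -(m (r + 1) * ((p.1 : ℤ) - (r + 1 : ℕ)))) ∈ LU := by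
        refine ⟨m (r + 1) * (r + 1 : ℕ), -m (r + 1), 0, ?_⟩
        funext p
        simp [lam]
        ring
      refine ⟨_, XL_move hl hh, ?_, ?_⟩
      · rintro ⟨t, ε⟩ hp
        have := hheq _ hp
        simp only at this ⊢
        rw [this, tadd, lam_insert, Finset.erase_eq_of_notMem (hnot _ _ hp)]
        congr 2
        ring
      · intro ε hε
        simp only [sub_self, mul_zero, neg_zero, tzero]
        exact subset_closure (hhA _ (mem_sr.2 ⟨by omega, hε⟩))
    · rintro ⟨t, ε⟩ hp
      have := hfA _ (hins _ _ hp) (by simp)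
      simpa only [Finset.erase_insert (hnot _ _ hp)] using this
  obtain ⟨h, hh, hhf, hhA⟩ := hfC
  simp only at hh hhf hhA
  have h0 : ((0 : ℕ), (∅ : Finset ℕ)) ∈ s' := (hs' _ _).2 (by simp)
  refine ⟨h, hh, by rw [hhf _ h0, hfu], ?_⟩
  rintro ⟨t, ε⟩ hp hne
  obtain ⟨⟨h1, h2⟩, h3⟩ := mem_sr.1 hp
  by_cases ht : t = r + 1
  · subst ht
    exact hA0A _ (hhA ε h3)
  · have hp' : (t, ε) ∈ s' := (hs' _ _).2 ⟨⟨h1, by omega⟩, h3⟩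
    rw [hhf _ hp']
    have := hfA _ (hsame _ _ hp') hne
    simp only [Finset.erase_eq_of_notMem (hnot _ _ hp')] at this
    exact hA0A _ (subset_closure (hBA _ this))

theorem Phi_zero {T : X ≃ₜ X} (hT : IsMin T) (D : ℕ) : Phi T D 0 := by
  have : ∀ k, k ≤ D → Phi T D (D - k) := by
    intro k
    induction k with
    | zero => intro _; exact Phi_base T D
    | succ k ih =>
      intro hk
      have h := ih (by omega)
      have e : D - k = D - (k + 1) + 1 := by omega
      rw [e] at h
      exact Phi_step hT (by omega) h
  simpa using this D le_rfl

end Config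
end NdAux

namespace NdAux
open Set Topology
universe u

section Aux
variable {X : Type u} [TopologicalSpace X] 

theorem comm_apply {g T : X ≃ₜ X} (h : Commute g T) (n : ℤ) (x : X) :
    g ((T ^ n) x) = (T ^ n) (g x) := by
  have := (h.zpow_right n).eq
  exact congrArg (fun e : X ≃ₜ X => e x) this

theorem zpow_restrict {Z : Set X} (h : Z ≃ₜ Z) (k : X ≃ₜ X) (hk : ∀ z : Z, (h z : X) = k z)
    (n : ℤ) (z : Z) : (((h ^ n) z : Z) : X) = (k ^ n) z := by
  have hnat : ∀ n : ℕ, ∀ z : Z, (((h ^ (n : ℤ)) z : Z) : X) = (k ^ (n : ℤ)) z := by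
    intro n
    induction n with
    | zero => intro z; simp
    | succ n ih =>
      intro z
      push_cast
      rw [← tadd h, ← tadd k, ih, tone, tone, hk]
  obtain ⟨m, rfl | rfl⟩ := n.eq_nat_or_neg
  · exact hnat m z
  · have := hnat m ((h ^ (-(m : ℤ))) z)
    rw [tadd, add_neg_cancel, tzero] at this
    rw [this, tadd, neg_add_cancel, tzero]

/-- The auxiliary relation. -/
def RR (T : X ≃ₜ X) (L : ℤ) : Set ((ℤ → X) × (ℤ → X)) :=
  closure {q | ∃ y u, ∃ ν : ℤ, y ∈ closure (range fun b : ℤ => (T ^ (L * b)) u) ∧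
    q = (fun i => (T ^ (i * ν)) y, fun i => (T ^ (i * ν)) u)}

/-- Pairs with the coincidence conditions. -/
def SS (T g : X ≃ₜ X) (D : ℕ) : Set ((ℤ → X) × (ℤ → X)) :=
  {q | q ∈ RR T (LL D) ∧ (∀ i ∈ Finset.Icc 1 D, q.2 ((i : ℤ) * (LL D : ℤ)) = q.1 (i * LL D)) ∧
    ∃ f : ℕ → X, (q, f) ∈ {z : ((ℤ → X) × (ℤ → X)) × (ℕ → X) | z.2 ∈ XL T LAP ∧
      z.2 0 = z.1.1 0 ∧ ∀ i ∈ Finset.Icc 1 (D + 1), z.2 i = (g ^ (i : ℤ)) (z.1.2 0)}}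

theorem SS_closed [CompactSpace X] [T2Space X] (T g : X ≃ₜ X) (D : ℕ) : IsClosed (SS T g D) := by
  refine closed_and isClosed_closure (closed_and ?_ (closed_exists ?_))
  · refine closed_forall fun i => closed_forall fun _ => isClosed_eq ?_ ?_ <;> fun_prop
  · refine closed_and ((XL_closed T LAP).preimage continuous_snd) (closed_and ?_ ?_)
    · refine isClosed_eq ?_ ?_ <;> fun_prop
    · refine closed_forall fun i => closed_forall fun _ => isClosed_eq ?_ ?_
      · fun_prop
      · exact (g ^ (i : ℤ)).continuous.comp (by fun_prop)

theorem RR_inv {T : X ≃ₜ X} {L : ℤ} (a c : ℤ) {q} (hq : q ∈ RR T L) :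
    ((fun i => (T ^ (a + c * i)) (q.1 i), fun i => (T ^ (a + c * i)) (q.2 i)) :
      (ℤ → X) × (ℤ → X)) ∈ RR T L := by
  have hcont : Continuous (fun q : (ℤ → X) × (ℤ → X) =>
      ((fun i => (T ^ (a + c * i)) (q.1 i), fun i => (T ^ (a + c * i)) (q.2 i)) :
        (ℤ → X) × (ℤ → X))) :=
    ((cont_move T (fun i => a + c * i)).comp continuous_fst).prodMk
      ((cont_move T (fun i => a + c * i)).comp continuous_snd)
  have : RR T L ⊆ (fun q : (ℤ → X) × (ℤ → X) =>
      ((fun i => (T ^ (a + c * i)) (q.1 i), fun i => (T ^ (a + c * i)) (q.2 i)) :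
        (ℤ → X) × (ℤ → X))) ⁻¹' RR T L := by
    refine closure_minimal ?_ (isClosed_closure.preimage hcont)
    rintro _ ⟨y, u, ν, hy, rfl⟩
    refine subset_closure ⟨(T ^ a) y, (T ^ a) u, ν + c, ?_, ?_⟩
    · have h2 : closure (range fun b : ℤ => (T ^ (L * b)) u) ⊆
          (T ^ a) ⁻¹' closure (range fun b : ℤ => (T ^ (L * b)) ((T ^ a) u)) := by
        refine closure_minimal ?_ (isClosed_closure.preimage (T ^ a).continuous)
        rintro _ ⟨b, rfl⟩
        refine subset_closure ⟨b, ?_⟩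
        simp only [tadd, add_comm]
      exact h2 hy
    · simp only [tadd]
      congr 1 <;> funext i <;> congr 2 <;> ring
  exact this hq

theorem SS_inv {T g : X ≃ₜ X} (hg : Commute g T) {D : ℕ} (a c : ℤ) {q} (hq : q ∈ SS T g D) :
    ((fun i => (T ^ (a + c * i)) (q.1 i), fun i => (T ^ (a + c * i)) (q.2 i)) :
      (ℤ → X) × (ℤ → X)) ∈ SS T g D := by
  obtain ⟨h1, h2, f, hf, hf0, hfi⟩ := hq
  refine ⟨RR_inv a c h1, fun i hi => ?_, _, XL_move (const_mem LAP_one a) hf, ?_, ?_⟩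
  · simp only [h2 i hi]
  · simp only at hf0 ⊢
    rw [hf0, mul_zero, add_zero]
  · intro i hi
    simp only at hfi ⊢
    rw [hfi i hi, mul_zero, add_zero, comm_apply (hg.zpow_left i)]

theorem RR_fst {T : X ≃ₜ X} {L : ℤ} {q} (hq : q ∈ RR T L) : q.1 ∈ XL T LZ := by
  have : RR T L ⊆ Prod.fst ⁻¹' XL T LZ := by
    refine closure_minimal ?_ ((XL_closed T LZ).preimage continuous_fst)
    rintro _ ⟨y, u, ν, hy, rfl⟩
    exact XL_exact T LZ y ⟨0, ν, by funext i; ring⟩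
  exact this hq

theorem SS_diag [CompactSpace X] [T2Space X] {T g : X ≃ₜ X} (hT : IsMin T) (hg : Commute g T)
    {D : ℕ} (hne : (SS T g D).Nonempty) (y : X) : ∃ η, (fun _ => y, η) ∈ SS T g D := by
  obtain ⟨q, hq⟩ := hne
  have : XL T LZ ⊆ {ζ | ∃ η, (ζ, η) ∈ SS T g D} := by
    refine Gl_closed hT LZ_one (RR_fst hq.1) (closed_exists (SS_closed T g D)) ?_ ⟨q.2, hq⟩
    rintro _ ⟨a, c, rfl⟩ ζ ⟨η, hη⟩
    exact ⟨_, SS_inv hg a c hη⟩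
  exact this (XL_diag T LZ y)

end Aux

/-- The main inductive claim. -/
def PP (d : ℕ) : Prop :=
  ∀ (X : Type u) [TopologicalSpace X] [CompactSpace X] [T2Space X] (T S : X ≃ₜ X),
    IsMin T → Commute S T → ∀ x, ∃ f ∈ XL T LAP, ∀ i < d, f i = (S ^ (i : ℤ)) x

section Step
variable {X : Type u} [TopologicalSpace X] [CompactSpace X] [T2Space X]

theorem SS_nonempty {T g : X ≃ₜ X} (hg : Commute g T) {D : ℕ} (hP : PP.{u} (D + 1)) {Z : Set X}
    (hZc : IsClosed Z) (hZne : Z.Nonempty)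
    (hZ : ∀ z ∈ Z, closure (range fun n : ℤ => (T ^ ((LL D : ℤ) * n)) z) = Z)
    (hgZ : ∀ z, g z ∈ Z ↔ z ∈ Z) : (SS T g D).Nonempty := by
  have hTZ : ∀ n : ℤ, ∀ z ∈ Z, (T ^ ((LL D : ℤ) * n)) z ∈ Z := by
    intro n z hz
    have h : (T ^ ((LL D : ℤ) * n)) z ∈ closure (range fun n : ℤ => (T ^ ((LL D : ℤ) * n)) z) :=
      subset_closure ⟨n, rfl⟩
    rwa [hZ z hz] at h
  have : CompactSpace Z := isCompact_iff_compactSpace.1 hZc.isCompact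
  let gZ : Z ≃ₜ Z := g.subtype (fun z => (hgZ z).symm)
  let R : Z ≃ₜ Z := (T ^ (LL D : ℤ)).subtype (fun z => by
    constructor
    · intro hz
      simpa using hTZ 1 z hz
    · intro hz
      have := hTZ (-1) _ hz
      rw [tadd] at this
      simpa [tzero] using this)
  have hgZz : ∀ n : ℤ, ∀ z : Z, ((gZ ^ n) z : X) = (g ^ n) z := zpow_restrict gZ g (fun _ => rfl)
  have hRz : ∀ n : ℤ, ∀ z : Z, ((R ^ n) z : X) = (T ^ ((LL D : ℤ) * n)) z := by
    intro n z
    rw [zpow_mul]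
    exact zpow_restrict R (T ^ (LL D : ℤ)) (fun _ => rfl) n z
  have hRmin : IsMin R := by
    intro z z'
    rw [closure_subtype]
    have h : (z' : X) ∈ closure (range fun n : ℤ => (T ^ ((LL D : ℤ) * n)) (z : X)) := by
      rw [hZ z z.2]; exact z'.2
    convert! h using 2
    ext y
    constructor
    · rintro ⟨_, ⟨n, rfl⟩, rfl⟩
      exact ⟨n, (hRz n z).symm⟩
    · rintro ⟨n, rfl⟩
      exact ⟨_, ⟨n, rfl⟩, hRz n z⟩
  have hcom : Commute gZ R := by
    refine Homeomorph.ext fun z => Subtype.ext ?_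
    exact comm_apply hg (LL D : ℤ) z
  obtain ⟨x, hx⟩ := hZne
  obtain ⟨f, hf, hfx⟩ := hP Z R gZ hRmin hcom ⟨g x, (hgZ x).2 hx⟩
  let K : Set (ℕ → Z) := {f | ∃ q : (ℤ → X) × (ℤ → X), (f, q) ∈
    {z : (ℕ → Z) × ((ℤ → X) × (ℤ → X)) | z.2 ∈ RR T (LL D) ∧
      (∀ i : ℕ, z.2.1 (((i + 1 : ℕ) : ℤ) * (LL D : ℤ)) = z.1 i) ∧
      (∀ i : ℕ, g (z.2.2 ((i : ℤ) * (LL D : ℤ))) = z.1 i) ∧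
      (fun i : ℕ => z.2.1 ((i : ℤ) * (LL D : ℤ))) ∈ XL T LAP}}
  have hK : IsClosed K := by
    refine closed_exists ?_
    refine closed_and (isClosed_closure.preimage continuous_snd) (closed_and ?_ (closed_and ?_ ?_))
    · refine closed_forall fun i => isClosed_eq ?_ ?_ <;> fun_prop
    · refine closed_forall fun i => isClosed_eq ?_ ?_
      · exact g.continuous.comp (by fun_prop)
      · fun_prop
    · exact (XL_closed T LAP).preimage (by fun_prop)
  have hfK : f ∈ K := by
    refine XL_sub hK ?_ hf
    rintro z _ ⟨a, b, rfl⟩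
    have hgi : ∀ w, g (g⁻¹ w) = w := fun w => g.apply_symm_apply w
    have hu : g⁻¹ ((T ^ ((LL D : ℤ) * a)) (z : X)) ∈ Z := by
      rw [← hgZ, hgi]
      exact hTZ a z z.2
    refine ⟨_, subset_closure ⟨(T ^ ((LL D : ℤ) * (a - b))) (z : X),
      g⁻¹ ((T ^ ((LL D : ℤ) * a)) (z : X)), b, ?_, rfl⟩, ?_, ?_, ?_⟩
    · rw [hZ _ hu]
      exact hTZ _ z z.2
    · intro i
      simp only [hRz, tadd]
      congr 2
      push_cast
      ring
    · intro i
      simp only [hRz]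
      rw [comm_apply hg, hgi, tadd]
      congr 2
      ring
    · exact XL_exact T LAP _ ⟨0, LL D * b, by funext i; ring⟩
  obtain ⟨q, hq, hq1, hq2, hq3⟩ := hfK
  simp only at hq hq1 hq2 hq3
  have hfx' : ∀ i < D + 1, (f i : X) = (g ^ ((i : ℤ) + 1)) x := by
    intro i hi
    rw [hfx i hi, hgZz, ← tadd, tone]
  have hq2' : ∀ i < D + 1, q.2 ((i : ℤ) * (LL D : ℤ)) = (g ^ (i : ℤ)) x := by
    intro i hi
    apply g.injective
    rw [hq2, hfx' i hi, add_comm, ← tadd, tone]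
  have hq1' : ∀ i ∈ Finset.Icc 1 (D + 1), q.1 ((i : ℤ) * (LL D : ℤ)) = (g ^ (i : ℤ)) x := by
    intro i hi
    rw [Finset.mem_Icc] at hi
    obtain ⟨k, rfl⟩ : ∃ k, i = k + 1 := ⟨i - 1, by omega⟩
    rw [hq1, hfx' k (by omega)]
    push_cast
    rfl
  refine ⟨q, hq, ?_, _, hq3, by simp, ?_⟩
  · intro i hi
    have hi' := Finset.mem_Icc.1 hi
    rw [hq2' i (by omega), hq1' i (Finset.mem_Icc.2 (by omega))]
  · intro i hi
    have h0 := hq2' 0 (by omega)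
    simp only [Nat.cast_zero, zero_mul, tzero] at h0
    change q.1 ((i : ℤ) * (LL D : ℤ)) = (g ^ (i : ℤ)) (q.2 0)
    rw [h0]
    exact hq1' i hi

/-- Existence of the modified homeomorphism. -/
theorem exists_g [Nonempty X] {T S : X ≃ₜ X} (hT : IsMin T) (hS : Commute S T) {L : ℕ}
    (hL : 0 < L) :
    ∃ a : ℤ, ∃ Z : Set X, IsClosed Z ∧ Z.Nonempty ∧
      (∀ z ∈ Z, closure (range fun n : ℤ => (T ^ ((L : ℤ) * n)) z) = Z) ∧
      ∀ z, (T ^ (-a) * S) z ∈ Z ↔ z ∈ Z := by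
  obtain ⟨Z, hZc, ⟨x, hx⟩, hZ⟩ := exists_minimal_set (T ^ (L : ℤ))
  simp only [← zpow_mul] at hZ
  have hTZ : ∀ n : ℤ, ∀ z ∈ Z, (T ^ ((L : ℤ) * n)) z ∈ Z := by
    intro n z hz
    have h : (T ^ ((L : ℤ) * n)) z ∈ closure (range fun n : ℤ => (T ^ ((L : ℤ) * n)) z) :=
      subset_closure ⟨n, rfl⟩
    rwa [hZ z hz] at h
  -- translates of Z cover
  have hcov : ∀ y, ∃ a : ℤ, (T ^ (-a)) y ∈ Z := by
    intro y
    have hcl : IsClosed (⋃ a : Fin L, (T ^ (-(a : ℤ))) ⁻¹' Z) :=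
      isClosed_iUnion_of_finite fun a => hZc.preimage (Homeomorph.continuous _)
    have hsub : closure (range fun n : ℤ => (T ^ n) x) ⊆ ⋃ a : Fin L, (T ^ (-(a : ℤ))) ⁻¹' Z := by
      refine closure_minimal ?_ hcl
      rintro _ ⟨n, rfl⟩
      have hL' : (0 : ℤ) < L := by exact_mod_cast hL
      have h1 := Int.emod_nonneg n hL'.ne'
      have h2 := Int.emod_lt_of_pos n hL'
      refine mem_iUnion.2 ⟨⟨(n % L).toNat, by omega⟩, ?_⟩
      simp only [mem_preimage, tadd, Int.toNat_of_nonneg h1]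
      have e : -(n % L) + n = L * (n / L) := by
        have := Int.emod_add_mul_ediv n L
        linarith
      rw [e]
      exact hTZ _ x hx
    obtain ⟨a, ha⟩ := mem_iUnion.1 (hsub (hT x y))
    exact ⟨a, ha⟩
  obtain ⟨a, ha⟩ := hcov (S x)
  set g : X ≃ₜ X := T ^ (-a) * S with hgdef
  have hg : Commute g T := by
    refine Commute.mul_left ?_ hS
    exact (Commute.refl T).zpow_left _
  have hgx : g x ∈ Z := ha
  refine ⟨a, Z, hZc, ⟨x, hx⟩, hZ, fun z => ⟨fun hz => ?_, fun hz => ?_⟩⟩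
  · have hsub : closure (range fun n : ℤ => (T ^ ((L : ℤ) * n)) (g x)) ⊆ g.symm ⁻¹' Z := by
      refine closure_minimal ?_ (hZc.preimage g.symm.continuous)
      rintro _ ⟨n, rfl⟩
      simp only [mem_preimage]
      rw [← comm_apply hg, g.symm_apply_apply]
      exact hTZ n x hx
    rw [hZ _ hgx] at hsub
    have := hsub hz
    rwa [mem_preimage, g.symm_apply_apply] at this
  · have hsub : closure (range fun n : ℤ => (T ^ ((L : ℤ) * n)) x) ⊆ g ⁻¹' Z := by
      refine closure_minimal ?_ (hZc.preimage g.continuous)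
      rintro _ ⟨n, rfl⟩
      simp only [mem_preimage]
      rw [comm_apply hg]
      exact hTZ n _ hgx
    rw [hZ _ hx] at hsub
    exact hsub hz

theorem step_g {T g : X ≃ₜ X} (hT : IsMin T) (hg : Commute g T) {D : ℕ}
    (hne : (SS T g D).Nonempty) (x : X) {N : ℕ → Set X} (hN : ∀ i, IsOpen (N i))
    (hxN : ∀ i < D + 2, (g ^ (i : ℤ)) x ∈ N i) :
    ∃ f ∈ XL T LAP, ∀ i < D + 2, f i ∈ N i := by
  let N0 : Set X := {y | ∀ i ∈ Finset.range (D + 2), (g ^ (i : ℤ)) y ∈ N i}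
  have hN0 : IsOpen N0 := by
    have : Continuous (fun (y : X) (i : ℕ) => (g ^ (i : ℤ)) y) :=
      continuous_pi fun i => (g ^ (i : ℤ)).continuous
    exact (open_box (Finset.range (D + 2)) hN).preimage this
  have hxN0 : x ∈ N0 := fun i hi => hxN i (Finset.mem_range.1 hi)
  obtain ⟨N2, hN2o, hxN2, hN2⟩ := shrink_one hN0 hxN0
  have : Nonempty X := ⟨x⟩
  let Da : ℤ → Set X := fun a => {y | ∃ η : ℤ → X, (y, η) ∈ {z : X × (ℤ → X) |
    (fun _ => z.1, z.2) ∈ SS T g D ∧ (T ^ a) (z.2 0) ∈ closure N2}}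
  have hDc : ∀ a, IsClosed (Da a) := by
    intro a
    refine closed_exists (closed_and ((SS_closed T g D).preimage (by fun_prop)) ?_)
    exact isClosed_closure.preimage ((T ^ a).continuous.comp (by fun_prop))
  obtain ⟨a, hint⟩ := nonempty_interior_of_iUnion_of_closed hDc (by
    refine eq_univ_of_forall fun y => ?_
    obtain ⟨η, hη⟩ := SS_diag hT hg hne y
    obtain ⟨_, hmem, a, rfl⟩ := mem_closure_iff.1 (hT (η 0) x) N2 hN2o hxN2
    exact mem_iUnion.2 ⟨a, η, hη, subset_closure hmem⟩)
  let N' : Set X := (T ^ (-a)) ⁻¹' interior (Da a)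
  have hN'o : IsOpen N' := isOpen_interior.preimage (Homeomorph.continuous _)
  have hN' : ∀ y ∈ N', ∃ η : ℤ → X, (fun _ => y, η) ∈ SS T g D ∧ η 0 ∈ N0 := by
    intro y hy
    obtain ⟨η, hη, hη0⟩ := interior_subset hy
    have := SS_inv hg a 0 hη
    refine ⟨fun i => (T ^ a) (η i), ?_, ?_⟩
    · simp only [zero_mul, add_zero, tadd, add_neg_cancel, tzero] at this
      exact this
    · exact hN2 hη0
  have hN'ne : N'.Nonempty := by
    obtain ⟨w, hw⟩ := hint
    refine ⟨(T ^ a) w, ?_⟩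
    simpa only [N', mem_preimage, tadd, neg_add_cancel, tzero] using hw
  obtain ⟨y1, hy1⟩ := hN'ne
  let A : ℕ × Finset ℕ → Set X := fun p => if p.1 = 0 then N' else N p.1
  have hA : ∀ p, IsOpen (A p) := by
    intro p
    by_cases h : p.1 = 0
    · simp only [A, h, if_true]; exact hN'o
    · simp only [A, h, if_false]; exact hN _
  have hex : ∃ f ∈ XL T LU, ∀ p ∈ sr D 0, f p ∈ A p := by
    obtain ⟨η, ⟨-, -, f, hf, hf0, hfi⟩, hη0⟩ := hN' y1 hy1
    simp only at hf0 hfi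
    refine ⟨_, XL_map Prod.fst LU_of_LAP hf, ?_⟩
    rintro ⟨t, ε⟩ hp
    obtain ⟨⟨h1, -⟩, -⟩ := mem_sr.1 hp
    by_cases h : t = 0
    · subst h
      simp only [A, if_true]
      rw [hf0]; exact hy1
    · simp only [A, h, if_false]
      rw [hfi t (Finset.mem_Icc.2 (by omega))]
      exact hη0 t (Finset.mem_range.2 h1)
  obtain ⟨U, hUo, ⟨y0, hy0⟩, hUA, hU⟩ := Phi_zero hT D A hA hex
  have hUA' : U ⊆ N' := by simpa only [A, if_true] using hUA
  obtain ⟨η, ⟨hR, heq, -⟩, hη0⟩ := hN' y0 (hUA' hy0)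
  simp only at heq
  -- approximate
  let O : Set ((ℤ → X) × (ℤ → X)) :=
    (⋂ ε ∈ (Finset.Icc 1 D).powerset,
      {q | q.1 (-∑ j ∈ ε, ((LL D / j : ℕ) : ℤ) * ((D : ℤ) + 1 - j)) ∈ U}) ∩
    ((⋂ i ∈ Finset.Icc 1 D, {q | q.2 ((i : ℤ) * (LL D : ℤ)) ∈ U}) ∩ {q | q.2 0 ∈ N0})
  have hO : IsOpen O := by
    refine IsOpen.inter ?_ (IsOpen.inter ?_ ?_)
    · exact isOpen_biInter_finset fun ε _ => hUo.preimage (by fun_prop)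
    · exact isOpen_biInter_finset fun i _ => hUo.preimage (by fun_prop)
    · exact hN0.preimage (by fun_prop)
  have hmemO : ((fun _ => y0, η) : (ℤ → X) × (ℤ → X)) ∈ O := by
    refine ⟨?_, ?_, hη0⟩
    · simp only [mem_iInter]
      intro ε _
      exact hy0
    · simp only [mem_iInter]
      intro i hi
      simp only [mem_ofPred_eq]
      rw [heq i hi]
      exact hy0
  obtain ⟨_, ⟨hO1, hO2, hO3⟩, y, u, ν, hyu, rfl⟩ := mem_closure_iff.1 hR O hO hmemO
  simp only [mem_iInter] at hO1 hO2
  have hO3' : u ∈ N0 := by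
    have : (T ^ ((0 : ℤ) * ν)) u ∈ N0 := hO3
    rwa [zero_mul, tzero] at this
  obtain ⟨f, hf, hfu, hfA⟩ := hU u y ν ⟨hyu, hO1, hO2⟩
  refine ⟨_, XL_map (fun t : ℕ => (t, ∅)) LAP_of_LU hf, fun i hi => ?_⟩
  by_cases h : i = 0
  · subst h
    simp only [hfu]
    have := hO3' 0 (Finset.mem_range.2 hi)
    simpa [tzero] using this
  · have := hfA (i, ∅) (mem_sr.2 ⟨by omega, by simp⟩) (by simp [h])
    simpa only [A, h, if_false] using this

theorem PP_step {D : ℕ} (hP : PP.{u} (D + 1)) : PP.{u} (D + 2) := by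
  intro X _ _ _ T S hT hS x
  have : Nonempty X := ⟨x⟩
  obtain ⟨a, Z, hZc, hZne, hZ, hgZ⟩ := exists_g hT hS (L := LL D) (Nat.factorial_pos _)
  set g : X ≃ₜ X := T ^ (-a) * S with hgdef
  have hg : Commute g T := by
    refine Commute.mul_left ?_ hS
    exact (Commute.refl T).zpow_left _
  have hne := SS_nonempty hg hP hZc hZne hZ hgZ
  -- closedness
  let ρ : (ℕ → X) → (Fin (D + 2) → X) := fun f i => f i
  have hρ : Continuous ρ := by fun_prop
  have hcl : IsClosed (ρ '' XL T LAP) := ((XL_closed T LAP).isCompact.image hρ).isClosed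
  have hmem : (fun i : Fin (D + 2) => (g ^ ((i : ℕ) : ℤ)) x) ∈ ρ '' XL T LAP := by
    rw [← hcl.closure_eq, mem_closure_iff]
    intro O hO hxO
    obtain ⟨u, hu, huO⟩ := isOpen_pi_iff'.1 hO _ hxO
    let N : ℕ → Set X := fun i => if h : i < D + 2 then u ⟨i, h⟩ else univ
    have hN : ∀ i, IsOpen (N i) := by
      intro i
      by_cases h : i < D + 2
      · simp only [N, h, dif_pos]; exact (hu _).1
      · simp only [N, h, dif_neg, not_false_eq_true]; exact isOpen_univ
    obtain ⟨f, hf, hfN⟩ := step_g hT hg hne x hN (by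
      intro i hi
      simp only [N, hi, dif_pos]
      exact (hu ⟨i, hi⟩).2)
    refine ⟨ρ f, huO fun i _ => ?_, mem_image_of_mem ρ hf⟩
    have := hfN i i.2
    simpa only [N, i.2, dif_pos] using this
  obtain ⟨f, hf, hfx⟩ := hmem
  refine ⟨_, XL_move (Λ := LAP) (l := fun i : ℕ => a * i) ⟨0, a, by funext i; ring⟩ hf, fun i hi => ?_⟩
  have h1 : f i = (g ^ (i : ℤ)) x := congrFun hfx ⟨i, hi⟩
  have h2 : S = T ^ a * g := by rw [hgdef, ← mul_assoc, ← zpow_add]; simp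
  have h3 : Commute (T ^ a) g := (hg.zpow_right a).symm
  simp only [h1]
  rw [h2, h3.mul_zpow, ← zpow_mul]
  rfl

theorem PP_all (d : ℕ) : PP.{u} d := by
  have h1 : PP.{u} 1 := by
    intro X _ _ _ T S hT hS x
    refine ⟨_, XL_diag T LAP x, fun i hi => ?_⟩
    obtain rfl : i = 0 := by omega
    simp
  have hs : ∀ D, PP.{u} (D + 1) := by
    intro D
    induction D with
    | zero => exact h1
    | succ D ih => exact PP_step ih
  intro X _ _ _ T S hT hS x
  obtain ⟨f, hf, h⟩ := hs d X T S hT hS x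
  exact ⟨f, hf, fun i hi => h i (by omega)⟩

end Step
end NdAux

namespace NdAux
open Set Topology
universe u

theorem Nd_sub {X : Type u} [MetricSpace X] [CompactSpace X] (S T : X ≃ₜ X)
    (hcomm : Commute S T) (hT : IsMin T) (d : ℕ) : Nd S d ⊆ Nd T d := by
  refine closure_minimal ?_ isClosed_closure
  rintro f ⟨x, n, hf⟩
  obtain ⟨h, hh, hx⟩ := PP_all d X T (S ^ n) hT (hcomm.zpow_left n) ((S ^ n) x)
  have hcont : Continuous (fun (h : ℕ → X) (i : Fin d) => h i) := by fun_prop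
  have hsub : XL T LAP ⊆ (fun (h : ℕ → X) (i : Fin d) => h i) ⁻¹' Nd T d := by
    refine XL_sub (isClosed_closure.preimage hcont) ?_
    rintro z _ ⟨a, b, rfl⟩
    refine subset_closure ⟨(T ^ (a - b)) z, b, fun i => ?_⟩
    rw [toEquiv_zpow, tadd]
    congr 2
    ring
  have := hsub hh
  rw [mem_preimage] at this
  convert this using 1
  funext i
  rw [hx i i.2, hf i, toEquiv_zpow, ← zpow_mul, tadd]
  congr 2
  ring

end NdAux

/-- If `S` and `T` are commuting homeomorphisms of a compact metric space `X`
such that both `(X,S)` and `(X,T)` are minimal, then `N_d(X,S) = N_d(X,T)` for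
each `d ∈ ℕ`. -/
theorem nd_eq_of_commuting_minimal_homeos
    {X : Type*} [MetricSpace X] [CompactSpace X] (S T : X ≃ₜ X)
    (hcomm : ∀ x : X, S (T x) = T (S x))
    (hSmin : ∀ x : X, Dense (Set.range fun n : ℤ => (S.toEquiv ^ n) x))
    (hTmin : ∀ x : X, Dense (Set.range fun n : ℤ => (T.toEquiv ^ n) x))
    (d : ℕ) :
    Nd S d = Nd T d := by
  have hc : Commute S T := Homeomorph.ext hcomm
  have hS' : NdAux.IsMin S := fun x => by
    simpa only [NdAux.toEquiv_zpow] using hSmin x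
  have hT' : NdAux.IsMin T := fun x => by
    simpa only [NdAux.toEquiv_zpow] using hTmin x
  exact Set.Subset.antisymm (NdAux.Nd_sub S T hc hT' d) (NdAux.Nd_sub T S hc.symm hS' d)
end

section
/- Let (X,{T^t}_{t∈ℝ}) be a minimal ℝ-flow, d ∈ ℕ, and let π:(X,{T^t})→(Y,{T^t}) be a factor map between minimal ℝ-flows with R_π = RP^[d](X,ℝ). Then for any distinct nonzero real numbers α₁,…,α_d there is a dense G_δ set Ω ⊆ X such that for every x ∈ Ω, (π⁻¹(π(x)))^d ⊆ closure{(T^{α₁t}x, T^{α₂t}x, …, T^{α_dt}x) : t ∈ ℝ}. -/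
/-- The regionally proximal relation of order `d` of an `ℝ`-flow `φ` on a metric
space `X`. -/
def RPdFlow {X : Type*} [MetricSpace X] (φ : ℝ → X → X) (d : ℕ) : Set (X × X) :=
  {p | ∀ δ > 0, ∃ x' y' : X, dist p.1 x' < δ ∧ dist p.2 y' < δ ∧
    ∃ t : Fin d → ℝ, ∀ ε : Fin d → Bool, ε ≠ (fun _ => false) →
      dist (φ (∑ i, if ε i then t i else 0) x')
        (φ (∑ i, if ε i then t i else 0) y') < δ}

section FlowHelpers

set_option linter.unusedSectionVars false

open Filter Topology Set

attribute [local instance] Ultrafilter.add Ultrafilter.addSemigroup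

/-- Hypotheses of a minimal real flow. -/
structure MinFlow {X : Type*} [TopologicalSpace X] (φ : ℝ → X → X) : Prop where
  cont : Continuous fun p : ℝ × X => φ p.1 p.2
  zero : ∀ x, φ 0 x = x
  add : ∀ s t x, φ (s + t) x = φ s (φ t x)
  min : ∀ x : X, Dense (Set.range fun t : ℝ => φ t x)

theorem MinFlow.cont_t {X : Type*} [TopologicalSpace X] {φ : ℝ → X → X} (h : MinFlow φ) (t : ℝ) :
    Continuous (φ t) :=
  h.cont.comp (Continuous.prodMk_right t)

theorem MinFlow.neg_self {X : Type*} [TopologicalSpace X] {φ : ℝ → X → X} (h : MinFlow φ)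
    (t : ℝ) (x : X) : φ (-t) (φ t x) = x := by
  rw [← h.add, neg_add_cancel, h.zero]

section Ellis

variable {X : Type*} [MetricSpace X] [CompactSpace X] {φ : ℝ → X → X}

/-- Action of an ultrafilter. -/
noncomputable def uev (φ : ℝ → X → X) (p : Ultrafilter ℝ) (x : X) : X :=
  Ultrafilter.extend (fun t => φ t x) p

theorem uev_tendsto (p : Ultrafilter ℝ) (x : X) : Tendsto (fun t => φ t x) p (𝓝 (uev φ p x)) := by
  have : (↑(p.map fun t => φ t x) : Filter X) ≤ 𝓝 (uev φ p x) := ultrafilter_extend_eq_iff.1 rfl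
  exact this

theorem uev_eq (p : Ultrafilter ℝ) (x c : X) (h : Tendsto (fun t => φ t x) p (𝓝 c)) :
    uev φ p x = c := ultrafilter_extend_eq_iff.2 h

theorem uev_add (h : MinFlow φ) (p q : Ultrafilter ℝ) (x : X) :
    uev φ (p + q) x = uev φ p (uev φ q x) := by
  apply uev_eq
  rw [(nhds_basis_opens _).tendsto_right_iff]
  rintro W ⟨hcW, hW⟩
  rw [Ultrafilter.eventually_add]
  have h1 := (uev_tendsto p (uev φ q x)).eventually (hW.mem_nhds hcW)
  filter_upwards [h1] with m hm
  have h2 := ((h.cont_t m).tendsto _).comp (uev_tendsto (φ := φ) q x)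
  have h3 := h2.eventually (hW.mem_nhds hm)
  filter_upwards [h3] with m' hm'
  rw [h.add]; exact hm'

theorem umap_add {V W : Type*} [AddSemigroup V] [AddSemigroup W] (f : V → W)
    (hf : ∀ a b, f (a + b) = f a + f b)
    (p q : Ultrafilter V) : (p + q).map f = p.map f + q.map f := by
  apply Ultrafilter.coe_inj.mp
  apply Filter.ext'
  intro P
  rw [Ultrafilter.eventually_add]
  simp only [Ultrafilter.coe_map, eventually_map]
  rw [Ultrafilter.eventually_add]
  simp only [hf]

theorem exists_min_ideal {S : Type*} [AddSemigroup S] [Nonempty S] [TopologicalSpace S]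
    [CompactSpace S] [T2Space S] (hc : ∀ r : S, Continuous (· + r)) :
    ∃ L : Set S, IsClosed L ∧ L.Nonempty ∧ (∀ s, ∀ p ∈ L, s + p ∈ L) ∧
      ∀ p ∈ L, ∀ q ∈ L, ∃ r, r + p = q := by
  let T : Set (Set S) := {L | IsClosed L ∧ L.Nonempty ∧ ∀ s, ∀ p ∈ L, s + p ∈ L}
  obtain ⟨L, hL⟩ : ∃ L, Minimal (· ∈ T) L := by
    refine zorn_superset _ fun c hcs hc => ?_
    refine ⟨⋂₀ c, ⟨isClosed_sInter fun t ht => (hcs ht).1, ?_, fun s p hp => ?_⟩, fun s hs =>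
        Set.sInter_subset_of_mem hs⟩
    · obtain rfl | hcnemp := c.eq_empty_or_nonempty
      · rw [Set.sInter_empty]
        apply Set.univ_nonempty
      rw [Set.sInter_eq_iInter]
      refine @IsCompact.nonempty_iInter_of_directed_nonempty_isCompact_isClosed _ _ _ hcnemp.coe_sort
          ((↑) : c → Set S) ?_ ?_ ?_ ?_
      · refine DirectedOn.directed_val (IsChain.directedOn hc.symm)
      exacts [fun i => (hcs i.prop).2.1, fun i => (hcs i.prop).1.isCompact,
        fun i => (hcs i.prop).1]
    · rw [Set.mem_sInter]
      exact fun t ht => (hcs ht).2.2 s p (Set.mem_sInter.mp hp t ht)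
  refine ⟨L, hL.prop.1, hL.prop.2.1, hL.prop.2.2, fun p hp q hq => ?_⟩
  have : range (· + p) = L := by
    apply hL.eq_of_subset
    · refine ⟨(isCompact_range (hc p)).isClosed, ⟨_, ⟨p, rfl⟩⟩, ?_⟩
      rintro s _ ⟨r, rfl⟩
      exact ⟨s + r, add_assoc _ _ _⟩
    · rintro _ ⟨r, rfl⟩
      exact hL.prop.2.2 _ _ hp
  rw [← this] at hq
  exact hq

theorem exists_idem_at (h : MinFlow φ) (x : X) :
    ∃ u : Ultrafilter ℝ, u + u = u ∧ uev φ u x = x ∧ ∀ s, (s + u) + (s + u) = s + u →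
      u + (s + u) = u := by
  obtain ⟨L, hLc, ⟨p0, hp0⟩, hLi, hLm⟩ :=
    exists_min_ideal (S := Ultrafilter ℝ) Ultrafilter.continuous_add_left
  let K : Set (Ultrafilter ℝ) := L ∩ {p | uev φ p x = x}
  have hev : Continuous fun p => uev φ p x := continuous_ultrafilter_extend _
  have hKc : IsCompact K := (hLc.inter (isClosed_singleton.preimage hev)).isCompact
  have hKne : K.Nonempty := by
    -- the image of `L` is closed, invariant, hence everything
    have hcl : IsClosed ((fun p => uev φ p x) '' L) := (hLc.isCompact.image hev).isClosed
    have hsub : range (fun t => φ t (uev φ p0 x)) ⊆ (fun p => uev φ p x) '' L := by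
      rintro _ ⟨t, rfl⟩
      refine ⟨pure t + p0, hLi _ _ hp0, ?_⟩
      simp only
      rw [uev_add h]
      exact ultrafilter_extend_pure _ _
    have hx : x ∈ closure (range (fun t => φ t (uev φ p0 x))) := h.min _ x
    obtain ⟨p, hp, hpx⟩ := closure_minimal hsub hcl hx
    exact ⟨p, hp, hpx⟩
  obtain ⟨u, ⟨huL, hux⟩, huu⟩ := exists_idempotent_in_compact_add_subsemigroup
    Ultrafilter.continuous_add_left K hKne hKc (by
      rintro p ⟨hp, hpx⟩ q ⟨hq, hqx⟩
      refine ⟨hLi _ _ hq, ?_⟩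
      have hpx' : uev φ p x = x := hpx
      have hqx' : uev φ q x = x := hqx
      change uev φ (p + q) x = x
      rw [uev_add h, hqx', hpx'])
  refine ⟨u, huu, hux, fun s hs => ?_⟩
  obtain ⟨r, hr⟩ := hLm _ (hLi s _ huL) _ huL
  calc u + (s + u) = (r + (s + u)) + (s + u) := by rw [hr]
    _ = r + ((s + u) + (s + u)) := add_assoc _ _ _
    _ = u := by rw [hs, hr]

theorem exists_ultra_of_mem_closure {V I : Type*} [AddCommGroup V] (ℓ : I → V →+ ℝ) (x : X)
    (q : I → X) (hq : q ∈ closure (range fun v : V => fun i => φ (ℓ i v) x)) :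
    ∃ p : Ultrafilter V, ∀ i, uev φ (p.map (ℓ i)) x = q i := by
  have : NeBot (comap (fun v : V => fun i => φ (ℓ i v) x) (𝓝 q)) := by
    apply comap_neBot
    intro t ht
    obtain ⟨_, hy, ⟨v, rfl⟩⟩ := mem_closure_iff_nhds.1 hq t ht
    exact ⟨v, hy⟩
  refine ⟨Ultrafilter.of (comap (fun v : V => fun i => φ (ℓ i v) x) (𝓝 q)), fun i => ?_⟩
  apply uev_eq
  have h1 : Tendsto (fun v : V => fun i => φ (ℓ i v) x)
      (Ultrafilter.of (comap (fun v : V => fun i => φ (ℓ i v) x) (𝓝 q))) (𝓝 q) :=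
    tendsto_comap.mono_left (Ultrafilter.of_le _)
  exact (tendsto_pi_nhds.1 h1) i

/-- Lemma E. -/
theorem ellis_return (h : MinFlow φ) {V I : Type*} [AddCommGroup V] (ℓ : I → V →+ ℝ) (x : X)
    (hU : ∀ u : Ultrafilter ℝ, u + u = u → ∃ U : Ultrafilter V, ∀ i, U.map (ℓ i) = u)
    (q : I → X) (hq : q ∈ closure (range fun v : V => fun i => φ (ℓ i v) x)) :
    (fun _ => x) ∈ closure (range fun v : V => fun i => φ (ℓ i v) (q i)) := by
  obtain ⟨u, huu, hux, hu⟩ := exists_idem_at h x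
  obtain ⟨U, hU⟩ := hU u huu
  obtain ⟨p, hp⟩ := exists_ultra_of_mem_closure ℓ x q hq
  obtain ⟨w, ⟨s, rfl⟩, hw⟩ := exists_idempotent_in_compact_add_subsemigroup
    (Ultrafilter.continuous_add_left (M := V)) (range (· + (p + U))) (range_nonempty _)
    (isCompact_range (Ultrafilter.continuous_add_left _)) (by
      rintro _ ⟨a, rfl⟩ _ ⟨b, rfl⟩
      exact ⟨a + (p + U) + b, add_assoc _ _ _⟩)
  have key : ∀ i, uev φ ((U + s).map (ℓ i)) (q i) = x := by
    intro i
    have e1 := congrArg (fun r => Ultrafilter.map (ℓ i) r) hw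
    simp only [umap_add (ℓ i) (map_add (ℓ i)), hU i] at e1
    have e2 := hu (s.map (ℓ i) + p.map (ℓ i)) (by simpa only [add_assoc] using e1)
    rw [umap_add (ℓ i) (map_add (ℓ i)), hU i, uev_add h, ← hp i]
    have e3 := congrArg (fun r => uev φ r x) e2
    simpa only [uev_add h, hux] using e3
  refine mem_closure_of_tendsto (b := ((U + s : Ultrafilter V) : Filter V)) ?_
    (Eventually.of_forall fun v => mem_range_self v)
  rw [tendsto_pi_nhds]
  intro i
  have := uev_tendsto (φ := φ) ((U + s).map (ℓ i)) (q i)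
  rw [key i] at this
  exact this


theorem pure_zero_add' {V : Type*} [AddMonoid V] (p : Ultrafilter V) : pure 0 + p = p := by
  apply Ultrafilter.coe_inj.mp
  apply Filter.ext'
  intro P
  rw [Ultrafilter.eventually_add]
  simp

theorem add_pure_zero' {V : Type*} [AddMonoid V] (p : Ultrafilter V) : p + pure 0 = p := by
  apply Ultrafilter.coe_inj.mp
  apply Filter.ext'
  intro P
  rw [Ultrafilter.eventually_add]
  simp

/-- The form attached to a vertex of the cube. -/
noncomputable def cubeForm {d : ℕ} (ε : Fin d → Bool) : (Fin d → ℝ) →+ ℝ where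
  toFun t := ∑ i, if ε i then t i else 0
  map_zero' := by simp
  map_add' a b := by
    rw [← Finset.sum_add_distrib]
    refine Finset.sum_congr rfl fun i _ => ?_
    split_ifs <;> simp

theorem cubeForm_single {d : ℕ} (ε : Fin d → Bool) (j : Fin d) (a : ℝ) :
    cubeForm ε (Pi.single j a) = if ε j then a else 0 := by
  change (∑ i, if ε i then (Pi.single j a : Fin d → ℝ) i else 0) = _
  rw [Finset.sum_eq_single j]
  · simp
  · intro b _ hb; simp [hb]
  · simp

theorem cube_ultra {d : ℕ} (u : Ultrafilter ℝ) (huu : u + u = u) :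
    ∃ U : Ultrafilter (Fin d → ℝ), ∀ ε : Fin d → Bool, ε ≠ (fun _ => false) →
      U.map (cubeForm ε) = u := by
  have key : ∀ l : List (Fin d), ∃ U : Ultrafilter (Fin d → ℝ), ∀ ε : Fin d → Bool,
      U.map (cubeForm ε) = if ∃ j ∈ l, ε j = true then u else pure 0 := by
    intro l
    induction l with
    | nil =>
      refine ⟨pure 0, fun ε => ?_⟩
      simp
    | cons j l ih =>
      obtain ⟨U', hU'⟩ := ih
      refine ⟨u.map (fun a : ℝ => (Pi.single j a : Fin d → ℝ)) + U', fun ε => ?_⟩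
      rw [umap_add _ (map_add _), hU', Ultrafilter.map_map]
      have hcomp : (cubeForm ε ∘ (fun a : ℝ => (Pi.single j a : Fin d → ℝ))) = fun a => if ε j then a else 0 := by
        funext a
        exact cubeForm_single ε j a
      rw [hcomp]
      by_cases hj : ε j = true
      · have h1 : u.map (fun a => if ε j then a else 0) = u := by
          simp only [hj, if_true]
          exact Ultrafilter.map_id' u
        rw [h1]
        by_cases h2 : ∃ j ∈ l, ε j = true
        · simp [h2, hj, huu]
        · simp [h2, hj, add_pure_zero']
      · have h1 : u.map (fun a => if ε j then a else 0) = pure 0 := by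
          apply Ultrafilter.coe_inj.mp
          rw [Ultrafilter.coe_map]
          simp only [hj]
          exact Filter.map_const
        rw [h1, pure_zero_add']
        simp [hj]
  obtain ⟨U, hU⟩ := key (List.finRange d)
  refine ⟨U, fun ε hε => ?_⟩
  rw [hU, if_pos]
  by_contra hcon
  push Not at hcon
  apply hε
  funext j
  simpa using hcon j (List.mem_finRange j)

theorem cube_return (h : MinFlow φ) {d : ℕ} (x : X)
    (q : {ε : Fin d → Bool // ε ≠ fun _ => false} → X)
    (hq : q ∈ closure (range fun v : Fin d → ℝ => fun i => φ (cubeForm i.1 v) x)) :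
    (fun _ => x) ∈ closure (range fun v : Fin d → ℝ => fun i => φ (cubeForm i.1 v) (q i)) := by
  refine ellis_return (I := {ε : Fin d → Bool // ε ≠ fun _ => false}) h (fun i => cubeForm i.1) x ?_ q hq
  intro u huu
  obtain ⟨U, hU⟩ := cube_ultra (d := d) u huu
  exact ⟨U, fun i => hU i.1 i.2⟩

theorem diag_return (h : MinFlow φ) {V I : Type*} [AddCommGroup V] (ℓ : I → V →+ ℝ) (e : ℝ → V)
    (he : ∀ i a, ℓ i (e a) = a) (x : X)
    (q : I → X) (hq : q ∈ closure (range fun v : V => fun i => φ (ℓ i v) x)) :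
    (fun _ => x) ∈ closure (range fun v : V => fun i => φ (ℓ i v) (q i)) := by
  refine ellis_return h ℓ x ?_ q hq
  intro u huu
  refine ⟨u.map e, fun i => ?_⟩
  rw [Ultrafilter.map_map]
  have : (ℓ i ∘ e) = id := funext fun a => he i a
  rw [this, Ultrafilter.map_id]

end Ellis

section Topo

theorem frontier_compl_residual_open {X : Type*} [TopologicalSpace X] (O : Set X) (hO : IsOpen O) :
    (frontier O)ᶜ ∈ residual X := by
  apply residual_of_dense_open isClosed_frontier.isOpen_compl
  rw [← interior_eq_empty_iff_dense_compl, ← frontier_compl]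
  exact interior_frontier hO.isClosed_compl

theorem gen_residual {X Z V : Type*} [TopologicalSpace X] [TopologicalSpace Z]
    [SecondCountableTopology Z] (g : V → X → Z) (hg : ∀ v, Continuous (g v)) :
    ∀ᶠ x in residual X, ∀ c, (x, c) ∈ closure (range fun p : V × X => (p.2, g p.1 p.2)) →
      c ∈ closure (range fun v => g v x) := by
  have hB := TopologicalSpace.isBasis_countableBasis Z
  have hOo : ∀ W ∈ TopologicalSpace.countableBasis Z, IsOpen (⋃ v, (g v) ⁻¹' W) := fun W hW =>
    isOpen_iUnion fun v => (hB.isOpen hW).preimage (hg v)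
  have h1 : ∀ᶠ x in residual X, ∀ W ∈ TopologicalSpace.countableBasis Z,
      x ∈ (frontier (⋃ v, (g v) ⁻¹' W))ᶜ := by
    rw [eventually_countable_ball (TopologicalSpace.countable_countableBasis Z)]
    intro W hW
    exact frontier_compl_residual_open _ (hOo W hW)
  filter_upwards [h1] with x hx c hc
  rw [hB.mem_closure_iff]
  intro W hW hcW
  have hcl : x ∈ closure (⋃ v, (g v) ⁻¹' W) := by
    rw [mem_closure_iff]
    intro N hN hxN
    obtain ⟨_, ⟨hz1, hz2⟩, ⟨p, rfl⟩⟩ := mem_closure_iff.1 hc (N ×ˢ W)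
      (hN.prod (hB.isOpen hW)) ⟨hxN, hcW⟩
    exact ⟨p.2, hz1, mem_iUnion.2 ⟨p.1, hz2⟩⟩
  have hxO : x ∈ ⋃ v, (g v) ⁻¹' W := by
    by_contra hcon
    apply hx W hW
    rw [(hOo W hW).frontier_eq]
    exact ⟨hcl, hcon⟩
  obtain ⟨v, hv⟩ := mem_iUnion.1 hxO
  exact ⟨_, hv, ⟨v, rfl⟩⟩

theorem semi_open {A C V : Type*} [TopologicalSpace A] [CompactSpace A] [T2Space A]
    [TopologicalSpace C] [CompactSpace C] [T2Space C]
    (θ : A → C) (hθ : Continuous θ) (hsurj : Function.Surjective θ)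
    (aA : V → A → A) (haA : ∀ v, Continuous (aA v)) (aC : V → C ≃ₜ C)
    (heq : ∀ v a, θ (aA v a) = aC v (θ a))
    (hmin : ∀ W : Set A, IsOpen W → W.Nonempty → ∀ a, ∃ v, aA v a ∈ W)
    (W : Set A) (hW : IsOpen W) (hWne : W.Nonempty) : (interior (θ '' W)).Nonempty := by
  obtain ⟨a0, ha0⟩ := hWne
  obtain ⟨W', hW'o, haW', hW'cl⟩ : ∃ W', IsOpen W' ∧ a0 ∈ W' ∧ closure W' ⊆ W := by
    obtain ⟨K, hK, hKc, hKW⟩ := exists_mem_nhds_isClosed_subset (hW.mem_nhds ha0)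
    exact ⟨interior K, isOpen_interior, mem_interior_iff_mem_nhds.2 hK,
      (closure_minimal interior_subset hKc).trans hKW⟩
  obtain ⟨F, hF⟩ := isCompact_univ.elim_finite_subcover (fun v => (aA v) ⁻¹' W')
    (fun v => hW'o.preimage (haA v)) (fun a _ => by
      obtain ⟨v, hv⟩ := hmin W' hW'o ⟨a0, haW'⟩ a
      exact mem_iUnion.2 ⟨v, hv⟩)
  have hKcl : IsClosed (θ '' closure W') := (isClosed_closure.isCompact.image hθ).isClosed
  have : Nonempty C := ⟨θ a0⟩
  obtain ⟨⟨v, hv⟩, hint⟩ := nonempty_interior_of_iUnion_of_closed (ι := F)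
    (f := fun v => (aC v.1) ⁻¹' (θ '' closure W'))
    (fun v => hKcl.preimage (aC v.1).continuous) (by
      rw [eq_univ_iff_forall]
      intro c
      obtain ⟨a, rfl⟩ := hsurj c
      have := hF (mem_univ a)
      simp only [mem_iUnion] at this
      obtain ⟨v, hv, hav⟩ := this
      refine mem_iUnion.2 ⟨⟨v, hv⟩, ?_⟩
      rw [mem_preimage, ← heq]
      exact ⟨_, subset_closure hav, rfl⟩)
  obtain ⟨c, hc⟩ := hint
  refine ⟨aC v c, ?_⟩
  rw [← (aC v).preimage_interior] at hc
  exact interior_mono (image_mono hW'cl) hc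

/-- Semi-openness. -/
def SemiOpen {A C : Type*} [TopologicalSpace A] [TopologicalSpace C] (θ : A → C) : Prop :=
  ∀ W : Set A, IsOpen W → W.Nonempty → (interior (θ '' W)).Nonempty

theorem open_residual {A C : Type*} [TopologicalSpace A] [CompactSpace A] [T2Space A]
    [SecondCountableTopology A] [TopologicalSpace C] [T2Space C]
    (θ : A → C) (hθ : Continuous θ) (hs : SemiOpen θ) :
    ∀ᶠ a in residual A, ∀ W ∈ 𝓝 a, θ '' W ∈ 𝓝 (θ a) := by
  have hB := TopologicalSpace.isBasis_countableBasis A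
  have hKcl : ∀ W : Set A, IsClosed (θ '' closure W) := fun W =>
    (isClosed_closure.isCompact.image hθ).isClosed
  have h1 : ∀ᶠ x in residual A, ∀ W ∈ TopologicalSpace.countableBasis A,
      x ∈ (θ ⁻¹' frontier (θ '' closure W))ᶜ := by
    rw [eventually_countable_ball (TopologicalSpace.countable_countableBasis A)]
    intro W hW
    apply residual_of_dense_open (isClosed_frontier.preimage hθ).isOpen_compl
    rw [← interior_eq_empty_iff_dense_compl]
    by_contra hne
    obtain ⟨c, hc⟩ := hs _ isOpen_interior (nonempty_iff_ne_empty.2 hne)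
    have h2 : θ '' interior (θ ⁻¹' frontier (θ '' closure W)) ⊆ frontier (θ '' closure W) := by
      rintro _ ⟨a, ha, rfl⟩
      have := interior_subset ha
      exact this
    have h3 := interior_mono h2 hc
    rw [interior_frontier (hKcl W)] at h3
    exact h3
  filter_upwards [h1] with a ha W0 hW0
  obtain ⟨K, hK, hKc, hKW⟩ := exists_mem_nhds_isClosed_subset hW0
  obtain ⟨W, hW, haW, hWK⟩ := hB.mem_nhds_iff.1 hK
  have h2 : θ a ∈ interior (θ '' closure W) := by
    by_contra hcon
    apply ha W hW
    change θ a ∈ frontier _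
    rw [(hKcl W).frontier_eq]
    exact ⟨⟨a, subset_closure haW, rfl⟩, hcon⟩
  exact mem_of_superset (mem_interior_iff_mem_nhds.1 h2)
    (image_mono ((closure_minimal hWK hKc).trans hKW))

theorem ku_residual {A B : Type*} [TopologicalSpace A] [CompactSpace A] [T2Space A]
    [SecondCountableTopology A] [TopologicalSpace B] [T2Space B]
    (p : A → B) (hp : Continuous p) (hs : SemiOpen p) (G : Set A) (hG : G ∈ residual A) :
    ∀ᶠ b in residual B, ∀ W : Set A, IsOpen W → (∃ a ∈ W, p a = b) → ∃ a ∈ W, a ∈ G ∧ p a = b := by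
  obtain ⟨S, hSo, hSd, hSc, hSG⟩ := mem_residual_iff.1 hG
  have hB := TopologicalSpace.isBasis_countableBasis A
  have h1 : ∀ᶠ b in residual B, ∀ W ∈ TopologicalSpace.countableBasis A, ∀ U ∈ S,
      b ∈ (frontier (interior (p '' (W ∩ U))))ᶜ := by
    rw [eventually_countable_ball (TopologicalSpace.countable_countableBasis A)]
    intro W hW
    rw [eventually_countable_ball hSc]
    intro U hU
    exact frontier_compl_residual_open _ isOpen_interior
  filter_upwards [h1] with b hb
  have key : ∀ U ∈ S, ∀ W : Set A, IsOpen W → (∃ a ∈ W, p a = b) → ∃ a ∈ W, a ∈ U ∧ p a = b := by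
    rintro U hU W0 hW0 ⟨a, haW0, hab⟩
    obtain ⟨W, hW, haW, hWW0⟩ := hB.mem_nhds_iff.1 (hW0.mem_nhds haW0)
    have hcl : b ∈ closure (interior (p '' (W ∩ U))) := by
      rw [mem_closure_iff]
      intro N hN hbN
      have ho : IsOpen (W ∩ p ⁻¹' N) := (hB.isOpen hW).inter (hN.preimage hp)
      obtain ⟨a', ha', ha'U⟩ := (hSd U hU).inter_open_nonempty _ ho ⟨a, haW, by
        rw [mem_preimage, hab]; exact hbN⟩
      obtain ⟨c, hc⟩ := hs _ (ho.inter (hSo U hU)) ⟨a', ha', ha'U⟩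
      have hsub : (W ∩ p ⁻¹' N) ∩ U ⊆ W ∩ U := fun y hy => ⟨hy.1.1, hy.2⟩
      refine ⟨c, ?_, interior_mono (image_mono hsub) hc⟩
      obtain ⟨y, hy, rfl⟩ := interior_subset hc
      exact hy.1.2
    have hbO : b ∈ interior (p '' (W ∩ U)) := by
      by_contra hcon
      apply hb W hW U hU
      rw [isOpen_interior.frontier_eq]
      exact ⟨hcl, hcon⟩
    obtain ⟨a', ⟨h1, h2⟩, h3⟩ := interior_subset hbO
    exact ⟨a', hWW0 h1, h2, h3⟩
  intro W hW ⟨a, haW, hab⟩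
  have hFc : IsClosed (p ⁻¹' {b}) := isClosed_singleton.preimage hp
  have : CompactSpace (p ⁻¹' {b}) := isCompact_iff_compactSpace.1 hFc.isCompact
  have hd : Dense (⋂ U ∈ S, (Subtype.val : p ⁻¹' {b} → A) ⁻¹' U) := by
    apply dense_biInter_of_isOpen
    · intro U hU; exact (hSo U hU).preimage continuous_subtype_val
    · exact hSc
    · intro U hU
      rw [dense_iff_inter_open]
      rintro O hO ⟨⟨y, hy⟩, hyO⟩
      obtain ⟨O', hO', rfl⟩ := isOpen_induced_iff.1 hO
      obtain ⟨a', h1, h2, h3⟩ := key U hU O' hO' ⟨y, hyO, hy⟩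
      exact ⟨⟨a', h3⟩, h1, h2⟩
  obtain ⟨⟨a', ha'⟩, h1, h2⟩ := hd.inter_open_nonempty _ (hW.preimage continuous_subtype_val)
    ⟨⟨a, hab⟩, haW⟩
  refine ⟨a', h1, hSG ?_, ha'⟩
  rw [mem_sInter]
  intro U hU
  simp only [mem_iInter] at h2
  exact h2 U hU

end Topo

section Msys

set_option linter.unusedSectionVars false

variable {X : Type*} [MetricSpace X] [CompactSpace X] {φ : ℝ → X → X}
variable {V : Type*} [AddCommGroup V] {ι : Type*}

/-- The time-`t` homeomorphism. -/
def MinFlow.homeo (h : MinFlow φ) (t : ℝ) : X ≃ₜ X where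
  toFun := φ t
  invFun := φ (-t)
  left_inv x := h.neg_self t x
  right_inv x := by simpa using h.neg_self (-t) x
  continuous_toFun := h.cont_t t
  continuous_invFun := h.cont_t (-t)

/-- Closure of the set of all configurations. -/
def Mset (φ : ℝ → X → X) (F : ι → V →+ ℝ) : Set (ι → X) :=
  closure (range fun p : V × X => fun i => φ (F i p.1) p.2)

theorem pt_mem (F : ι → V →+ ℝ) (v : V) (z : X) : (fun i => φ (F i v) z) ∈ Mset φ F :=
  subset_closure ⟨(v, z), rfl⟩

theorem Mset_closed (F : ι → V →+ ℝ) : IsClosed (Mset φ F) := isClosed_closure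

instance Mset_compact (F : ι → V →+ ℝ) : CompactSpace (Mset φ F) :=
  isCompact_iff_compactSpace.1 (Mset_closed F).isCompact

theorem Mset_map (F : ι → V →+ ℝ) {Z : Type*} [TopologicalSpace Z] {S : Set Z} (hS : IsClosed S)
    (G : (ι → X) → Z) (hG : Continuous G) (hpt : ∀ v z, G (fun i => φ (F i v) z) ∈ S)
    (m : ι → X) (hm : m ∈ Mset φ F) : G m ∈ S := by
  have h1 : Mset φ F ⊆ G ⁻¹' S := by
    apply closure_minimal _ (hS.preimage hG)
    rintro _ ⟨p, rfl⟩
    exact hpt p.1 p.2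
  exact h1 hm

theorem act_cont (h : MinFlow φ) (F : ι → V →+ ℝ) (v : V) :
    Continuous (fun m : ι → X => fun i => φ (F i v) (m i)) :=
  continuous_pi fun i => (h.cont_t _).comp (continuous_apply i)

theorem act_mem (h : MinFlow φ) (F : ι → V →+ ℝ) (v : V) (m : ι → X) (hm : m ∈ Mset φ F) :
    (fun i => φ (F i v) (m i)) ∈ Mset φ F := by
  refine Mset_map F (Mset_closed F) (fun m i => φ (F i v) (m i)) (act_cont h F v) ?_ m hm
  intro w z
  simp only [← h.add, ← map_add]
  exact pt_mem F (v + w) z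

theorem act_add (h : MinFlow φ) (F : ι → V →+ ℝ) (v w : V) (m : ι → X) :
    (fun i => φ (F i v) (φ (F i w) (m i))) = (fun i => φ (F i (v + w)) (m i)) := by
  funext i
  rw [map_add, h.add]

/-- The action on the system. -/
def actM (h : MinFlow φ) (F : ι → V →+ ℝ) (v : V) (m : Mset φ F) : Mset φ F :=
  ⟨fun i => φ (F i v) (m.1 i), act_mem h F v m.1 m.2⟩

theorem actM_cont (h : MinFlow φ) (F : ι → V →+ ℝ) (v : V) : Continuous (actM h F v) :=
  ((act_cont h F v).comp continuous_subtype_val).subtype_mk _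

/-- The action on the system by homeomorphisms. -/
def actH (h : MinFlow φ) (F : ι → V →+ ℝ) (v : V) : Mset φ F ≃ₜ Mset φ F where
  toFun := actM h F v
  invFun := actM h F (-v)
  left_inv m := by
    apply Subtype.ext
    funext i
    simp only [actM, map_neg, h.neg_self]
  right_inv m := by
    apply Subtype.ext
    funext i
    simp only [actM, map_neg]
    simpa using h.neg_self (-(F i v)) (m.1 i)
  continuous_toFun := actM_cont h F v
  continuous_invFun := actM_cont h F (-v)

theorem diag_mem (h : MinFlow φ) (F : ι → V →+ ℝ) (z : X) : (fun _ => z) ∈ Mset φ F := by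
  have := pt_mem (φ := φ) F 0 z
  simpa only [map_zero, h.zero] using this

theorem Mset_eq_orbit (h : MinFlow φ) (F : ι → V →+ ℝ) (e : ℝ → V) (he : ∀ i a, F i (e a) = a)
    (x : X) : Mset φ F = closure (range fun v : V => fun i => φ (F i v) x) := by
  apply Subset.antisymm
  · apply closure_minimal _ isClosed_closure
    rintro _ ⟨⟨v, z⟩, rfl⟩
    simp only
    -- diagonal points belong to the closure
    have h1 : z ∈ closure (range fun a => φ a x) := h.min x z
    have hc : Continuous fun y : X => (fun i => φ (F i v) y : ι → X) :=
      continuous_pi fun i => h.cont_t _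
    have h2 := hc.continuousOn.image_closure (s := range fun a => φ a x) (mem_image_of_mem _ h1)
    refine closure_mono ?_ h2
    rintro _ ⟨_, ⟨a, rfl⟩, rfl⟩
    refine ⟨v + e a, ?_⟩
    funext i
    simp only [map_add, he, h.add]
  · apply closure_mono
    rintro _ ⟨v, rfl⟩
    exact ⟨(v, x), rfl⟩

theorem Mset_minimal (h : MinFlow φ) (F : ι → V →+ ℝ) (e : ℝ → V) (he : ∀ i a, F i (e a) = a)
    (W : Set (Mset φ F)) (hW : IsOpen W) (hne : W.Nonempty) (m : Mset φ F) :
    ∃ v, actM h F v m ∈ W := by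
  obtain ⟨W', hW', rfl⟩ := isOpen_induced_iff.1 hW
  obtain ⟨⟨m1, hm1⟩, hm1W⟩ := hne
  obtain ⟨_, _, ⟨⟨v0, x⟩, rfl⟩⟩ := mem_closure_iff.1 hm1 univ isOpen_univ trivial
  have hM := Mset_eq_orbit h F e he x
  have hm : m.1 ∈ closure (range fun v : V => fun i => φ (F i v) x) := hM ▸ m.2
  have hm1 : m1 ∈ closure (range fun v : V => fun i => φ (F i v) x) := hM ▸ hm1
  obtain ⟨_, hv1, ⟨v1, rfl⟩⟩ := mem_closure_iff.1 hm1 W' hW' hm1W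
  have hr := diag_return h F e he x m.1 hm
  obtain ⟨_, hv2, ⟨v2, rfl⟩⟩ := mem_closure_iff.1 hr _ (hW'.preimage (act_cont h F v1)) hv1
  refine ⟨v1 + v2, ?_⟩
  change (fun i => φ (F i (v1 + v2)) (m.1 i)) ∈ W'
  rw [← act_add h]
  exact hv2

theorem Mset_semi (h : MinFlow φ) (F : ι → V →+ ℝ) (e : ℝ → V) (he : ∀ i a, F i (e a) = a)
    {C : Type*} [TopologicalSpace C] [CompactSpace C] [T2Space C]
    (θ : Mset φ F → C) (hθ : Continuous θ) (hsurj : Function.Surjective θ) (aC : V → C ≃ₜ C)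
    (heq : ∀ v a, θ (actM h F v a) = aC v (θ a)) : SemiOpen θ := fun W hW hne =>
  semi_open θ hθ hsurj (actM h F) (actM_cont h F) aC heq (Mset_minimal h F e he) W hW hne

/-- Restriction to a family of coordinates. -/
def restr (F : ι → V →+ ℝ) {J : Type*} (j : J → ι) (m : Mset φ F) :
    Mset φ (fun k => F (j k)) :=
  ⟨fun k => m.1 (j k), Mset_map F (Mset_closed (φ := φ) (fun k => F (j k))) (fun m k => m (j k))
    (continuous_pi fun k => continuous_apply (j k)) (fun v z => pt_mem (fun k => F (j k)) v z)
    m.1 m.2⟩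

theorem restr_cont (F : ι → V →+ ℝ) {J : Type*} (j : J → ι) :
    Continuous (restr (φ := φ) F j) := by
  apply Continuous.subtype_mk
  exact continuous_pi fun k => (continuous_apply (j k)).comp continuous_subtype_val

theorem restr_surj (F : ι → V →+ ℝ) {J : Type*} (j : J → ι) :
    Function.Surjective (restr (φ := φ) F j) := by
  intro c
  have hcl : IsClosed ((fun m : ι → X => fun k => m (j k)) '' Mset φ F) :=
    ((Mset_closed F).isCompact.image (continuous_pi fun k => continuous_apply (j k))).isClosed
  obtain ⟨m, hm, hmc⟩ := Mset_map (fun k => F (j k)) hcl id continuous_id (fun v z =>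
    ⟨fun i => φ (F i v) z, pt_mem F v z, rfl⟩) c.1 c.2
  exact ⟨⟨m, hm⟩, Subtype.ext hmc⟩

theorem restr_semi (h : MinFlow φ) (F : ι → V →+ ℝ) (e : ℝ → V) (he : ∀ i a, F i (e a) = a)
    {J : Type*} (j : J → ι) : SemiOpen (restr (φ := φ) F j) :=
  Mset_semi h F e he _ (restr_cont F j) (restr_surj F j) (actH h fun k => F (j k))
    (fun _ _ => rfl)

theorem eval_semi (h : MinFlow φ) (F : ι → V →+ ℝ) (e : ℝ → V) (he : ∀ i a, F i (e a) = a)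
    (o : ι) : SemiOpen (fun m : Mset φ F => m.1 o) :=
  Mset_semi h F e he _ ((continuous_apply o).comp continuous_subtype_val)
    (fun x => ⟨⟨fun _ => x, diag_mem h F x⟩, rfl⟩) (fun v => h.homeo (F o v)) (fun _ _ => rfl)

/-- Good points: for a residual set of base points `x`, the points of the fibre at which the
restriction maps are open are dense in the fibre. -/
theorem good_fiber [Finite ι] (h : MinFlow φ) (F : ι → V →+ ℝ) (e : ℝ → V)
    (he : ∀ i a, F i (e a) = a) (o : ι) {K : Type*} [Finite K] (J : K → Set ι) :
    ∀ᶠ x in residual X, ∀ m ∈ Mset φ F, m o = x → ∀ W ∈ 𝓝 m, ∃ m' ∈ Mset φ F, m' o = x ∧ m' ∈ W ∧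
      ∀ k, ∀ W' ∈ 𝓝 m', ∃ U ∈ 𝓝 (fun i : J k => m' i), ∀ c ∈ Mset φ (fun i : J k => F i),
        c ∈ U → ∃ m'' ∈ Mset φ F, m'' ∈ W' ∧ ∀ i : J k, m'' i = c i := by
  have h1 : ∀ᶠ a in residual (Mset φ F), ∀ k, ∀ W ∈ 𝓝 a,
      restr F (fun i : J k => i.1) '' W ∈ 𝓝 (restr F (fun i : J k => i.1) a) := by
    rw [eventually_countable_forall]
    intro k
    exact open_residual _ (restr_cont F _) (restr_semi h F e he _)
  have h2 := ku_residual _ ((continuous_apply o).comp continuous_subtype_val) (eval_semi h F e he o)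
    _ h1
  filter_upwards [h2] with x hx m hm hmo W hW
  obtain ⟨W0, hW0, hW0o, hmW0⟩ := mem_nhds_iff.1 hW
  obtain ⟨m', hm'W, hm'G, hm'o⟩ := hx (Subtype.val ⁻¹' W0) (hW0o.preimage continuous_subtype_val)
    ⟨⟨m, hm⟩, hmW0, hmo⟩
  refine ⟨m'.1, m'.2, hm'o, hW0 hm'W, fun k W' hW' => ?_⟩
  have h3 := hm'G k (Subtype.val ⁻¹' W') (continuous_subtype_val.continuousAt hW')
  obtain ⟨U, hU, hUs⟩ := mem_nhds_subtype _ _ _ |>.1 h3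
  refine ⟨U, hU, fun c hc hcU => ?_⟩
  obtain ⟨m'', hm''W, hm''c⟩ := hUs (show (⟨c, hc⟩ : Mset φ (fun i : J k => F i)) ∈ _ from hcU)
  exact ⟨m''.1, m''.2, hm''W, fun i => congrFun (congrArg Subtype.val hm''c) i⟩

end Msys

section Cube

variable {X : Type*} [MetricSpace X] [CompactSpace X] {φ : ℝ → X → X}

/-- Nonzero vertices. -/
abbrev NV (d : ℕ) := {ε : Fin d → Bool // ε ≠ fun _ => false}

/-- Closure of the dynamical cubes. -/
def CubeCl (φ : ℝ → X → X) (d : ℕ) : Set (X × (NV d → X)) :=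
  closure (range fun p : (Fin d → ℝ) × X => (p.2, fun i : NV d => φ (cubeForm i.1 p.1) p.2))

theorem rp_common (d : ℕ) (x y : X) (hxy : (x, y) ∈ RPdFlow φ d) :
    ∃ c, (x, c) ∈ CubeCl φ d ∧ (y, c) ∈ CubeCl φ d := by
  have hn : ∀ n : ℕ, (0 : ℝ) < 1 / ((n : ℝ) + 1) := fun n => by positivity
  choose x' y' hx' hy' t ht using fun n : ℕ => hxy (1 / ((n : ℝ) + 1)) (hn n)
  obtain ⟨c, s, hs, hc⟩ := CompactSpace.tendsto_subseq
    (fun n => fun i : NV d => φ (cubeForm i.1 (t n)) (x' n))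
  have h0 : Tendsto (fun n : ℕ => 1 / ((s n : ℝ) + 1)) atTop (𝓝 0) :=
    tendsto_one_div_add_atTop_nhds_zero_nat.comp hs.tendsto_atTop
  have hxl : Tendsto (fun n => x' (s n)) atTop (𝓝 x) := by
    rw [tendsto_iff_dist_tendsto_zero]
    refine squeeze_zero (fun _ => dist_nonneg) (fun n => ?_) h0
    rw [dist_comm]; exact (hx' (s n)).le
  have hyl : Tendsto (fun n => y' (s n)) atTop (𝓝 y) := by
    rw [tendsto_iff_dist_tendsto_zero]
    refine squeeze_zero (fun _ => dist_nonneg) (fun n => ?_) h0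
    rw [dist_comm]; exact (hy' (s n)).le
  have hc' : Tendsto (fun n => fun i : NV d => φ (cubeForm i.1 (t (s n))) (y' (s n))) atTop
      (𝓝 c) := by
    rw [tendsto_pi_nhds]
    intro i
    have h1 := (tendsto_pi_nhds.1 hc) i
    refine h1.congr_dist ?_
    exact squeeze_zero (fun _ => dist_nonneg) (fun n => (ht (s n) i.1 i.2).le) h0
  refine ⟨c, ?_, ?_⟩
  · exact mem_closure_of_tendsto (hxl.prodMk_nhds hc)
      (Eventually.of_forall fun n => ⟨(t (s n), x' (s n)), rfl⟩)
  · exact mem_closure_of_tendsto (hyl.prodMk_nhds hc')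
      (Eventually.of_forall fun n => ⟨(t (s n), y' (s n)), rfl⟩)

theorem cube_act (h : MinFlow φ) (d : ℕ) (v : Fin d → ℝ) (y : X) (c : NV d → X)
    (hc : (y, c) ∈ CubeCl φ d) : (y, fun i : NV d => φ (cubeForm i.1 v) (c i)) ∈ CubeCl φ d := by
  have hcont : Continuous fun p : X × (NV d → X) =>
      (p.1, fun i : NV d => φ (cubeForm i.1 v) (p.2 i)) :=
    continuous_fst.prodMk ((act_cont h (fun i : NV d => cubeForm i.1) v).comp continuous_snd)
  have hsub : CubeCl φ d ⊆ (fun p : X × (NV d → X) =>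
      (p.1, fun i : NV d => φ (cubeForm i.1 v) (p.2 i))) ⁻¹' CubeCl φ d := by
    refine closure_minimal ?_ (isClosed_closure.preimage hcont)
    rintro _ ⟨⟨w, z⟩, rfl⟩
    refine subset_closure ⟨(v + w, z), ?_⟩
    simp only [map_add, h.add]
  exact hsub hc

theorem cube_replace (h : MinFlow φ) (d : ℕ) : ∀ᶠ x in residual X, ∀ y, (x, y) ∈ RPdFlow φ d →
    ∀ c, (x, c) ∈ CubeCl φ d → (y, c) ∈ CubeCl φ d := by
  have hg := gen_residual (X := X) (Z := NV d → X) (V := Fin d → ℝ)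
    (fun v x => fun i : NV d => φ (cubeForm i.1 v) x)
    (fun v => continuous_pi fun i => h.cont_t _)
  filter_upwards [hg] with x hx y hxy c hc
  obtain ⟨c0, hxc0, hyc0⟩ := rp_common d x y hxy
  have hret := cube_return h x c0 (hx c0 hxc0)
  have hcx := hx c hc
  -- `c` is in the orbit closure of `c0`
  have hsub : closure (range fun v : Fin d → ℝ => fun i : NV d => φ (cubeForm i.1 v) x) ⊆
      closure (range fun v : Fin d → ℝ => fun i : NV d => φ (cubeForm i.1 v) (c0 i)) := by
    refine closure_minimal ?_ isClosed_closure
    rintro _ ⟨w, rfl⟩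
    have h2 := (act_cont h (fun i : NV d => cubeForm i.1) w).continuousOn.image_closure
      (mem_image_of_mem _ hret)
    refine closure_mono ?_ h2
    rintro _ ⟨_, ⟨v, rfl⟩, rfl⟩
    refine ⟨w + v, ?_⟩
    simp only [map_add, h.add]
  have hsub2 : closure (range fun v : Fin d → ℝ => fun i : NV d => φ (cubeForm i.1 v) (c0 i)) ⊆
      (fun c => (y, c)) ⁻¹' CubeCl φ d := by
    refine closure_minimal ?_ (isClosed_closure.preimage (Continuous.prodMk_right y))
    rintro _ ⟨v, rfl⟩
    exact cube_act h d v y c0 hyc0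
  exact hsub2 (hsub hcx)

end Cube

section Rep

set_option linter.unusedSectionVars false

variable {X : Type*} [MetricSpace X] [CompactSpace X] {φ : ℝ → X → X}

/-- Index set. -/
abbrev RI (d : ℕ) := Option (Fin d) × (Fin d → Bool)

/-- Parameter space. -/
abbrev RV (d : ℕ) := ℝ × ℝ × (Fin d → ℝ)

/-- Slopes, with `0` at the base position. -/
def bo {d : ℕ} (b : Fin d → ℝ) (i : Option (Fin d)) : ℝ := i.elim 0 b

/-- Coefficients. -/
noncomputable def kap {d : ℕ} (b : Fin d → ℝ) (i : Option (Fin d)) (j : Fin d) : ℝ :=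
  1 - bo b i / b j

/-- The forms. -/
noncomputable def RF {d : ℕ} (b : Fin d → ℝ) (q : RI d) : RV d →+ ℝ where
  toFun v := v.1 + bo b q.1 * v.2.1 + cubeForm q.2 (fun j => kap b q.1 j * v.2.2 j)
  map_zero' := by
    have : (fun j => kap b q.1 j * (0 : RV d).2.2 j) = 0 := by funext j; simp
    rw [this]; simp
  map_add' v w := by
    have : (fun j => kap b q.1 j * (v + w).2.2 j) =
        (fun j => kap b q.1 j * v.2.2 j) + (fun j => kap b q.1 j * w.2.2 j) := by
      funext j; simp [mul_add]
    rw [this, map_add]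
    simp only [Prod.fst_add, Prod.snd_add]
    ring

theorem RF_apply {d : ℕ} (b : Fin d → ℝ) (q : RI d) (v : RV d) :
    RF b q v = v.1 + bo b q.1 * v.2.1 + cubeForm q.2 (fun j => kap b q.1 j * v.2.2 j) := rfl

/-- The base index. -/
def RO (d : ℕ) : RI d := (none, fun _ => false)

theorem cubeForm_false {d : ℕ} (t : Fin d → ℝ) : cubeForm (fun _ : Fin d => false) t = 0 := by
  change (∑ i : Fin d, if (false = true) then t i else 0) = 0
  simp

theorem cubeForm_update {d : ℕ} (ε : Fin d → Bool) (k : Fin d) (t : Fin d → ℝ) :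
    cubeForm (Function.update ε k true) t = cubeForm ε (Function.update t k 0) + t k := by
  change (∑ i, if Function.update ε k true i then t i else 0) =
    (∑ i, if ε i then Function.update t k 0 i else 0) + t k
  have : t k = ∑ i, if i = k then t i else 0 := by simp
  rw [this, ← Finset.sum_add_distrib]
  refine Finset.sum_congr rfl fun i _ => ?_
  by_cases hi : i = k
  · subst hi; simp
  · simp [hi]

theorem cubeForm_update_false {d : ℕ} (ε : Fin d → Bool) (k : Fin d) (hk : ε k = false)
    (t : Fin d → ℝ) : cubeForm ε (Function.update t k 0) = cubeForm ε t := by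
  change (∑ i, if ε i then Function.update t k 0 i else 0) = ∑ i, if ε i then t i else 0
  refine Finset.sum_congr rfl fun i _ => ?_
  by_cases hi : i = k
  · subst hi; simp [hk]
  · simp [hi]

/-- Raise the `k`-th bit. -/
def rho {d : ℕ} (k : Fin d) (q : RI d) : RI d := (q.1, Function.update q.2 k true)

/-- Parameter change realizing `rho`. -/
noncomputable def Lam {d : ℕ} (b : Fin d → ℝ) (k : Fin d) (v : RV d) : RV d :=
  (v.1 + v.2.2 k, v.2.1 - v.2.2 k / b k, Function.update v.2.2 k 0)

theorem mul_update {d : ℕ} (c s : Fin d → ℝ) (k : Fin d) :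
    (fun j => c j * Function.update s k 0 j) = Function.update (fun j => c j * s j) k 0 := by
  funext j
  by_cases hj : j = k
  · subst hj; simp
  · simp [hj]

theorem RF_rho {d : ℕ} (b : Fin d → ℝ) (k : Fin d) (q : RI d) (v : RV d) :
    RF b (rho k q) v = RF b q (Lam b k v) := by
  rw [RF_apply, RF_apply]
  simp only [rho, Lam]
  rw [cubeForm_update, mul_update]
  simp only [kap]
  ring

theorem RF_rho_false {d : ℕ} (b : Fin d → ℝ) (k : Fin d) (q : RI d) (hq : q.2 k = false)
    (v : RV d) : RF b (rho k q) v = RF b q v + kap b q.1 k * v.2.2 k := by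
  rw [RF_apply, RF_apply]
  simp only [rho]
  rw [cubeForm_update, cubeForm_update_false _ _ hq]
  ring

/-- The correcting parameter. -/
noncomputable def gpar {d : ℕ} (b : Fin d → ℝ) (k : Fin d) (s : ℝ) : RV d := (-s, s / b k, 0)

theorem RF_gpar {d : ℕ} (b : Fin d → ℝ) (k : Fin d) (s : ℝ) (q : RI d) :
    RF b q (gpar b k s) = - (kap b q.1 k * s) := by
  rw [RF_apply]
  have : (fun j => kap b q.1 j * (gpar b k s).2.2 j) = 0 := by funext j; simp [gpar]
  rw [this, map_zero]
  simp only [gpar, kap]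
  ring

theorem kap_self {d : ℕ} (b : Fin d → ℝ) (hb : ∀ i, b i ≠ 0) (k : Fin d) :
    kap b (some k) k = 0 := by
  simp [kap, bo, div_self (hb k)]

theorem kap_none {d : ℕ} (b : Fin d → ℝ) (k : Fin d) : kap b none k = 1 := by
  simp [kap, bo]

/-- Positions below `k`. -/
def low {d : ℕ} (k : ℕ) (i : Option (Fin d)) : Prop := ∀ j, i = some j → (j : ℕ) < k

/-- The index sets `S_k`. -/
def SS {d : ℕ} (k : ℕ) : Set (RI d) := {q | low k q.1 ∧ ∀ j : Fin d, (j : ℕ) < k → q.2 j = false}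

/-- The index sets `J_k`. -/
def JJ {d : ℕ} (k : Fin d) : Set (RI d) := {q | q ∈ SS (k : ℕ) ∧ q.2 k = true}

/-- The inductive statement. -/
def St {d : ℕ} (φ : ℝ → X → X) (b : Fin d → ℝ) (m : RI d → X) (y : X) (k : ℕ) : Prop :=
  ∀ δ > 0, ∃ (v : RV d) (z : X), dist (φ (RF b (RO d) v) z) y < δ ∧
    ∀ q ∈ SS (d := d) k, q ≠ RO d → dist (φ (RF b q v) z) (m q) < δ

theorem Mset_approx {V ι : Type*} [AddCommGroup V] [Fintype ι] (F : ι → V →+ ℝ) (m : ι → X)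
    (hm : m ∈ Mset φ F) (δ : ℝ) (hδ : 0 < δ) : ∃ v z, ∀ i, dist (φ (F i v) z) (m i) < δ := by
  obtain ⟨_, ⟨⟨v, z⟩, rfl⟩, hd⟩ := Metric.mem_closure_iff.1 hm δ hδ
  refine ⟨v, z, fun i => ?_⟩
  rw [dist_comm]
  exact (dist_pi_lt_iff hδ).1 hd i

theorem st_step (h : MinFlow φ) {d : ℕ} (b : Fin d → ℝ) (hb : ∀ i, b i ≠ 0) (m : RI d → X)
    (hm : m ∈ Mset φ (RF b)) (y : X) (k : Fin d)
    (hgood : ∀ W' ∈ 𝓝 m, ∃ U ∈ 𝓝 (fun i : JJ k => m i), ∀ c ∈ Mset φ (fun i : JJ k => RF b i),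
        c ∈ U → ∃ m'' ∈ Mset φ (RF b), m'' ∈ W' ∧ ∀ i : JJ k, m'' i = c i)
    (hst : St φ b m y k) : St φ b m y (k + 1) := by
  classical
  intro δ hδ
  obtain ⟨U, hU, hgood⟩ := hgood (Metric.ball m (δ / 2)) (Metric.ball_mem_nhds _ (half_pos hδ))
  obtain ⟨δ', hδ', hball⟩ := Metric.mem_nhds_iff.1 hU
  obtain ⟨v, z, hvy, hvm⟩ := hst (min δ' (δ / 2)) (lt_min hδ' (half_pos hδ))
  obtain ⟨m2, hm2, hm2b, hm2c⟩ := hgood (fun i : JJ k => φ (RF b i v) z)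
    (pt_mem (fun i : JJ k => RF b i) v z) (hball (by
      rw [Metric.mem_ball, dist_pi_lt_iff hδ']
      intro i
      have hne : i.1 ≠ RO d := by
        intro hi
        have := i.2.2
        rw [hi] at this
        simp [RO] at this
      exact (hvm i.1 i.2.1 hne).trans_le (min_le_left _ _)))
  have hm2d : ∀ q, dist (m2 q) (m q) < δ / 2 := (dist_pi_lt_iff (half_pos hδ)).1 hm2b
  -- the corrected point
  have hm3 : (fun q => φ (RF b (rho k q) (gpar b k (v.2.2 k))) (m2 (rho k q))) ∈
      Mset φ (RF b) := by
    refine Mset_map (RF b) (Mset_closed (RF b))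
      (fun m2 q => φ (RF b (rho k q) (gpar b k (v.2.2 k))) (m2 (rho k q)))
      (continuous_pi fun q => (h.cont_t _).comp (continuous_apply (rho k q))) ?_ m2 hm2
    intro w z'
    simp only [← h.add, ← map_add, RF_rho]
    exact pt_mem (RF b) _ z'
  obtain ⟨v', z', hv'⟩ := Mset_approx (RF b) _ hm3 (δ / 2) (half_pos hδ)
  -- values on coordinates below `k`
  have hval : ∀ q ∈ SS (d := d) (k : ℕ), q.2 k = false →
      φ (RF b (rho k q) (gpar b k (v.2.2 k))) (m2 (rho k q)) = φ (RF b q v) z := by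
    intro q hq hqk
    have hJ : rho k q ∈ JJ k := by
      refine ⟨⟨hq.1, fun j hj => ?_⟩, ?_⟩
      · have : j ≠ k := by rintro rfl; exact lt_irrefl _ hj
        simp only [rho, Function.update_of_ne this]
        exact hq.2 j hj
      · simp [rho]
    rw [hm2c ⟨_, hJ⟩, ← h.add, RF_gpar, RF_rho_false b k q hqk]
    congr 1
    simp only [rho]
    ring
  refine ⟨v', z', ?_, ?_⟩
  · have h1 := hv' (RO d)
    rw [hval (RO d) ⟨fun j hj => by simp [RO] at hj, fun j _ => rfl⟩ rfl] at h1
    calc dist (φ (RF b (RO d) v') z') y ≤ _ := dist_triangle _ _ _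
      _ < δ / 2 + δ / 2 := add_lt_add h1 (hvy.trans_le (min_le_right _ _))
      _ = δ := add_halves δ
  · intro q hq hqo
    have h1 := hv' q
    have hqk : q.2 k = false := hq.2 k (Nat.lt_succ_self _)
    have h2 : dist (φ (RF b (rho k q) (gpar b k (v.2.2 k))) (m2 (rho k q))) (m q) < δ / 2 := by
      by_cases hlow : low (k : ℕ) q.1
      · have hqS : q ∈ SS (d := d) (k : ℕ) := ⟨hlow, fun j hj => hq.2 j (Nat.lt_succ_of_lt hj)⟩
        rw [hval q hqS hqk]
        exact (hvm q hqS hqo).trans_le (min_le_right _ _)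
      · have hqs : q.1 = some k := by
          unfold low at hlow
          push Not at hlow
          obtain ⟨j, hj, hjk⟩ := hlow
          have := hq.1 j hj
          have : j = k := Fin.ext (by omega)
          rw [hj, this]
        have hk0 : kap b q.1 k = 0 := by rw [hqs]; exact kap_self b hb k
        have h3 : RF b (rho k q) (gpar b k (v.2.2 k)) = 0 := by
          rw [RF_gpar]
          simp only [rho, hk0]
          ring
        rw [h3, h.zero]
        have h4 : m (rho k q) = m q := by
          have hcl : IsClosed {m : RI d → X | m (rho k q) = m q} :=
            isClosed_eq (continuous_apply _) (continuous_apply _)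
          refine Mset_map (RF b) hcl id continuous_id ?_ m hm
          intro w z''
          change φ (RF b (rho k q) w) z'' = φ (RF b q w) z''
          rw [RF_rho_false b k q hqk, hk0, zero_mul, add_zero]
        rw [← h4]
        exact hm2d _
    calc dist (φ (RF b q v') z') (m q) ≤ _ := dist_triangle _ _ _
      _ < δ / 2 + δ / 2 := add_lt_add h1 h2
      _ = δ := add_halves δ

theorem RF_RO {d : ℕ} (b : Fin d → ℝ) (v : RV d) : RF b (RO d) v = v.1 := by
  rw [RF_apply]
  simp [RO, bo, cubeForm_false]

theorem RF_none {d : ℕ} (b : Fin d → ℝ) (ε : Fin d → Bool) (v : RV d) :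
    RF b (none, ε) v = cubeForm ε v.2.2 + v.1 := by
  rw [RF_apply]
  simp only [kap_none, one_mul]
  simp [bo, add_comm]

theorem RF_some {d : ℕ} (b : Fin d → ℝ) (i : Fin d) (v : RV d) :
    RF b (some i, fun _ => false) v = b i * v.2.1 + v.1 := by
  rw [RF_apply]
  simp [bo, cubeForm_false, add_comm]

/-- The closure relation with base position. -/
def Nb {d : ℕ} (φ : ℝ → X → X) (b : Fin d → ℝ) : Set (X × (Fin d → X)) :=
  closure (range fun p : ℝ × X => (p.2, fun i => φ (b i * p.1) p.2))

theorem st_zero (h : MinFlow φ) {d : ℕ} (b : Fin d → ℝ) (m : RI d → X)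
    (hm : m ∈ Mset φ (RF b)) (x y : X) (hmx : m (RO d) = x)
    (hcube : ∀ c, (x, c) ∈ CubeCl φ d → (y, c) ∈ CubeCl φ d) : St φ b m y 0 := by
  classical
  have h1 : (m (RO d), fun ε : NV d => m (none, ε.1)) ∈ CubeCl φ d := by
    refine Mset_map (RF b) isClosed_closure (fun m => (m (RO d), fun ε : NV d => m (none, ε.1)))
      ((continuous_apply _).prodMk (continuous_pi fun ε => continuous_apply _)) ?_ m hm
    intro v z
    refine subset_closure ⟨(v.2.2, φ v.1 z), ?_⟩
    simp only [RF_RO, RF_none, h.add]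
  rw [hmx] at h1
  have h2 := hcube _ h1
  intro δ hδ
  obtain ⟨_, ⟨⟨t, z⟩, rfl⟩, hd⟩ := Metric.mem_closure_iff.1 h2 δ hδ
  rw [Prod.dist_eq, max_lt_iff] at hd
  obtain ⟨hd1, hd2⟩ := hd
  refine ⟨(0, 0, t), z, ?_, ?_⟩
  · rw [RF_RO, h.zero, dist_comm]; exact hd1
  · rintro ⟨i, ε⟩ hq hqo
    have hi : i = none := by
      cases i with
      | none => rfl
      | some j => exact absurd (hq.1 j rfl) (Nat.not_lt_zero _)
    subst hi
    have hε : ε ≠ fun _ => false := by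
      rintro rfl
      exact hqo rfl
    rw [RF_none, dist_comm]
    have := (dist_pi_lt_iff hδ).1 hd2 ⟨ε, hε⟩
    simpa using this

theorem st_final (h : MinFlow φ) {d : ℕ} (b : Fin d → ℝ) (m : RI d → X) (y : X)
    (hst : St φ b m y d) : (y, fun i => m (some i, fun _ => false)) ∈ Nb φ b := by
  classical
  refine Metric.mem_closure_iff.2 fun δ hδ => ?_
  obtain ⟨v, z, hy, hq⟩ := hst δ hδ
  refine ⟨_, ⟨(v.2.1, φ v.1 z), rfl⟩, ?_⟩
  rw [Prod.dist_eq, max_lt_iff]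
  constructor
  · rw [RF_RO] at hy
    rw [dist_comm]; exact hy
  · rw [dist_pi_lt_iff hδ]
    intro i
    have := hq (some i, fun _ => false) ⟨fun j _ => j.2, fun _ _ => rfl⟩ (by simp [RO])
    rw [RF_some, h.add, dist_comm] at this
    exact this

theorem rep (h : MinFlow φ) {d : ℕ} (b : Fin d → ℝ) (hb : ∀ i, b i ≠ 0) :
    ∀ᶠ x in residual X, ∀ y, (x, y) ∈ RPdFlow φ d → ∀ c, (x, c) ∈ Nb φ b → (y, c) ∈ Nb φ b := by
  classical
  have hgf := good_fiber h (RF b) (fun a => ((a, 0, 0) : RV d)) (by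
    intro q a
    rw [RF_apply]
    have : (fun j => kap b q.1 j * ((a, 0, 0) : RV d).2.2 j) = 0 := by funext j; simp
    rw [this]; simp) (RO d) (fun k : Fin d => JJ k)
  filter_upwards [cube_replace h d, hgf] with x hx1 hx2 y hxy c hc
  -- lift
  obtain ⟨m0, hm0, hm0e⟩ : ∃ m0 ∈ Mset φ (RF b),
      (m0 (RO d), fun i => m0 (some i, fun _ => false)) = (x, c) := by
    have hcont : Continuous fun m : RI d → X =>
        (m (RO d), fun i : Fin d => m (some i, fun _ => false)) :=
      (continuous_apply _).prodMk (continuous_pi fun i => continuous_apply _)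
    have hcl := ((Mset_closed (φ := φ) (RF b)).isCompact.image hcont).isClosed
    refine closure_minimal ?_ hcl hc
    rintro _ ⟨⟨r, z⟩, rfl⟩
    refine ⟨_, pt_mem (RF b) ((0, r, 0) : RV d) z, ?_⟩
    simp only [RF_RO, RF_some, h.zero, add_zero]
  have hm0x : m0 (RO d) = x := congrArg Prod.fst hm0e
  have hm0c : (fun i => m0 (some i, fun _ => false)) = c := congrArg Prod.snd hm0e
  have hcl : IsClosed (Nb φ b) := isClosed_closure
  rw [← hcl.closure_eq, Metric.mem_closure_iff]
  intro δ hδ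
  obtain ⟨m, hm, hmx, hmW, hgood⟩ := hx2 m0 hm0 hm0x _ (Metric.ball_mem_nhds m0 hδ)
  have hst : ∀ k : ℕ, k ≤ d → St φ b m y k := by
    intro k
    induction k with
    | zero => intro _; exact st_zero h b m hm x y hmx (hx1 y hxy)
    | succ k ih =>
      intro hk
      exact st_step h b hb m hm y ⟨k, hk⟩ (hgood ⟨k, hk⟩) (ih (Nat.le_of_succ_le hk))
  refine ⟨_, st_final h b m y (hst d le_rfl), ?_⟩
  rw [Prod.dist_eq, max_lt_iff]
  refine ⟨by simpa using hδ, ?_⟩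
  rw [dist_pi_lt_iff hδ]
  intro i
  rw [← hm0c, dist_comm]
  exact (dist_pi_lt_iff hδ).1 hmW _

end Rep

section Final

variable {X : Type*} [MetricSpace X] [CompactSpace X] {φ : ℝ → X → X}

/-- Slopes seen from position `j`. -/
def shiftSlope {d : ℕ} (α : Fin d → ℝ) (j : Fin d) (i : Fin d) : ℝ :=
  if i = j then - α j else α i - α j

/-- Exchange the base position with position `j`. -/
def swapPos {d : ℕ} (j : Fin d) (p : X × (Fin d → X)) : X × (Fin d → X) :=
  (p.2 j, Function.update p.2 j p.1)

theorem swapPos_cont {d : ℕ} (j : Fin d) : Continuous (swapPos (X := X) j) :=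
  ((continuous_apply j).comp continuous_snd).prodMk (continuous_snd.update j continuous_fst)

theorem swap_to (h : MinFlow φ) {d : ℕ} (α : Fin d → ℝ) (j : Fin d) (p : X × (Fin d → X))
    (hp : p ∈ Nb φ α) : swapPos j p ∈ Nb φ (shiftSlope α j) := by
  have hcl : IsClosed (Nb φ (shiftSlope α j)) := isClosed_closure
  refine closure_minimal ?_ (hcl.preimage (swapPos_cont j)) hp
  rintro _ ⟨⟨r, z⟩, rfl⟩
  refine subset_closure ⟨(r, φ (α j * r) z), ?_⟩
  refine Prod.ext rfl ?_
  funext i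
  by_cases hi : i = j
  · subst hi
    simp only [swapPos, shiftSlope, if_true, Function.update_self, ← h.add]
    rw [show -α i * r + α i * r = 0 by ring, h.zero]
  · simp only [swapPos, shiftSlope, hi, if_false, Function.update_of_ne (Ne.intro hi), ← h.add]
    congr 1
    ring

theorem swap_from (h : MinFlow φ) {d : ℕ} (α : Fin d → ℝ) (j : Fin d) (p : X × (Fin d → X))
    (hp : p ∈ Nb φ (shiftSlope α j)) : swapPos j p ∈ Nb φ α := by
  have hcl : IsClosed (Nb φ α) := isClosed_closure
  refine closure_minimal ?_ (hcl.preimage (swapPos_cont j)) hp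
  rintro _ ⟨⟨r, z⟩, rfl⟩
  refine subset_closure ⟨(r, φ (-α j * r) z), ?_⟩
  refine Prod.ext ?_ ?_
  · simp [swapPos, shiftSlope]
  funext i
  by_cases hi : i = j
  · subst hi
    simp only [swapPos, Function.update_self, ← h.add]
    rw [show α i * r + -α i * r = 0 by ring, h.zero]
  · simp only [swapPos, shiftSlope, hi, if_false, Function.update_of_ne (Ne.intro hi), ← h.add]
    congr 1
    ring

theorem rep_all (h : MinFlow φ) {d : ℕ} (α : Fin d → ℝ) (hαinj : Function.Injective α)
    (hα0 : ∀ i, α i ≠ 0) : ∀ᶠ x in residual X, ∀ j : Fin d, ∀ y, (x, y) ∈ RPdFlow φ d →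
      ∀ z0 f, (z0, f) ∈ Nb φ α → f j = x → (z0, Function.update f j y) ∈ Nb φ α := by
  rw [eventually_countable_forall]
  intro j
  have hb : ∀ i, shiftSlope α j i ≠ 0 := by
    intro i
    unfold shiftSlope
    split_ifs with hi
    · exact neg_ne_zero.2 (hα0 j)
    · exact sub_ne_zero.2 fun he => hi (hαinj he)
  filter_upwards [rep h _ hb] with x hx y hxy z0 f hf hfj
  have h1 := swap_to h α j _ hf
  simp only [swapPos, hfj] at h1
  have h2 := swap_from h α j _ (hx y hxy _ h1)
  simpa [swapPos] using h2

theorem final_residual (h : MinFlow φ) {d : ℕ} (α : Fin d → ℝ) (hαinj : Function.Injective α)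
    (hα0 : ∀ i, α i ≠ 0) : ∀ᶠ x in residual X, ∀ f : Fin d → X,
      (∀ i, (x, f i) ∈ RPdFlow φ d) →
      f ∈ closure (Set.range fun t : ℝ => fun i => φ (α i * t) x) := by
  have hg := gen_residual (X := X) (Z := Fin d → X) (V := ℝ)
    (fun t x => fun i => φ (α i * t) x) (fun t => continuous_pi fun i => h.cont_t _)
  filter_upwards [rep_all h α hαinj hα0, hg] with x hx hgx f hf
  apply hgx
  have key : ∀ s : Finset (Fin d), (x, fun i => if i ∈ s then f i else x) ∈ Nb φ α := by
    intro s
    induction s using Finset.induction_on with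
    | empty =>
      refine subset_closure ⟨(0, x), ?_⟩
      simp [h.zero]
    | insert j s hj ih =>
      have h1 := hx j (f j) (hf j) _ _ ih (by simp [hj])
      have h2 : (fun i => if i ∈ insert j s then f i else x) =
          Function.update (fun i => if i ∈ s then f i else x) j (f j) := by
        funext i
        by_cases hi : i = j
        · subst hi; simp
        · simp [hi]
      rw [h2]
      exact h1
  have h3 := key Finset.univ
  simp only [Finset.mem_univ, if_true] at h3
  exact h3

end Final

end FlowHelpers

/-- Let `(X,{T^t})` be a minimal `ℝ`-flow, `d ∈ ℕ`, and `π : X → Y` a factor map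
between minimal `ℝ`-flows with `R_π = RP^[d](X,ℝ)`. Then for any distinct nonzero
reals `α₁,…,α_d` there is a dense `Gδ` set `Ω ⊆ X` such that for every `x ∈ Ω`,
`(π⁻¹(π(x)))^d ⊆ cl{(T^{α₁ t} x, …, T^{α_d t} x) : t ∈ ℝ}`. -/
theorem fiber_power_subset_orbit_closure_of_pronilfactor
    {X Y : Type*} [MetricSpace X] [CompactSpace X] [MetricSpace Y] [CompactSpace Y]
    (φ : ℝ → X → X) (ψ : ℝ → Y → Y)
    (hφcont : Continuous fun p : ℝ × X => φ p.1 p.2)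
    (hφ0 : ∀ x, φ 0 x = x) (hφadd : ∀ s t x, φ (s + t) x = φ s (φ t x))
    (hψcont : Continuous fun p : ℝ × Y => ψ p.1 p.2)
    (hψ0 : ∀ y, ψ 0 y = y) (hψadd : ∀ s t y, ψ (s + t) y = ψ s (ψ t y))
    (hXmin : ∀ x : X, Dense (Set.range fun t : ℝ => φ t x))
    (hYmin : ∀ y : Y, Dense (Set.range fun t : ℝ => ψ t y))
    (π : X → Y) (hπcont : Continuous π) (hπsurj : Function.Surjective π)
    (hπfac : ∀ (t : ℝ) (x : X), π (φ t x) = ψ t (π x))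
    (d : ℕ) (hRP : {p : X × X | π p.1 = π p.2} = RPdFlow φ d)
    (α : Fin d → ℝ) (hαinj : Function.Injective α) (hα0 : ∀ i, α i ≠ 0) :
    ∃ Ω : Set X, Dense Ω ∧ IsGδ Ω ∧ ∀ x ∈ Ω, ∀ f : Fin d → X,
      (∀ i, π (f i) = π x) →
      f ∈ closure (Set.range fun t : ℝ => fun i => φ (α i * t) x) := by
  have h : MinFlow φ := ⟨hφcont, hφ0, hφadd, hXmin⟩
  obtain ⟨Ω, hsub, hG, hD⟩ := mem_residual.1 (final_residual h α hαinj hα0)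
  refine ⟨Ω, hD, hG, fun x hx f hf => hsub hx f fun i => ?_⟩
  rw [← hRP]
  exact (hf i).symm
end

section
/- Let (X,{T^t}_{t∈ℝ}) be a minimal ℝ-flow and let π:(X,{T^t})→(Y,{T^t}) be a factor map onto a minimal equicontinuous ℝ-flow with R_π = RP(X,ℝ) (so that Y is the maximal equicontinuous factor of X). Then for each t ∈ ℝ∖{0}, the discrete system (X,T^t) is minimal if and only if (Y,T^t) is minimal. -/
/-- The regionally proximal relation of an `ℝ`-flow `φ` on a metric space `X`:
`(x,y) ∈ RP(X,ℝ)` iff for every `ε > 0` there are `x', y' ∈ X` and `t ∈ ℝ` with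
`dist x x' < ε`, `dist y y' < ε` and `dist (T^t x') (T^t y') < ε`. -/
def RPFlow {X : Type*} [MetricSpace X] (φ : ℝ → X → X) : Set (X × X) :=
  {p | ∀ ε > 0, ∃ x' y' : X, ∃ t : ℝ,
    dist p.1 x' < ε ∧ dist p.2 y' < ε ∧ dist (φ t x') (φ t y') < ε}

/-- Existence of a minimal nonempty closed invariant set for a family of maps. -/
lemma exists_minimal_inv {X ι : Type*} [TopologicalSpace X] [CompactSpace X] [Nonempty X]
    (f : ι → X → X) :
    ∃ M : Set X, IsClosed M ∧ M.Nonempty ∧ (∀ i, ∀ x ∈ M, f i x ∈ M) ∧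
      ∀ N : Set X, IsClosed N → N.Nonempty → (∀ i, ∀ x ∈ N, f i x ∈ N) → N ⊆ M → N = M := by
  let S : Set (Set X) := {N | IsClosed N ∧ N.Nonempty ∧ ∀ i, ∀ x ∈ N, f i x ∈ N}
  obtain ⟨M, hM⟩ := zorn_superset S (by
    intro c hc hchain
    rcases c.eq_empty_or_nonempty with rfl | hne
    · exact ⟨Set.univ, ⟨isClosed_univ, Set.univ_nonempty, fun _ _ _ => trivial⟩, by simp⟩
    · refine ⟨⋂₀ c, ⟨isClosed_sInter fun s hs => (hc hs).1, ?_, ?_⟩,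
        fun s hs => Set.sInter_subset_of_mem hs⟩
      · exact IsCompact.nonempty_sInter_of_directed_nonempty_isCompact_isClosed
          (hS := hne.to_subtype) (fun a ha b hb => by
            rcases hchain.total ha hb with h | h
            · exact ⟨a, ha, subset_rfl, h⟩
            · exact ⟨b, hb, h, subset_rfl⟩) (fun s hs => (hc hs).2.1)
          (fun s hs => (hc hs).1.isCompact) (fun s hs => (hc hs).1)
      · intro i x hx s hs
        exact (hc hs).2.2 i x (hx s hs))
  refine ⟨M, hM.prop.1, hM.prop.2.1, hM.prop.2.2, fun N h1 h2 h3 h4 => ?_⟩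
  exact le_antisymm h4 (hM.le_of_le (⟨h1, h2, h3⟩ : N ∈ S) h4)

/-- Let `(X,{T^t})` be a minimal `ℝ`-flow and let `π : X → Y` be a factor map onto
a minimal equicontinuous `ℝ`-flow with `R_π = RP(X,ℝ)` (so `Y` is the maximal
equicontinuous factor of `X`). Then for each `t ≠ 0`, the discrete system
`(X,T^t)` is minimal iff `(Y,T^t)` is minimal. -/
theorem time_t_minimal_iff_minimal_on_max_equicontinuous_factor
    {X Y : Type*} [MetricSpace X] [CompactSpace X] [MetricSpace Y] [CompactSpace Y]
    (φ : ℝ → X → X) (ψ : ℝ → Y → Y)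
    (hφcont : Continuous fun p : ℝ × X => φ p.1 p.2)
    (hφ0 : ∀ x, φ 0 x = x) (hφadd : ∀ s t x, φ (s + t) x = φ s (φ t x))
    (hψcont : Continuous fun p : ℝ × Y => ψ p.1 p.2)
    (hψ0 : ∀ y, ψ 0 y = y) (hψadd : ∀ s t y, ψ (s + t) y = ψ s (ψ t y))
    (hXmin : ∀ x : X, Dense (Set.range fun t : ℝ => φ t x))
    (hYmin : ∀ y : Y, Dense (Set.range fun t : ℝ => ψ t y))
    (hYeq : ∀ ε > 0, ∃ δ > 0, ∀ y₁ y₂ : Y, dist y₁ y₂ < δ →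
      ∀ t : ℝ, dist (ψ t y₁) (ψ t y₂) < ε)
    (π : X → Y) (hπcont : Continuous π) (hπsurj : Function.Surjective π)
    (hπfac : ∀ (t : ℝ) (x : X), π (φ t x) = ψ t (π x))
    (hπfib : {p : X × X | π p.1 = π p.2} = RPFlow φ)
    (t : ℝ) (ht : t ≠ 0) :
    (∀ x : X, Dense (Set.range fun n : ℤ => φ (n * t) x)) ↔
    (∀ y : Y, Dense (Set.range fun n : ℤ => ψ (n * t) y)) := by
  have hφs : ∀ s, Continuous (φ s) := fun s => hφcont.comp (by fun_prop : Continuous fun x : X => (s, x))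
  have hψs : ∀ s, Continuous (ψ s) := fun s => hψcont.comp (by fun_prop : Continuous fun x : Y => (s, x))
  constructor
  · intro h y
    obtain ⟨x, rfl⟩ := hπsurj y
    have h2 := hπsurj.denseRange.dense_image hπcont (h x)
    rw [← Set.range_comp] at h2
    convert h2 using 2
    funext n
    simp [hπfac]
  intro hY x₀
  haveI : Nonempty X := ⟨x₀⟩
  obtain ⟨M, hMc, ⟨m₀, hm₀⟩, hMi, hMm⟩ := exists_minimal_inv (fun n : ℤ => φ (n * t))
  -- returning sets
  have key : ∀ c : ℝ, ∀ u ∈ M, φ c u ∈ M → ∀ v ∈ M, φ c v ∈ M := by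
    intro c u hu hcu v hv
    have := hMm (M ∩ φ c ⁻¹' M) (hMc.inter (hMc.preimage (hφs c))) ⟨u, hu, hcu⟩ (by
      rintro n x ⟨hx, hcx⟩
      refine ⟨hMi n x hx, ?_⟩
      have := hMi n _ hcx
      simp only [Set.mem_preimage] at *
      rwa [← hφadd, add_comm, hφadd] ) Set.inter_subset_left
    rw [← this] at hv
    exact hv.2
  have hinv : ∀ c x, φ (-c) (φ c x) = x := by
    intro c x; rw [← hφadd]; simp [hφ0]
  have red : ∀ s : ℝ, ∃ r ∈ Set.Icc (-|t|) |t|, ∃ n : ℤ, s = r + n * t := by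
    intro s
    refine ⟨Int.fract (s / t) * t, ?_, ⌊s / t⌋, ?_⟩
    · rw [Set.mem_Icc, ← abs_le, abs_mul, abs_of_nonneg (Int.fract_nonneg _)]
      exact mul_le_of_le_one_left (abs_nonneg _) (Int.fract_lt_one _).le
    · rw [← add_mul, Int.fract_add_floor]; field_simp
  have cover : ∀ z : X, ∃ a ∈ Set.Icc (-|t|) |t|, ∃ m ∈ M, φ a m = z := by
    have hK : IsCompact ((fun p : ℝ × X => φ p.1 p.2) '' (Set.Icc (-|t|) |t| ×ˢ M)) :=
      (isCompact_Icc.prod hMc.isCompact).image hφcont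
    have hsub : Set.range (fun s : ℝ => φ s m₀) ⊆
        (fun p : ℝ × X => φ p.1 p.2) '' (Set.Icc (-|t|) |t| ×ˢ M) := by
      rintro _ ⟨s, rfl⟩
      obtain ⟨r, hr, n, rfl⟩ := red s
      exact ⟨(r, φ (n * t) m₀), ⟨hr, hMi n _ hm₀⟩, by simp [hφadd]⟩
    intro z
    have hz := hK.isClosed.closure_subset_iff.2 hsub (hXmin m₀ z)
    obtain ⟨⟨a, m⟩, ⟨ha, hm⟩, h⟩ := hz
    exact ⟨a, ha, m, hm, h⟩
  have sat : ∀ x ∈ M, ∀ y, π x = π y → y ∈ M := by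
    intro x hx y hxy
    have hRP : (x, y) ∈ RPFlow φ := by rw [← hπfib]; exact hxy
    let I := Set.Icc (-|t|) |t|
    let K : Set ((ℝ × ℝ × ℝ) × (X × X × X × X)) := (I ×ˢ I ×ˢ I) ×ˢ (M ×ˢ M ×ˢ M ×ˢ M)
    have hIc : IsCompact I := isCompact_Icc
    have hMk := hMc.isCompact
    have hK : IsCompact K :=
      (hIc.prod (hIc.prod hIc)).prod (hMk.prod (hMk.prod (hMk.prod hMk)))
    have h0I : (0 : ℝ) ∈ I := by simp [I]
    let F : ((ℝ × ℝ × ℝ) × (X × X × X × X)) → ℝ := fun p =>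
      dist x (φ p.1.1 p.2.1) + dist y (φ p.1.2.1 p.2.2.1) +
        dist (φ (p.1.2.2 + p.1.1) p.2.2.2.1) (φ (p.1.2.2 + p.1.2.1) p.2.2.2.2)
    have hc : ∀ {Z : Type _} [TopologicalSpace Z] (f : Z → ℝ) (g : Z → X), Continuous f →
        Continuous g → Continuous fun z => φ (f z) (g z) := fun f g hf hg =>
      hφcont.comp (hf.prodMk hg)
    have hF : Continuous F := by
      refine ((continuous_const.dist (hc _ _ ?_ ?_)).add
        (continuous_const.dist (hc _ _ ?_ ?_))).add ((hc _ _ ?_ ?_).dist (hc _ _ ?_ ?_)) <;> fun_prop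
    obtain ⟨p, hp, hmin⟩ := hK.exists_isMinOn
      ⟨((0, 0, 0), (m₀, m₀, m₀, m₀)), by simp [K, h0I, hm₀]⟩ hF.continuousOn
    have hle : F p ≤ 0 := by
      refine le_of_forall_pos_le_add fun ε hε => ?_
      obtain ⟨x', y', s, h1, h2, h3⟩ := hRP (ε / 3) (by positivity)
      obtain ⟨a, ha, m, hm, rfl⟩ := cover x'
      obtain ⟨b, hb, m', hm', rfl⟩ := cover y'
      obtain ⟨r, hr, n, rfl⟩ := red s
      have hq : (((a, b, r), (m, m', φ (n * t) m, φ (n * t) m')) :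
          (ℝ × ℝ × ℝ) × (X × X × X × X)) ∈ K :=
        ⟨⟨ha, hb, hr⟩, hm, hm', hMi n _ hm, hMi n _ hm'⟩
      have := hmin hq
      have e : ∀ c w, φ (r + c) (φ (n * t) w) = φ (r + n * t) (φ c w) := by
        intro c w; rw [← hφadd, ← hφadd]; congr 1; ring
      simp only [Set.mem_setOf_eq] at this
      refine this.trans ?_
      simp only [F, e]
      simp only at h1 h2
      linarith
    obtain ⟨⟨a, b, s⟩, m, m', u, v⟩ := p
    obtain ⟨-, hm, hm', hu, hv⟩ := hp
    simp only [F] at hle hm hm' hu hv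
    have d1 := @dist_nonneg _ _ x (φ a m)
    have d2 := @dist_nonneg _ _ y (φ b m')
    have d3 := @dist_nonneg _ _ (φ (s + a) u) (φ (s + b) v)
    have e1 : x = φ a m := dist_le_zero.1 (by linarith)
    have e2 : y = φ b m' := dist_le_zero.1 (by linarith)
    have e3 : φ (s + a) u = φ (s + b) v := dist_le_zero.1 (by linarith)
    have e4 : φ (b - a) v = u := by
      have := congrArg (φ (-(s + a))) e3
      rw [hinv, ← hφadd] at this
      rw [this]; congr 1; ring
    have h5 : φ (b - a) m' ∈ M := key _ v hv (e4 ▸ hu) _ hm'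
    have h6 : φ a (φ (b - a) m') ∈ M := key a m hm (e1 ▸ hx) _ h5
    rw [← hφadd, add_sub_cancel] at h6
    rwa [e2]
  have hMuniv : M = Set.univ := by
    have himg : IsClosed (π '' M) := (hMc.isCompact.image hπcont).isClosed
    refine Set.eq_univ_of_forall fun z => ?_
    have hsub : Set.range (fun n : ℤ => ψ (n * t) (π m₀)) ⊆ π '' M := by
      rintro _ ⟨n, rfl⟩
      exact ⟨_, hMi n _ hm₀, hπfac _ _⟩
    obtain ⟨w, hw, hwz⟩ := himg.closure_subset_iff.2 hsub (hY (π m₀) (π z))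
    exact sat w hw z hwz
  have hfin := hMm (closure (Set.range fun n : ℤ => φ (n * t) x₀)) isClosed_closure
    ⟨_, subset_closure ⟨0, rfl⟩⟩ (by
      intro n z hz
      refine map_mem_closure (hφs _) hz ?_
      rintro _ ⟨k, rfl⟩
      refine ⟨n + k, ?_⟩
      simp only
      rw [← hφadd]; congr 1; push_cast; ring) (by rw [hMuniv]; exact Set.subset_univ _)
  rw [dense_iff_closure_eq, hfin, hMuniv]
end

section
/- If (X,{T^t}_{t∈ℝ}) is a minimal ℝ-flow that is weakly mixing, then for each t ∈ ℝ∖{0} the discrete system (X,T^t) is minimal and weakly mixing. -/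
/-- The set of return times from `U` to `V`. -/
def retTimes {X : Type*} (φ : ℝ → X → X) (U V : Set X) : Set ℝ := {s | ∃ x ∈ U, φ s x ∈ V}

theorem ret_inter {X : Type*} [MetricSpace X]
    (φ : ℝ → X → X)
    (hc : ∀ s, Continuous (φ s))
    (hφadd : ∀ s t x, φ (s + t) x = φ s (φ t x))
    (hwm : ∀ U V : Set (X × X), IsOpen U → IsOpen V → U.Nonempty → V.Nonempty →
      ∃ t : ℝ, (((fun p : X × X => (φ t p.1, φ t p.2)) '' U) ∩ V).Nonempty)
    {U₁ V₁ U₂ V₂ : Set X} (hU₁ : IsOpen U₁) (hV₁ : IsOpen V₁) (hU₂ : IsOpen U₂) (hV₂ : IsOpen V₂)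
    (nU₁ : U₁.Nonempty) (nV₁ : V₁.Nonempty) (nU₂ : U₂.Nonempty) (nV₂ : V₂.Nonempty) :
    ∃ A B : Set X, IsOpen A ∧ IsOpen B ∧ A.Nonempty ∧ B.Nonempty ∧
      ∀ s ∈ retTimes φ A B, s ∈ retTimes φ U₁ V₁ ∧ s ∈ retTimes φ U₂ V₂ := by
  obtain ⟨τ, q, ⟨p, hp, rfl⟩, hq⟩ := hwm (U₁ ×ˢ V₁) (U₂ ×ˢ V₂) (hU₁.prod hV₁) (hU₂.prod hV₂)
    (nU₁.prod nV₁) (nU₂.prod nV₂)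
  refine ⟨U₁ ∩ φ τ ⁻¹' U₂, V₁ ∩ φ τ ⁻¹' V₂, hU₁.inter (hU₂.preimage (hc τ)),
    hV₁.inter (hV₂.preimage (hc τ)), ⟨p.1, hp.1, hq.1⟩, ⟨p.2, hp.2, hq.2⟩, ?_⟩
  rintro s ⟨x, hx, hs⟩
  refine ⟨⟨x, hx.1, hs.1⟩, ⟨φ τ x, hx.2, ?_⟩⟩
  rw [← hφadd, add_comm, hφadd]
  exact hs.2

theorem ret_thick {X : Type*} [MetricSpace X]
    (φ : ℝ → X → X)
    (hφcont : Continuous fun p : ℝ × X => φ p.1 p.2)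
    (hφ0 : ∀ x, φ 0 x = x) (hφadd : ∀ s t x, φ (s + t) x = φ s (φ t x))
    (hwm : ∀ U V : Set (X × X), IsOpen U → IsOpen V → U.Nonempty → V.Nonempty →
      ∃ t : ℝ, (((fun p : X × X => (φ t p.1, φ t p.2)) '' U) ∩ V).Nonempty)
    (t : ℝ) {U V : Set X} (hU : IsOpen U) (hV : IsOpen V)
    (nU : U.Nonempty) (nV : V.Nonempty) :
    ∃ A B : Set X, IsOpen A ∧ IsOpen B ∧ A.Nonempty ∧ B.Nonempty ∧
      ∀ s ∈ retTimes φ A B, ∀ r ∈ Set.Icc (0:ℝ) 1, s + r * t ∈ retTimes φ U V := by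
  have hc : ∀ s, Continuous (φ s) := fun s =>
    hφcont.comp (Continuous.prodMk continuous_const continuous_id)
  obtain ⟨y, hy⟩ := nV
  have hO : (fun p : ℝ × X => φ p.1 p.2) ⁻¹' V ∈ nhds ((0:ℝ), y) :=
    (hV.preimage hφcont).mem_nhds (by simpa [hφ0] using hy)
  rw [Metric.mem_nhds_iff] at hO
  obtain ⟨δ, hδ, hsub⟩ := hO
  have key : ∀ e : ℝ, |e| < δ → ∀ z ∈ Metric.ball y δ, φ e z ∈ V := by
    intro e he z hz
    have : (e, z) ∈ Metric.ball ((0:ℝ), y) δ := by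
      rw [← ball_prod_same]
      exact ⟨by simpa using he, hz⟩
    exact hsub this
  obtain ⟨N, hN⟩ := exists_nat_gt (|t| / δ)
  have hN0 : (0:ℝ) < N := lt_of_le_of_lt (by positivity) hN
  have hNδ : |t| / N < δ := by
    rw [div_lt_iff₀ hδ] at hN
    rw [div_lt_iff₀ hN0]; linarith
  have ind : ∀ k : ℕ, ∃ A B : Set X, IsOpen A ∧ IsOpen B ∧ A.Nonempty ∧ B.Nonempty ∧
      ∀ s ∈ retTimes φ A B, ∀ j < k, s + j * (t / N) ∈ retTimes φ U (Metric.ball y δ) := by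
    intro k
    induction k with
    | zero => exact ⟨U, V, hU, hV, nU, ⟨y, hy⟩, fun s _ j hj => absurd hj (Nat.not_lt_zero j)⟩
    | succ k ih =>
      obtain ⟨A, B, hA, hB, nA, nB, h⟩ := ih
      obtain ⟨A', B', hA', hB', nA', nB', h'⟩ := ret_inter φ hc hφadd hwm hA hB hU
        (Metric.isOpen_ball.preimage (hc (k * (t / N))) (t := Metric.ball y δ)) nA nB nU
        ⟨φ (-(k * (t / N))) y, by
          rw [Set.mem_preimage, ← hφadd]; simp [hφ0, hδ]⟩
      refine ⟨A', B', hA', hB', nA', nB', fun s hs j hj => ?_⟩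
      rcases Nat.lt_succ_iff_lt_or_eq.1 hj with hj | rfl
      · exact h s (h' s hs).1 j hj
      · obtain ⟨x, hx, hxs⟩ := (h' s hs).2
        refine ⟨x, hx, ?_⟩
        rw [add_comm, hφadd]; exact hxs
  obtain ⟨A, B, hA, hB, nA, nB, h⟩ := ind (N + 1)
  refine ⟨A, B, hA, hB, nA, nB, fun s hs r hr => ?_⟩
  have h0 : 0 ≤ r * N := mul_nonneg hr.1 hN0.le
  have hf1 := Nat.floor_le h0
  have hf2 := Nat.lt_floor_add_one (r * N)
  have hjN : ⌊r * N⌋₊ < N + 1 := by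
    rw [Nat.lt_succ_iff]
    apply Nat.floor_le_of_le
    nlinarith [hr.2]
  obtain ⟨x, hx, hxs⟩ := h s hs _ hjN
  refine ⟨x, hx, ?_⟩
  have e1 : s + r * t = (r * N - ⌊r * N⌋₊) * (t / N) + (s + ⌊r * N⌋₊ * (t / N)) := by
    field_simp; ring
  rw [e1, hφadd]
  refine key _ ?_ _ hxs
  rw [abs_mul, abs_div, abs_of_nonneg (by linarith : 0 ≤ r * N - ⌊r * N⌋₊), abs_of_pos hN0]
  have : 0 ≤ |t| / N := by positivity
  nlinarith


/-- If `(X,{T^t})` is a minimal `ℝ`-flow that is weakly mixing (the product flow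
on `X × X` is transitive), then for each `t ≠ 0` the discrete system `(X,T^t)` is
minimal and weakly mixing. -/
theorem time_t_minimal_and_weakly_mixing_of_weakly_mixing_flow
    {X : Type*} [MetricSpace X] [CompactSpace X]
    (φ : ℝ → X → X)
    (hφcont : Continuous fun p : ℝ × X => φ p.1 p.2)
    (hφ0 : ∀ x, φ 0 x = x) (hφadd : ∀ s t x, φ (s + t) x = φ s (φ t x))
    (hXmin : ∀ x : X, Dense (Set.range fun t : ℝ => φ t x))
    (hwm : ∀ U V : Set (X × X), IsOpen U → IsOpen V → U.Nonempty → V.Nonempty →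
      ∃ t : ℝ, (((fun p : X × X => (φ t p.1, φ t p.2)) '' U) ∩ V).Nonempty)
    (t : ℝ) (ht : t ≠ 0) :
    (∀ x : X, Dense (Set.range fun n : ℤ => φ (n * t) x)) ∧
    (∀ U V : Set (X × X), IsOpen U → IsOpen V → U.Nonempty → V.Nonempty →
      ∃ n : ℤ, (((fun p : X × X => (φ (n * t) p.1, φ (n * t) p.2)) '' U) ∩ V).Nonempty)
    := by
  have hc : ∀ s, Continuous (φ s) := fun s =>
    hφcont.comp (Continuous.prodMk continuous_const continuous_id)
  have wm : ∀ U₁ V₁ U₂ V₂ : Set X, IsOpen U₁ → IsOpen V₁ → IsOpen U₂ → IsOpen V₂ →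
      U₁.Nonempty → V₁.Nonempty → U₂.Nonempty → V₂.Nonempty →
      ∃ n : ℤ, (n * t : ℝ) ∈ retTimes φ U₁ V₁ ∧ (n * t : ℝ) ∈ retTimes φ U₂ V₂ := by
    intro U₁ V₁ U₂ V₂ hU₁ hV₁ hU₂ hV₂ nU₁ nV₁ nU₂ nV₂
    obtain ⟨A, B, hA, hB, nA, nB, h⟩ := ret_thick φ hφcont hφ0 hφadd hwm t hU₁ hV₁ nU₁ nV₁
    obtain ⟨A', B', hA', hB', nA', nB', h'⟩ := ret_thick φ hφcont hφ0 hφadd hwm t hU₂ hV₂ nU₂ nV₂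
    obtain ⟨s, q, ⟨p, hp, rfl⟩, hq⟩ := hwm (A ×ˢ A') (B ×ˢ B') (hA.prod hA') (hB.prod hB')
      (nA.prod nA') (nB.prod nB')
    have hr : (⌈s / t⌉ - s / t : ℝ) ∈ Set.Icc (0:ℝ) 1 :=
      ⟨by linarith [Int.le_ceil (s / t)], by linarith [Int.ceil_lt_add_one (s / t)]⟩
    have e : (⌈s / t⌉ : ℝ) * t = s + (⌈s / t⌉ - s / t : ℝ) * t := by
      field_simp; ring
    refine ⟨⌈s / t⌉, ?_, ?_⟩
    · rw [e]; exact h s ⟨p.1, hp.1, hq.1⟩ _ hr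
    · rw [e]; exact h' s ⟨p.2, hp.2, hq.2⟩ _ hr
  refine ⟨?_, ?_⟩
  · intro x
    set M : Set X := closure (Set.range fun n : ℤ => φ (n * t) x) with hM
    have hMinv : ∀ (n : ℤ), ∀ m ∈ M, φ (n * t) m ∈ M := by
      intro n m hm
      refine map_mem_closure (hc _) hm ?_
      rintro _ ⟨k, rfl⟩
      refine ⟨n + k, ?_⟩
      simp only
      rw [← hφadd]; push_cast; ring_nf
    have hxM : x ∈ M := subset_closure ⟨0, by simp [hφ0]⟩
    -- the pieces
    let P : ℝ → ℝ → Set X := fun a b => (fun p : ℝ × X => φ (p.1 * t) p.2) '' (Set.Icc a b ×ˢ M)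
    have hPc : ∀ a b, IsClosed (P a b) := fun a b =>
      ((isCompact_Icc.prod isClosed_closure.isCompact).image
        (hφcont.comp (by fun_prop : Continuous fun p : ℝ × X => (p.1 * t, p.2)))).isClosed
    have hPinv : ∀ a b (n : ℤ), ∀ y ∈ P a b, φ (n * t) y ∈ P a b := by
      rintro a b n _ ⟨⟨r, m⟩, ⟨hr, hm⟩, rfl⟩
      refine ⟨(r, φ (n * t) m), ⟨hr, hMinv n m hm⟩, ?_⟩
      simp only
      rw [← hφadd, ← hφadd, add_comm]
    have hfull : ∀ y, y ∈ P 0 1 := by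
      have hd : Dense (P 0 1) := by
        refine (hXmin x).mono ?_
        rintro _ ⟨u, rfl⟩
        refine ⟨(Int.fract (u / t), φ (⌊u / t⌋ * t) x),
          ⟨⟨Int.fract_nonneg _, (Int.fract_lt_one _).le⟩, hMinv _ _ hxM⟩, ?_⟩
        simp only
        rw [← hφadd]
        congr 1
        rw [← add_mul, Int.fract_add_floor]; field_simp
      intro y
      rw [← (hPc 0 1).closure_eq]; exact hd y
    have hsmall : ∀ N : ℕ, 0 < N → ∀ y, y ∈ P 0 (1 / N) := by
      intro N hN y
      have hN0 : (0:ℝ) < N := by exact_mod_cast hN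
      have hcov : (⋃ j : Fin (N + 1), P (j / N) ((j + 1) / N)) = Set.univ := by
        refine Set.eq_univ_of_forall fun z => ?_
        obtain ⟨⟨r, m⟩, ⟨hr, hm⟩, rfl⟩ := hfull z
        have h0 : 0 ≤ r * N := mul_nonneg hr.1 hN0.le
        have hf1 := Nat.floor_le h0
        have hf2 := Nat.lt_floor_add_one (r * N)
        have hjN : ⌊r * N⌋₊ < N + 1 := by
          rw [Nat.lt_succ_iff]
          apply Nat.floor_le_of_le
          nlinarith [hr.2]
        refine Set.mem_iUnion.2 ⟨⟨_, hjN⟩, (r, m), ⟨⟨?_, ?_⟩, hm⟩, rfl⟩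
        · simp only; rw [div_le_iff₀ hN0]; exact hf1
        · simp only; rw [le_div_iff₀ hN0]; exact hf2.le
      haveI : Nonempty X := ⟨x⟩
      obtain ⟨j, hj⟩ := nonempty_interior_of_iUnion_of_closed
        (fun j : Fin (N + 1) => hPc (j / N) ((j + 1) / N)) hcov
      have hall : ∀ z, z ∈ P (j / N) ((j + 1) / N) := by
        by_contra! hne
        have ho := (hPc (j / N) ((j + 1) / N)).isOpen_compl
        obtain ⟨n, ⟨z, hz, hz'⟩, -⟩ := wm _ _ _ _ isOpen_interior ho isOpen_interior ho hj hne hj hne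
        exact hz' (hPinv _ _ n z (interior_subset hz))
      obtain ⟨⟨r, m⟩, ⟨hr, hm⟩, hrm⟩ := hall (φ (j / N * t) y)
      refine ⟨(r - j / N, m), ⟨⟨?_, ?_⟩, hm⟩, ?_⟩
      · simpa using hr.1
      · have := hr.2
        simp only at this ⊢
        rw [add_div] at this; linarith
      · simp only at hrm ⊢
        have e : (r - j / N) * t = -(j / N * t) + r * t := by ring
        rw [e, hφadd, hrm, ← hφadd]; simp [hφ0]
    intro y
    change y ∈ M
    have hMc : IsClosed M := isClosed_closure
    have hchoose : ∀ n : ℕ, ∃ r ∈ Set.Icc (0:ℝ) (1 / ((n:ℝ) + 1)), φ (-(r * t)) y ∈ M := by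
      intro n
      obtain ⟨⟨r, m⟩, ⟨hr, hm⟩, rfl⟩ := hsmall (n + 1) n.succ_pos y
      refine ⟨r, by simpa using hr, ?_⟩
      simp only
      rw [← hφadd]; simpa [hφ0] using hm
    choose r hr hrM using hchoose
    have hr0 : Filter.Tendsto r Filter.atTop (nhds 0) :=
      squeeze_zero (fun n => (hr n).1) (fun n => (hr n).2) tendsto_one_div_add_atTop_nhds_zero_nat
    have hcy : Continuous fun s : ℝ => φ (-(s * t)) y :=
      hφcont.comp (by fun_prop : Continuous fun s : ℝ => (-(s * t), y))
    have hlim := (hcy.tendsto 0).comp hr0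
    simp only [zero_mul, neg_zero, hφ0] at hlim
    exact hMc.mem_of_tendsto hlim (Filter.Eventually.of_forall hrM)
  · intro U V hU hV ⟨u, hu⟩ ⟨v, hv⟩
    obtain ⟨U₁, U₂, hU₁, hU₂, hu₁, hu₂, hUs⟩ := isOpen_prod_iff.1 hU u.1 u.2 hu
    obtain ⟨V₁, V₂, hV₁, hV₂, hv₁, hv₂, hVs⟩ := isOpen_prod_iff.1 hV v.1 v.2 hv
    obtain ⟨n, ⟨a, ha, ha'⟩, ⟨b, hb, hb'⟩⟩ := wm U₁ V₁ U₂ V₂ hU₁ hV₁ hU₂ hV₂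
      ⟨_, hu₁⟩ ⟨_, hv₁⟩ ⟨_, hu₂⟩ ⟨_, hv₂⟩
    exact ⟨n, _, ⟨(a, b), hUs ⟨ha, hb⟩, rfl⟩, hVs ⟨ha', hb'⟩⟩
end

section
/- Let (X,{T^t}_{t∈ℝ}) be a minimal ℝ-flow. Then there exists a countable set E ⊆ ℝ such that for each t ∈ ℝ∖E the discrete system (X,T^t) is minimal. -/
/-- A non-minimal time-`t` map yields a continuous eigenfunction of the flow. -/
theorem exists_eigenfunction
    {X : Type*} [MetricSpace X] [CompactSpace X]
    (φ : ℝ → X → X)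
    (hφcont : Continuous fun p : ℝ × X => φ p.1 p.2)
    (hφ0 : ∀ x, φ 0 x = x) (hφadd : ∀ s t x, φ (s + t) x = φ s (φ t x))
    (hXmin : ∀ x : X, Dense (Set.range fun t : ℝ => φ t x))
    (t : ℝ) (ht : t ≠ 0) (x₀ : X)
    (hx₀ : ¬ Dense (Set.range fun n : ℤ => φ (n * t) x₀)) :
    ∃ a : ℝ, a ≠ 0 ∧ (∃ n : ℤ, t = n * a) ∧
      ∃ f : C(X, Circle), ∀ s x, f (φ s x) = Circle.exp (2 * Real.pi * s / a) * f x := by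
  have hc : ∀ s, Continuous (φ s) := fun s => by
    have h := hφcont.comp (Continuous.prodMk_right s)
    exact h
  have hc' : ∀ x, Continuous (fun s => φ s x) := fun x => by
    have h := hφcont.comp (Continuous.prodMk_left x)
    exact h
  have hinv : ∀ s x, φ (-s) (φ s x) = x := fun s x => by
    rw [← hφadd, neg_add_cancel, hφ0]
  have hcomm : ∀ s r x, φ s (φ r x) = φ r (φ s x) := fun s r x => by
    rw [← hφadd, ← hφadd, add_comm]
  -- a minimal set
  let S : Set (Set X) := {N | IsClosed N ∧ N.Nonempty ∧ ∀ n : ℤ, ∀ x ∈ N, φ (n * t) x ∈ N}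
  have hcl : closure (Set.range fun n : ℤ => φ (n * t) x₀) ∈ S := by
    refine ⟨isClosed_closure, ⟨_, subset_closure ⟨0, rfl⟩⟩, ?_⟩
    intro n
    have : Set.MapsTo (φ (n * t)) (Set.range fun n : ℤ => φ (n * t) x₀)
        (Set.range fun n : ℤ => φ (n * t) x₀) := by
      rintro _ ⟨m, rfl⟩
      refine ⟨n + m, ?_⟩
      simp only
      rw [← hφadd]
      push_cast
      rw [add_mul]
    exact fun x hx => this.closure (hc _) hx
  obtain ⟨M, hMsub, hM⟩ := zorn_superset_nonempty S (by
    intro c hcS hchain hcne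
    refine ⟨⋂₀ c, ⟨isClosed_sInter fun s hs => (hcS hs).1, ?_, ?_⟩,
      fun s hs => Set.sInter_subset_of_mem hs⟩
    · have : Nonempty c := hcne.to_subtype
      rw [Set.sInter_eq_iInter]
      apply IsCompact.nonempty_iInter_of_directed_nonempty_isCompact_isClosed
      · rintro ⟨U, hU⟩ ⟨U', hU'⟩
        rcases hchain.total hU hU' with h | h
        · exact ⟨⟨U, hU⟩, subset_rfl, h⟩
        · exact ⟨⟨U', hU'⟩, h, subset_rfl⟩
      · exact fun U => (hcS U.2).2.1
      · exact fun U => (hcS U.2).1.isCompact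
      · exact fun U => (hcS U.2).1
    · intro n x hx s hs
      exact (hcS hs).2.2 n x (hx s hs)) _ hcl
  obtain ⟨hMc, ⟨m₀, hm₀⟩, hMinv⟩ := hM.prop
  have hMne : M ≠ Set.univ := by
    rintro rfl
    exact hx₀ (dense_iff_closure_eq.2 (Set.univ_subset_iff.1 hMsub))
  have key1 : ∀ s, ∀ x ∈ M, φ s x ∈ M → ∀ y ∈ M, φ s y ∈ M := by
    intro s x hx hsx y hy
    have hN : M ∩ φ s ⁻¹' M ∈ S := by
      refine ⟨hMc.inter (hMc.preimage (hc s)), ⟨x, hx, hsx⟩, ?_⟩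
      rintro n z ⟨hz, hz'⟩
      refine ⟨hMinv n z hz, ?_⟩
      rw [Set.mem_preimage, hcomm]
      exact hMinv n _ hz'
    exact (hM.le_of_le hN Set.inter_subset_left hy).2
  have key2 : ∀ s, ∀ x ∈ M, φ s x ∈ M → ∀ y ∈ M, φ (-s) y ∈ M := by
    intro s x hx hsx
    exact key1 (-s) (φ s x) hsx (by rwa [hinv])
  let H : AddSubgroup ℝ :=
    { carrier := {s | φ s m₀ ∈ M}
      zero_mem' := by simpa [hφ0] using hm₀
      add_mem' := by
        intro a b ha hb
        change φ (a + b) m₀ ∈ M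
        rw [hφadd]
        exact key1 a m₀ hm₀ ha _ hb
      neg_mem' := by
        intro a ha
        exact key2 a m₀ hm₀ ha m₀ hm₀ }
  have hHmem : ∀ s, s ∈ H ↔ φ s m₀ ∈ M := fun s => Iff.rfl
  have hHc : IsClosed (H : Set ℝ) := hMc.preimage (hc' m₀)
  have htH : t ∈ H := by
    have := hMinv 1 m₀ hm₀
    rw [hHmem]
    simpa using this
  have huniv : ∀ N : Set X, IsClosed N → ∀ x, (∀ s, φ s x ∈ N) → N = Set.univ := by
    intro N hN x hx
    have h1 : Set.range (fun t : ℝ => φ t x) ⊆ N := by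
      rintro _ ⟨s, rfl⟩
      exact hx s
    have := ((hXmin x).mono h1).closure_eq
    rwa [hN.closure_eq] at this
  obtain ⟨a, hHa⟩ : ∃ a, H = AddSubgroup.closure {a} := by
    rcases H.dense_or_cyclic with h | h
    · exfalso
      have hu := h.closure_eq
      rw [hHc.closure_eq] at hu
      apply hMne
      apply huniv M hMc m₀
      intro s
      have : s ∈ (H : Set ℝ) := hu ▸ Set.mem_univ s
      exact this
    · exact h
  have hmul : ∀ s ∈ H, ∃ n : ℤ, s = n * a := by
    intro s hs
    rw [hHa, AddSubgroup.mem_closure_singleton] at hs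
    obtain ⟨n, hn⟩ := hs
    exact ⟨n, by rw [← hn, zsmul_eq_mul]⟩
  obtain ⟨n₀, hn₀⟩ := hmul t htH
  have ha : a ≠ 0 := by
    rintro rfl
    exact ht (by simpa using hn₀)
  refine ⟨a, ha, ⟨n₀, hn₀⟩, ?_⟩
  let q : Set.Icc (-|t|) |t| × M → X := fun p => φ p.1 p.2
  have hqc : Continuous q := by
    have : Continuous (fun p : Set.Icc (-|t|) |t| × M => ((p.1 : ℝ), (p.2 : X))) := by fun_prop
    exact hφcont.comp this
  have : CompactSpace M := isCompact_iff_compactSpace.1 hMc.isCompact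
  have hqcl : IsClosedMap q := hqc.isClosedMap
  have hqs : Function.Surjective q := by
    rw [← Set.range_eq_univ]
    apply huniv _ hqcl.isClosed_range m₀
    intro r
    refine ⟨⟨⟨r - ⌊r / t⌋ * t, ?_⟩, ⟨φ (⌊r / t⌋ * t) m₀, hMinv _ _ hm₀⟩⟩, ?_⟩
    · have e : r - ⌊r / t⌋ * t = Int.fract (r / t) * t := by
        rw [← Int.self_sub_floor]
        field_simp
      rw [Set.mem_Icc, ← abs_le, e, abs_mul, abs_of_nonneg (Int.fract_nonneg _)]
      nlinarith [abs_nonneg t, Int.fract_lt_one (r / t)]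
    · change φ (r - ⌊r / t⌋ * t) (φ (⌊r / t⌋ * t) m₀) = φ r m₀
      rw [← hφadd, sub_add_cancel]
  have hex : ∀ x, ∃ s, φ (-s) x ∈ M := by
    intro x
    obtain ⟨⟨s, m⟩, rfl⟩ := hqs x
    refine ⟨s, ?_⟩
    change φ (-s) (φ s m) ∈ M
    rw [hinv]
    exact m.2
  choose σ hσ using hex
  let f : X → Circle := fun x => Circle.exp (2 * Real.pi * σ x / a)
  have hf : ∀ s x, φ (-s) x ∈ M → f x = Circle.exp (2 * Real.pi * s / a) := by
    intro s x hs
    have h1 : s - σ x ∈ H := by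
      rw [hHmem]
      apply key1 _ (φ (-s) x) hs _ _ hm₀
      rw [← hφadd]
      convert hσ x using 2
      ring
    obtain ⟨n, hn⟩ := hmul _ h1
    have h2 : 2 * Real.pi * s / a = 2 * Real.pi * σ x / a + 2 * Real.pi * n := by
      have : s = σ x + n * a := by linarith
      rw [this]
      field_simp
    rw [h2, Circle.exp_add, Circle.exp_two_pi_mul_int, mul_one]
  have hfc : Continuous f := by
    rw [(hqcl.isQuotientMap hqc hqs).continuous_iff]
    have : f ∘ q = fun p => Circle.exp (2 * Real.pi * (p.1 : ℝ) / a) := by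
      funext p
      apply hf
      change φ (-p.1) (φ p.1 p.2) ∈ M
      rw [hinv]
      exact p.2.2
    rw [this]
    fun_prop
  refine ⟨⟨f, hfc⟩, ?_⟩
  intro s x
  change f (φ s x) = _ * f x
  rw [hf (s + σ x) (φ s x), ← Circle.exp_add]
  · congr 1
    ring
  · rw [← hφadd]
    convert hσ x using 2
    ring

/-- The set of eigenvalues is countable. -/
theorem countable_eigenvalues
    {X : Type*} [MetricSpace X] [CompactSpace X] [Nonempty X]
    (φ : ℝ → X → X) :
    {a : ℝ | a ≠ 0 ∧ ∃ f : C(X, Circle),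
      ∀ s x, f (φ s x) = Circle.exp (2 * Real.pi * s / a) * f x}.Countable := by
  set A := {a : ℝ | a ≠ 0 ∧ ∃ f : C(X, Circle),
      ∀ s x, f (φ s x) = Circle.exp (2 * Real.pi * s / a) * f x} with hA
  have hex : ∀ a : ℝ, ∃ f : C(X, Circle), a ∈ A →
      ∀ s x, f (φ s x) = Circle.exp (2 * Real.pi * s / a) * f x := by
    intro a
    by_cases h : a ∈ A
    · obtain ⟨f, hf⟩ := h.2
      exact ⟨f, fun _ => hf⟩
    · exact ⟨ContinuousMap.const _ 1, fun h' => absurd h' h⟩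
  choose F hF using hex
  have hdist : ∀ a ∈ A, ∀ b ∈ A, a ≠ b → 2 ≤ dist (F a) (F b) := by
    intro a ha b hb hab
    obtain ⟨x⟩ := ‹Nonempty X›
    obtain ⟨θ, hθ⟩ := Circle.exp_surjective (Circle.exp Real.pi * F b x * (F a x)⁻¹)
    have ha0 := ha.1
    have hb0 := hb.1
    have hba : b - a ≠ 0 := sub_ne_zero.2 hab.symm
    obtain ⟨s, hs⟩ : ∃ s, 2 * Real.pi * s / a = 2 * Real.pi * s / b + θ := by
      refine ⟨θ * a * b / (2 * Real.pi * (b - a)), ?_⟩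
      have := Real.pi_ne_zero
      field_simp
      ring
    have h1 : F a (φ s x) = Circle.exp Real.pi * F b (φ s x) := by
      rw [hF a ha, hF b hb, hs, Circle.exp_add, hθ]
      simp only [mul_assoc, inv_mul_cancel, mul_one]
      rw [mul_left_comm]
    refine le_trans ?_ (ContinuousMap.dist_apply_le_dist (φ s x))
    rw [h1]
    change 2 ≤ dist ((Circle.exp Real.pi * F b (φ s x) : Circle) : ℂ) (F b (φ s x) : ℂ)
    rw [dist_eq_norm]
    have h2 : ((Circle.exp Real.pi * F b (φ s x) : Circle) : ℂ) - (F b (φ s x) : ℂ)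
        = -2 * (F b (φ s x) : ℂ) := by
      rw [Circle.coe_mul, Circle.coe_exp, Complex.exp_pi_mul_I]
      ring
    have h3 : ‖-2 * (F b (φ s x) : ℂ)‖ = 2 := by
      rw [norm_mul, Circle.norm_coe]
      simp
    exact (h3.symm.trans (congrArg norm h2.symm)).le
  have hdisj : A.PairwiseDisjoint (fun a => Metric.ball (F a) 1) := by
    intro a ha b hb hab
    apply Metric.ball_disjoint_ball
    have := hdist a ha b hb hab
    linarith
  exact hdisj.countable_of_isOpen (fun _ _ => Metric.isOpen_ball)
    (fun a _ => ⟨F a, Metric.mem_ball_self one_pos⟩)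


/-- If `(X,{T^t})` is a minimal `ℝ`-flow, then there is a countable set `E ⊆ ℝ`
such that for each `t ∉ E` the discrete system `(X,T^t)` is minimal. -/
theorem time_t_minimal_off_countable_set
    {X : Type*} [MetricSpace X] [CompactSpace X]
    (φ : ℝ → X → X)
    (hφcont : Continuous fun p : ℝ × X => φ p.1 p.2)
    (hφ0 : ∀ x, φ 0 x = x) (hφadd : ∀ s t x, φ (s + t) x = φ s (φ t x))
    (hXmin : ∀ x : X, Dense (Set.range fun t : ℝ => φ t x)) :
    ∃ E : Set ℝ, E.Countable ∧ ∀ t ∉ E,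
      ∀ x : X, Dense (Set.range fun n : ℤ => φ (n * t) x) := by
  rcases isEmpty_or_nonempty X with hX | hX
  · exact ⟨∅, Set.countable_empty, fun t _ x => (hX.false x).elim⟩
  refine ⟨{0} ∪ ⋃ n : ℤ, (fun a : ℝ => n * a) '' {a : ℝ | a ≠ 0 ∧ ∃ f : C(X, Circle),
      ∀ s x, f (φ s x) = Circle.exp (2 * Real.pi * s / a) * f x}, ?_, ?_⟩
  · exact (Set.countable_singleton 0).union
      (Set.countable_iUnion fun n => (countable_eigenvalues φ).image _)
  · intro t ht x
    by_contra hx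
    have ht0 : t ≠ 0 := fun h => ht (Or.inl h)
    obtain ⟨a, ha, ⟨n, hn⟩, f, hf⟩ :=
      exists_eigenfunction φ hφcont hφ0 hφadd hXmin t ht0 x hx
    exact ht (Or.inr (Set.mem_iUnion.2 ⟨n, a, ⟨ha, f, hf⟩, hn.symm⟩))
end

section
/- Let S, T be commuting homeomorphisms of a compact metric space X, let S', T' be homeomorphisms of a compact metric space Y, and let π: X → Y be a continuous surjection with π∘S = S'∘π and π∘T = T'∘π. Assume that (X,S), (X,T), (Y,S'), (Y,T') are all minimal and that π is a proximal extension both for S and for T (i.e. every pair (x₁,x₂) with π(x₁)=π(x₂) is proximal for S and proximal for T). If N_d(Y,S') = N_d(Y,T') for some d ∈ ℕ, then N_d(X,S) = N_d(X,T). -/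
theorem aux_zpow_cont {X : Type*} [MetricSpace X] (S : X ≃ₜ X) (k : ℤ) :
    Continuous (S.toEquiv ^ k : Equiv.Perm X) := by
  induction k using Int.induction_on with
  | zero => simpa using continuous_id
  | succ n ih =>
    rw [zpow_add_one, Equiv.Perm.coe_mul]
    exact ih.comp S.continuous
  | pred n ih =>
    rw [zpow_sub_one, Equiv.Perm.coe_mul]
    exact ih.comp S.symm.continuous

theorem aux_zpow_semi {X Y : Type*} (S : Equiv.Perm X) (S' : Equiv.Perm Y) (π : X → Y)
    (h : ∀ x, π (S x) = S' (π x)) (k : ℤ) : ∀ x, π ((S ^ k) x) = (S' ^ k) (π x) := by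
  induction k using Int.induction_on with
  | zero => simp
  | succ n ih =>
    intro x
    rw [zpow_add_one, zpow_add_one, Equiv.Perm.mul_apply, Equiv.Perm.mul_apply, ih, h]
  | pred n ih =>
    intro x
    rw [zpow_sub_one, zpow_sub_one, Equiv.Perm.mul_apply, Equiv.Perm.mul_apply, ih]
    congr 1
    rw [Equiv.Perm.eq_inv_iff_eq, ← h]
    exact congrArg π (Equiv.apply_symm_apply S x)

theorem aux_Nd_inv {X : Type*} [MetricSpace X] (S : X ≃ₜ X) (d : ℕ) (k : ℤ)
    (a : Fin d → X) (ha : a ∈ Nd S d) : (fun i => (S.toEquiv ^ k) (a i)) ∈ Nd S d := by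
  have hc : Continuous (fun (a : Fin d → X) (i : Fin d) => (S.toEquiv ^ k) (a i)) :=
    continuous_pi fun i => (aux_zpow_cont S k).comp (continuous_apply i)
  refine map_mem_closure hc ha ?_
  rintro f ⟨x, n, hf⟩
  refine ⟨(S.toEquiv ^ k) x, n, fun i => ?_⟩
  show (S.toEquiv ^ k) (f i) = _
  rw [hf i, ← Equiv.Perm.mul_apply, ← Equiv.Perm.mul_apply, ← zpow_add, ← zpow_add, add_comm]

/-- A compact invariant set whose points have proximal `f, g` images contains a point with
`f = g`. -/
theorem aux_prox {Z X : Type*} [TopologicalSpace Z] [CompactSpace Z] [MetricSpace X]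
    (K : Set Z) (hK : IsClosed K) (f g : Z → X) (hf : Continuous f) (hg : Continuous g)
    (h : ∀ ε > 0, ∃ z ∈ K, dist (f z) (g z) < ε) : ∃ z ∈ K, f z = g z := by
  have hne : K.Nonempty := by
    obtain ⟨z, hz, _⟩ := h 1 one_pos
    exact ⟨z, hz⟩
  obtain ⟨z, hz, hmin⟩ := hK.isCompact.exists_isMinOn hne (hf.dist hg).continuousOn
  refine ⟨z, hz, ?_⟩
  by_contra hcon
  obtain ⟨w, hw, hlt⟩ := h _ (dist_pos.2 hcon)
  exact absurd (hmin hw) (not_le.2 hlt)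

theorem aux_le
    {X Y : Type*} [MetricSpace X] [CompactSpace X] [MetricSpace Y] [CompactSpace Y]
    (S T : X ≃ₜ X) (S' T' : Y ≃ₜ Y)
    (hcomm : ∀ x : X, S (T x) = T (S x))
    (π : X → Y) (hπcont : Continuous π) (hπsurj : Function.Surjective π)
    (hπS : ∀ x, π (S x) = S' (π x)) (hπT : ∀ x, π (T x) = T' (π x))
    (hSmin : ∀ x : X, Dense (Set.range fun n : ℤ => (S.toEquiv ^ n) x))
    (hproxS : ∀ x₁ x₂ : X, π x₁ = π x₂ →
      ∀ ε > 0, ∃ n : ℤ, dist ((S.toEquiv ^ n) x₁) ((S.toEquiv ^ n) x₂) < ε)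
    (d : ℕ) (hNdY : Nd S' d = Nd T' d) :
    Nd T d ⊆ Nd S d := by
  have hclosed : IsClosed (Nd S d) := isClosed_closure
  have hSk := aux_zpow_semi S.toEquiv S'.toEquiv π hπS
  have hTk := aux_zpow_semi T.toEquiv T'.toEquiv π hπT
  have hC : Commute S.toEquiv T.toEquiv := Equiv.ext hcomm
  have hCk : ∀ (k m : ℤ) (x : X),
      (S.toEquiv ^ k) ((T.toEquiv ^ m) x) = (T.toEquiv ^ m) ((S.toEquiv ^ k) x) := fun k m x =>
    congrArg (fun e : Equiv.Perm X => e x) (hC.zpow_zpow k m).eq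
  refine closure_minimal ?_ hclosed
  rintro c ⟨x, n, hc⟩
  -- lift
  have hlift : ∃ a ∈ Nd S d, ∀ i, π (a i) = π (c i) := by
    have hcY : (fun i => π (c i)) ∈ Nd S' d := by
      rw [hNdY]
      refine subset_closure ⟨π x, n, fun i => ?_⟩
      show π (c i) = _
      rw [hc i, hTk]
    have hP : Continuous (fun (a : Fin d → X) (i : Fin d) => π (a i)) :=
      continuous_pi fun i => hπcont.comp (continuous_apply i)
    have hsub : Nd S' d ⊆ (fun (a : Fin d → X) (i : Fin d) => π (a i)) '' Nd S d := by
      refine closure_minimal ?_ (hclosed.isCompact.image hP).isClosed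
      rintro f ⟨y, m, hf⟩
      obtain ⟨x, rfl⟩ := hπsurj y
      refine ⟨fun i => (S.toEquiv ^ (((i : ℕ) + 1 : ℤ) * m)) x,
        subset_closure ⟨x, m, fun i => rfl⟩, ?_⟩
      funext i
      rw [hf i, ← hSk]
    obtain ⟨a, ha, hac⟩ := hsub hcY
    exact ⟨a, ha, fun i => congrFun hac i⟩
  obtain ⟨a₀, ha₀, hac₀⟩ := hlift
  -- simultaneous proximality
  have key : ∀ s : Finset (Fin d), ∃ z : (Fin d → X) × X, z.1 ∈ Nd S d ∧
      (∀ i, π (z.1 i) = π ((T.toEquiv ^ (((i : ℕ) + 1 : ℤ) * n)) z.2)) ∧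
      ∀ i ∈ s, z.1 i = (T.toEquiv ^ (((i : ℕ) + 1 : ℤ) * n)) z.2 := by
    intro s
    induction s using Finset.induction_on with
    | empty =>
      refine ⟨(a₀, x), ha₀, fun i => ?_, by simp⟩
      rw [← hc i]
      exact hac₀ i
    | insert j s hj ih =>
      obtain ⟨z, hz1, hz2, hz3⟩ := ih
      have hcf : ∀ i : Fin d, Continuous fun z : (Fin d → X) × X => z.1 i :=
        fun i => (continuous_apply i).comp continuous_fst
      have hcg : ∀ i : Fin d, Continuous fun z : (Fin d → X) × X =>
          (T.toEquiv ^ (((i : ℕ) + 1 : ℤ) * n)) z.2 :=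
        fun i => (aux_zpow_cont T _).comp continuous_snd
      have hcl1 : IsClosed {z : (Fin d → X) × X |
          ∀ i, π (z.1 i) = π ((T.toEquiv ^ (((i : ℕ) + 1 : ℤ) * n)) z.2)} := by
        rw [Set.ofPred_forall]
        exact isClosed_iInter fun i =>
          isClosed_eq (hπcont.comp (hcf i)) (hπcont.comp (hcg i))
      have hcl2 : IsClosed {z : (Fin d → X) × X |
          ∀ i ∈ s, z.1 i = (T.toEquiv ^ (((i : ℕ) + 1 : ℤ) * n)) z.2} := by
        simp only [Set.ofPred_forall]
        exact isClosed_iInter fun i => isClosed_iInter fun _ =>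
          isClosed_eq (hcf i) (hcg i)
      obtain ⟨w, ⟨hw1, hw2, hw3⟩, hwj⟩ := aux_prox
        {z : (Fin d → X) × X | z.1 ∈ Nd S d ∧
          (∀ i, π (z.1 i) = π ((T.toEquiv ^ (((i : ℕ) + 1 : ℤ) * n)) z.2)) ∧
          ∀ i ∈ s, z.1 i = (T.toEquiv ^ (((i : ℕ) + 1 : ℤ) * n)) z.2}
        ((hclosed.preimage continuous_fst).inter (hcl1.inter hcl2))
        (fun z => z.1 j) (fun z => (T.toEquiv ^ (((j : ℕ) + 1 : ℤ) * n)) z.2)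
        (hcf j) (hcg j) (by
          intro ε hε
          obtain ⟨k, hk⟩ := hproxS _ _ (hz2 j) ε hε
          refine ⟨(fun i => (S.toEquiv ^ k) (z.1 i), (S.toEquiv ^ k) z.2),
            ⟨aux_Nd_inv S d k _ hz1, fun i => ?_, fun i hi => ?_⟩, ?_⟩
          · show π ((S.toEquiv ^ k) (z.1 i)) = _
            rw [← hCk, hSk, hSk, hz2 i]
          · show (S.toEquiv ^ k) (z.1 i) = _
            rw [← hCk, hz3 i hi]
          · show dist ((S.toEquiv ^ k) (z.1 j)) _ < ε
            rw [← hCk]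
            exact hk)
      refine ⟨w, hw1, hw2, fun i hi => ?_⟩
      rcases Finset.mem_insert.1 hi with rfl | hi
      · exact hwj
      · exact hw3 i hi
  obtain ⟨⟨a, y⟩, ha, -, hay⟩ := key Finset.univ
  -- the set of base points whose tuple lies in `Nd S d` is closed
  have hcτ : Continuous fun (y : X) (i : Fin d) =>
      (T.toEquiv ^ (((i : ℕ) + 1 : ℤ) * n)) y := continuous_pi fun i => aux_zpow_cont T _
  have hx : x ∈ (fun (y : X) (i : Fin d) =>
      (T.toEquiv ^ (((i : ℕ) + 1 : ℤ) * n)) y) ⁻¹' Nd S d := by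
    refine closure_minimal ?_ (hclosed.preimage hcτ) (hSmin y x)
    rintro _ ⟨k, rfl⟩
    have h := aux_Nd_inv S d k _ ha
    have e : (fun i => (S.toEquiv ^ k) (a i)) = fun i : Fin d =>
        (T.toEquiv ^ (((i : ℕ) + 1 : ℤ) * n)) ((S.toEquiv ^ k) y) := by
      funext i
      rw [← hCk, ← hay i (Finset.mem_univ i)]
    rw [e] at h
    exact h
  have e : c = fun i : Fin d => (T.toEquiv ^ (((i : ℕ) + 1 : ℤ) * n)) x := funext hc
  rw [e]
  exact hx

/-- Let `S, T` be commuting homeomorphisms of a compact metric space `X`, let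
`S', T'` be homeomorphisms of a compact metric space `Y`, and let `π : X → Y` be
a continuous surjection with `π ∘ S = S' ∘ π` and `π ∘ T = T' ∘ π`. Assume
`(X,S)`, `(X,T)`, `(Y,S')`, `(Y,T')` are all minimal, and that `π` is a proximal
extension both for `S` and for `T`. If `N_d(Y,S') = N_d(Y,T')` for some `d ∈ ℕ`,
then `N_d(X,S) = N_d(X,T)`. -/
theorem nd_eq_of_proximal_extension
    {X Y : Type*} [MetricSpace X] [CompactSpace X] [MetricSpace Y] [CompactSpace Y]
    (S T : X ≃ₜ X) (S' T' : Y ≃ₜ Y)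
    (hcomm : ∀ x : X, S (T x) = T (S x))
    (π : X → Y) (hπcont : Continuous π) (hπsurj : Function.Surjective π)
    (hπS : ∀ x, π (S x) = S' (π x)) (hπT : ∀ x, π (T x) = T' (π x))
    (hSmin : ∀ x : X, Dense (Set.range fun n : ℤ => (S.toEquiv ^ n) x))
    (hTmin : ∀ x : X, Dense (Set.range fun n : ℤ => (T.toEquiv ^ n) x))
    (hS'min : ∀ y : Y, Dense (Set.range fun n : ℤ => (S'.toEquiv ^ n) y))
    (hT'min : ∀ y : Y, Dense (Set.range fun n : ℤ => (T'.toEquiv ^ n) y))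
    (hproxS : ∀ x₁ x₂ : X, π x₁ = π x₂ →
      ∀ ε > 0, ∃ n : ℤ, dist ((S.toEquiv ^ n) x₁) ((S.toEquiv ^ n) x₂) < ε)
    (hproxT : ∀ x₁ x₂ : X, π x₁ = π x₂ →
      ∀ ε > 0, ∃ n : ℤ, dist ((T.toEquiv ^ n) x₁) ((T.toEquiv ^ n) x₂) < ε)
    (d : ℕ) (hNdY : Nd S' d = Nd T' d) :
    Nd S d = Nd T d := by
  exact Set.Subset.antisymm
    (aux_le T S T' S' (fun x => (hcomm x).symm) π hπcont hπsurj hπT hπS hTmin hproxT d hNdY.symm)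
    (aux_le S T S' T' hcomm π hπcont hπsurj hπS hπT hSmin hproxS d hNdY)
end

section
/- Let (X,T) be a system and (X̃,{T^t}_{t∈ℝ}) its suspension flow. If A ⊆ ℝ and [x,s] ∈ X̃ are such that {T^t[x,s] : t ∈ A} is dense in X̃, then {T^{⌊t⌋}x : t ∈ A} is dense in X, where ⌊t⌋ denotes the integer part of t. -/
/-- `(Xt, q, φ)` is (a realization of) the suspension flow of the system `(X,T)`. -/
def IsSuspension {X Xt : Type*} [TopologicalSpace X] [TopologicalSpace Xt]
    (T : X ≃ₜ X) (q : X × ℝ → Xt) (φ : ℝ → Xt → Xt) : Prop :=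
  Topology.IsQuotientMap q ∧
    (∀ (x y : X) (s t : ℝ),
      (q (x, s) = q (y, t) ↔ ∃ n : ℤ, (n : ℝ) = s - t ∧ (T.toEquiv ^ n) x = y)) ∧
    (Continuous fun p : ℝ × Xt => φ p.1 p.2) ∧
    (∀ z, φ 0 z = z) ∧ (∀ s t z, φ (s + t) z = φ s (φ t z)) ∧
    (∀ (t : ℝ) (x : X) (s : ℝ), φ t (q (x, s)) = q (x, s + t))

theorem continuous_equiv_zpow {X : Type*} [TopologicalSpace X] (T : X ≃ₜ X) (n : ℤ) :
    Continuous (T.toEquiv ^ n : Equiv.Perm X) := by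
  have hnat : ∀ (e : Equiv.Perm X), Continuous e → ∀ k : ℕ, Continuous (e ^ k : Equiv.Perm X) := by
    intro e he k
    rw [Equiv.Perm.coe_pow]
    exact he.iterate k
  cases n with
  | ofNat k =>
    simpa using hnat T.toEquiv T.continuous k
  | negSucc k =>
    rw [zpow_negSucc, ← inv_pow]
    exact hnat _ T.symm.continuous _

/-- Let `(X,T)` be a system and `(X̃,{T^t})` its suspension flow. If `A ⊆ ℝ` and
`[x,s] ∈ X̃` are such that `{T^t [x,s] : t ∈ A}` is dense in `X̃`, then
`{T^⌊t⌋ x : t ∈ A}` is dense in `X`. -/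
theorem dense_floor_orbit_of_dense_suspension_orbit
    {X Xt : Type*} [MetricSpace X] [CompactSpace X]
    [MetricSpace Xt] [CompactSpace Xt]
    (T : X ≃ₜ X) (q : X × ℝ → Xt) (φ : ℝ → Xt → Xt) (hsusp : IsSuspension T q φ)
    (A : Set ℝ) (x : X) (s : ℝ)
    (hdense : Dense ((fun t => φ t (q (x, s))) '' A)) :
    Dense ((fun t : ℝ => (T.toEquiv ^ ⌊t⌋) x) '' A) := by
  obtain ⟨hq, hrel, -, -, -, hφ⟩ := hsusp
  rw [dense_iff_inter_open]
  rintro U hU ⟨u, hu⟩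
  have hopen : IsOpen (q '' (U ×ˢ Set.Ioo s (s + 1))) := by
    rw [← hq.isOpen_preimage]
    have h : q ⁻¹' (q '' (U ×ˢ Set.Ioo s (s + 1))) =
        ⋃ n : ℤ, (fun p : X × ℝ => ((T.toEquiv ^ n) p.1, p.2 - (n : ℝ))) ⁻¹'
          (U ×ˢ Set.Ioo s (s + 1)) := by
      ext ⟨y, t⟩
      simp only [Set.mem_preimage, Set.mem_image, Set.mem_iUnion]
      constructor
      · rintro ⟨⟨z, r⟩, hz, he⟩
        obtain ⟨n, hn, hT⟩ := (hrel y z t r).1 he.symm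
        refine ⟨n, ?_⟩
        have hr : t - (n : ℝ) = r := by linarith
        rw [hr, hT]
        exact hz
      · rintro ⟨n, hn⟩
        exact ⟨_, hn, ((hrel _ _ _ _).2 ⟨n, by ring, rfl⟩).symm⟩
    rw [h]
    refine isOpen_iUnion fun n => (hU.prod isOpen_Ioo).preimage ?_
    exact ((continuous_equiv_zpow T n).comp continuous_fst).prodMk
      (continuous_snd.sub continuous_const)
  obtain ⟨z, ⟨⟨v, r⟩, ⟨hv, hr⟩, hvz⟩, t, htA, htz⟩ := hdense.inter_open_nonempty _ hopen
    ⟨q (u, s + 1 / 2), (u, s + 1 / 2), ⟨hu, by constructor <;> simp <;> norm_num⟩, rfl⟩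
  have he : q (x, s + t) = q (v, r) := by
    rw [hvz, ← htz]
    exact (hφ t x s).symm
  obtain ⟨n, hn, hT⟩ := (hrel _ _ _ _).1 he
  have hfl : ⌊t⌋ = n := by
    rw [Int.floor_eq_iff]
    simp only [Set.mem_Ioo] at hr
    constructor <;> linarith [hr.1, hr.2]
  refine ⟨v, hv, t, htA, ?_⟩
  simp only [hfl, hT]
end
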